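/- Let ρ : Fin r → Equiv.Perm (Fin n) be a string C-group in the blocks-of-size-2 setup with m = n/2 ≥ 7 and r ≥ n/2. If the set R ∪ C has exactly 2 elements, then: the subgroup G_L generated by {ρ l : l ∈ L} is isomorphic as a group to Equiv.Perm (Fin m); R and C each have exactly one element; m is odd; and G equals the full subgroup {σ ∈ Equiv.Perm (Fin n) : ∀ x y, b x = b y → b (σ x) = b (σ y)} of all permutations preserving the fiber partition of b (so G is isomorphic to the wreath product C₂ ≀ Sym_{n/2}). -/

import Mathlib

/-- A string group generated by involutions (sggi): each generator has order 2 and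
nonconsecutive generators commute. -/
def IsSggi {n r : ℕ} (ρ : Fin r → Equiv.Perm (Fin n)) : Prop :=
  (∀ i, orderOf (ρ i) = 2) ∧
  ∀ i j : Fin r, 1 < |((i : ℕ) : ℤ) - ((j : ℕ) : ℤ)| → (ρ i * ρ j) ^ 2 = 1

/-- A string C-group: an sggi satisfying the intersection property. -/
def IsStringC {n r : ℕ} (ρ : Fin r → Equiv.Perm (Fin n)) : Prop :=
  IsSggi ρ ∧ ∀ J K : Set (Fin r),
    Subgroup.closure (ρ '' J) ⊓ Subgroup.closure (ρ '' K) =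
      Subgroup.closure (ρ '' (J ∩ K))

section

open Equiv Subgroup
open scoped symmDiff

/-- Every element of the subgroup squares to the identity. -/
def SqOne {α : Type*} (E : Subgroup (Perm α)) : Prop := ∀ e ∈ E, e * e = 1

/-- The subgroup fixes every point of a set. -/
def FixesOn {α : Type*} (E : Subgroup (Perm α)) (Y : Finset α) : Prop :=
  ∀ e ∈ E, ∀ y ∈ Y, e y = y

/-- The stabilizer of a point inside a subgroup. -/
def stabIn {α : Type*} (E : Subgroup (Perm α)) (x : α) : Subgroup (Perm α) :=
  E ⊓ MulAction.stabilizer (Perm α) x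

open Classical in
/-- The orbit of a point under a subgroup, as a finset. -/
noncomputable def orb {α : Type*} [Fintype α] (E : Subgroup (Perm α)) (x : α) : Finset α :=
  Finset.univ.filter fun y => ∃ e ∈ E, e x = y

section Basics

variable {α : Type*}

theorem perm_comm_apply {f g : Perm α} (h : Commute f g) (x : α) : f (g x) = g (f x) :=
  Equiv.congr_fun h.eq x

theorem perm_sq_apply {f : Perm α} (h : f * f = 1) (x : α) : f (f x) = x :=
  Equiv.congr_fun h x

theorem perm_inv_of_sq {f : Perm α} (h : f * f = 1) : f⁻¹ = f :=
  inv_eq_of_mul_eq_one_left h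

theorem SqOne.commute {E : Subgroup (Perm α)} (hE : SqOne E) {e f : Perm α} (he : e ∈ E)
    (hf : f ∈ E) : Commute e f := by
  have h := hE _ (mul_mem he hf)
  have h1 := hE _ he
  have h2 := hE _ hf
  have h3 : (e * f)⁻¹ = e * f := perm_inv_of_sq h
  rw [mul_inv_rev, perm_inv_of_sq h1, perm_inv_of_sq h2] at h3
  exact h3.symm

theorem SqOne.mono {E F : Subgroup (Perm α)} (hE : SqOne E) (h : F ≤ E) : SqOne F :=
  fun e he => hE e (h he)

theorem FixesOn.mono {E F : Subgroup (Perm α)} {Y : Finset α} (hE : FixesOn E Y) (h : F ≤ E) :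
    FixesOn F Y :=
  fun e he => hE e (h he)

theorem mem_stabIn {E : Subgroup (Perm α)} {x : α} {e : Perm α} :
    e ∈ stabIn E x ↔ e ∈ E ∧ e x = x := by
  simp [stabIn, MulAction.mem_stabilizer_iff]

theorem stabIn_le (E : Subgroup (Perm α)) (x : α) : stabIn E x ≤ E := inf_le_left

theorem sqOne_closure {S : Set (Perm α)} (h1 : ∀ s ∈ S, s * s = 1)
    (h2 : ∀ s ∈ S, ∀ t ∈ S, Commute s t) : SqOne (closure S) := by
  have hc : ∀ s ∈ closure S, ∀ t ∈ closure S, Commute s t := by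
    intro s hs t ht
    have hS : S ⊆ (Subgroup.centralizer S : Set (Perm α)) := by
      intro x hx
      rw [SetLike.mem_coe, Subgroup.mem_centralizer_iff]
      intro y hy
      exact (h2 y hy x hx).eq
    have h3 : closure S ≤ Subgroup.centralizer S := (Subgroup.closure_le _).2 hS
    have h4 : closure S ≤ Subgroup.centralizer (closure S : Set (Perm α)) := by
      rw [Subgroup.centralizer_closure]; exact h3
    exact ((Subgroup.mem_centralizer_iff.1 (h4 ht)) s hs)
  intro e he
  induction he using Subgroup.closure_induction with
  | mem x hx => exact h1 x hx
  | one => simp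
  | mul x y hx hy h h' =>
    have := hc x hx y hy
    calc x * y * (x * y) = (x * y) * (y * x) := by rw [this.eq]
      _ = x * (y * y) * x := by group
      _ = 1 := by rw [h', mul_one, h]
  | inv x hx h => rw [← mul_inv_rev, h, inv_one]

theorem commute_closure {S : Set (Perm α)} {x : Perm α} (h : ∀ s ∈ S, Commute x s) :
    ∀ e ∈ closure S, Commute x e := by
  intro e he
  induction he using Subgroup.closure_induction with
  | mem y hy => exact h y hy
  | one => exact Commute.one_right x
  | mul a c _ _ h h' => exact h.mul_right h'
  | inv a _ h => exact h.inv_right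

theorem mem_closure_insert_cases {S : Set (Perm α)} {x d : Perm α} (hx : x * x = 1)
    (h : ∀ s ∈ S, Commute x s) (hd : d ∈ closure (insert x S)) :
    d ∈ closure S ∨ x * d ∈ closure S := by
  have hc := commute_closure h
  induction hd using Subgroup.closure_induction with
  | mem y hy =>
    rcases hy with rfl | hy
    · right; rw [hx]; exact one_mem _
    · left; exact subset_closure hy
  | one => left; exact one_mem _
  | mul a c _ _ h h' =>
    rcases h with h | h <;> rcases h' with h' | h'
    · left; exact mul_mem h h'
    · right
      have := mul_mem h h'
      rwa [← mul_assoc, ← (hc a h).eq, mul_assoc] at this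
    · right
      have := mul_mem h h'
      rwa [mul_assoc] at this
    · left
      have := mul_mem h h'
      have h2 : x * a * (x * c) = a * c := by
        have h3 := (hc _ h).eq
        calc x * a * (x * c) = (x * a * x) * c := by group
          _ = (x * (x * a)) * c := by rw [h3]
          _ = (x * x) * a * c := by group
          _ = a * c := by rw [hx, one_mul]
      rwa [h2] at this
  | inv a _ h =>
    rcases h with h | h
    · left; exact inv_mem h
    · right
      have h1 := (hc _ h)
      have h2 : x * a = a * x := by
        have := h1.eq
        rw [← mul_assoc, hx, one_mul] at this
        calc x * a = (x * a * x) * x := by rw [mul_assoc, hx, mul_one]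
          _ = a * x := by rw [← this]
      have h3 := inv_mem h
      rwa [h2, mul_inv_rev, perm_inv_of_sq hx] at h3

theorem exists_res (e : Perm α) (he : e * e = 1) (S : Finset α) (hS : ∀ x ∈ S, e x ∈ S) :
    ∃ f : Perm α, f * f = 1 ∧ (∀ x ∈ S, f x = e x) ∧ ∀ x ∉ S, f x = x := by
  classical
  have hinv : Function.Involutive (fun x => if x ∈ S then e x else x) := by
    intro x
    by_cases hx : x ∈ S
    · simp [hx, hS x hx, perm_sq_apply he]
    · simp [hx]
  refine ⟨hinv.toPerm _, ?_, ?_, ?_⟩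
  · ext x; exact hinv x
  · intro x hx; simp [Function.Involutive.toPerm, hx]
  · intro x hx; simp [Function.Involutive.toPerm, hx]

theorem res_commute {e f g : Perm α} {S : Finset α} (h1 : ∀ x ∈ S, f x = e x)
    (h2 : ∀ x ∉ S, f x = x) (hg : g * g = 1) (hgS : ∀ x ∈ S, g x ∈ S) (hc : Commute e g) :
    Commute f g := by
  ext x
  change f (g x) = g (f x)
  by_cases hx : x ∈ S
  · rw [h1 _ (hgS x hx), h1 x hx, perm_comm_apply hc]
  · have : g x ∉ S := fun h => hx (by simpa [perm_sq_apply hg] using hgS _ h)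
    rw [h2 _ this, h2 _ hx]

theorem compl_invariant [Fintype α] [DecidableEq α] {g : Perm α} (hg : g * g = 1) {S : Finset α}
    (hgS : ∀ x ∈ S, g x ∈ S) : ∀ x ∈ Sᶜ, g x ∈ Sᶜ := by
  intro x hx
  rw [Finset.mem_compl] at *
  exact fun h => hx (by simpa [perm_sq_apply hg] using hgS _ h)

variable [Fintype α]

theorem mem_orb {E : Subgroup (Perm α)} {x y : α} : y ∈ orb E x ↔ ∃ e ∈ E, e x = y := by
  simp [orb]

theorem self_mem_orb (E : Subgroup (Perm α)) (x : α) : x ∈ orb E x :=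
  mem_orb.2 ⟨1, one_mem _, rfl⟩

theorem apply_mem_orb {E : Subgroup (Perm α)} {e : Perm α} (he : e ∈ E) {x y : α}
    (hy : y ∈ orb E x) : e y ∈ orb E x := by
  obtain ⟨f, hf, rfl⟩ := mem_orb.1 hy
  exact mem_orb.2 ⟨e * f, mul_mem he hf, rfl⟩

theorem orb_eq_of_mem {E : Subgroup (Perm α)} {x y : α} (hy : y ∈ orb E x) :
    orb E y = orb E x := by
  obtain ⟨f, hf, rfl⟩ := mem_orb.1 hy
  ext z
  constructor
  · intro h
    obtain ⟨e, he, rfl⟩ := mem_orb.1 h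
    exact apply_mem_orb he hy
  · intro h
    obtain ⟨e, he, rfl⟩ := mem_orb.1 h
    exact mem_orb.2 ⟨e * f⁻¹, mul_mem he (inv_mem hf), by simp⟩

theorem orb_disjoint {E : Subgroup (Perm α)} {x y : α} (hy : y ∉ orb E x) :
    Disjoint (orb E x) (orb E y) := by
  rw [Finset.disjoint_left]
  intro z hz hz'
  rw [← orb_eq_of_mem hz, orb_eq_of_mem hz'] at hy
  exact hy (self_mem_orb E y)

theorem card_eq_orb_mul_stab (E : Subgroup (Perm α)) (x : α) :
    Nat.card E = (orb E x).card * Nat.card (stabIn E x) := by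
  classical
  have h := MulAction.card_orbit_mul_card_stabilizer_eq_card_group E x
  have h1 : Fintype.card (MulAction.orbit E x) = (orb E x).card := by
    rw [← Set.toFinset_card]
    congr 1
    ext y
    simp [mem_orb, MulAction.mem_orbit_iff, Subgroup.smul_def]
  have h2 : Nat.card (MulAction.stabilizer E x) = Nat.card (stabIn E x) := by
    refine Nat.card_congr ⟨fun g => ⟨g.1.1, mem_stabIn.2 ⟨g.1.2, g.2⟩⟩,
      fun g => ⟨⟨g.1, (mem_stabIn.1 g.2).1⟩, (mem_stabIn.1 g.2).2⟩, ?_, ?_⟩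
    · intro g; rfl
    · intro g; rfl
  rw [← h2, ← h1, Nat.card_eq_fintype_card, Nat.card_eq_fintype_card, ← h]

theorem SqOne.stab_fixes_orb {E : Subgroup (Perm α)} (hE : SqOne E) (x : α) :
    FixesOn (stabIn E x) (orb E x) := by
  intro e he y hy
  obtain ⟨f, hf, rfl⟩ := mem_orb.1 hy
  rw [mem_stabIn] at he
  rw [perm_comm_apply (hE.commute he.1 hf), he.2]

theorem SqOne.stabIn_eq_of_mem {E : Subgroup (Perm α)} (hE : SqOne E) {x y : α}
    (hy : y ∈ orb E x) : stabIn E y = stabIn E x := by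
  ext e
  constructor
  · intro h
    refine mem_stabIn.2 ⟨(mem_stabIn.1 h).1, hE.stab_fixes_orb y e h x ?_⟩
    rw [orb_eq_of_mem hy]; exact self_mem_orb E x
  · intro h
    exact mem_stabIn.2 ⟨(mem_stabIn.1 h).1, hE.stab_fixes_orb x e h y hy⟩

theorem SqOne.isPGroup {E : Subgroup (Perm α)} (hE : SqOne E) : IsPGroup 2 E := by
  intro g
  refine ⟨1, ?_⟩
  rw [pow_one, pow_two]
  exact Subtype.ext (hE g g.2)

theorem SqOne.orb_card {E : Subgroup (Perm α)} (hE : SqOne E) (x : α) :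
    ∃ s, (orb E x).card = 2 ^ s := by
  obtain ⟨s, hs⟩ := (IsPGroup.iff_card (p := 2)).1 hE.isPGroup
  have h := card_eq_orb_mul_stab E x
  rw [hs] at h
  obtain ⟨t, _, ht⟩ := (Nat.dvd_prime_pow Nat.prime_two).1 (Dvd.intro _ h.symm)
  exact ⟨t, ht⟩

theorem sq_le_two_pow_of_two_pow (s : ℕ) (hs : 1 ≤ s) : (2 ^ s) ^ 2 ≤ 2 ^ (2 ^ s) := by
  rw [← pow_mul]
  apply Nat.pow_le_pow_right (by norm_num)
  induction s, hs using Nat.le_induction with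
  | base => norm_num
  | succ k hk ih =>
    rw [pow_succ]
    have : 2 ≤ 2 ^ k := by calc 2 = 2 ^ 1 := rfl
      _ ≤ 2 ^ k := Nat.pow_le_pow_right (by norm_num) hk
    omega

theorem FixesOn.union [DecidableEq α] {E : Subgroup (Perm α)} {Y Z : Finset α}
    (hY : FixesOn E Y) (hZ : FixesOn E Z) :
    FixesOn E (Y ∪ Z) := by
  intro e he y hy
  rcases Finset.mem_union.1 hy with h | h
  · exact hY e he y h
  · exact hZ e he y h

theorem orb_card_eq_one {E : Subgroup (Perm α)} {x : α} :
    (orb E x).card = 1 ↔ ∀ e ∈ E, e x = x := by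
  rw [Finset.card_eq_one]
  constructor
  · rintro ⟨y, hy⟩ e he
    have h1 := self_mem_orb E x
    have h2 := apply_mem_orb he h1
    rw [hy, Finset.mem_singleton] at h1 h2
    rw [h2, ← h1]
  · intro h
    refine ⟨x, ?_⟩
    ext y
    rw [mem_orb, Finset.mem_singleton]
    constructor
    · rintro ⟨e, he, rfl⟩; exact h e he
    · rintro rfl; exact ⟨1, one_mem _, rfl⟩

theorem SqOne.card_bound {E : Subgroup (Perm α)} (hE : SqOne E) {Y : Finset α}
    (hY : FixesOn E Y) : Nat.card E ^ 2 * 2 ^ Y.card ≤ 2 ^ Fintype.card α := by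
  classical
  induction hk : Yᶜ.card using Nat.strong_induction_on generalizing E Y with
  | _ k ih =>
  by_cases h : ∃ x, ∃ e ∈ E, e x ≠ x
  · obtain ⟨x, e, he, hx⟩ := h
    have hd : Disjoint Y (orb E x) := by
      rw [Finset.disjoint_right]
      intro y hy hyY
      obtain ⟨f, hf, rfl⟩ := mem_orb.1 hy
      have h1 := hY e he _ hyY
      rw [perm_comm_apply (hE.commute he hf)] at h1
      exact hx (f.injective h1)
    have hN : FixesOn (stabIn E x) (Y ∪ orb E x) :=
      (hY.mono (stabIn_le E x)).union (hE.stab_fixes_orb x)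
    have hlt : (Y ∪ orb E x)ᶜ.card < k := by
      rw [← hk]
      apply Finset.card_lt_card
      rw [Finset.compl_ssubset_compl]
      refine Finset.ssubset_iff_subset_ne.2 ⟨Finset.subset_union_left, fun h => ?_⟩
      have : x ∈ Y := by rw [h]; exact Finset.mem_union_right _ (self_mem_orb E x)
      exact (Finset.disjoint_left.1 hd this) (self_mem_orb E x)
    have h1 := ih _ hlt (hE.mono (stabIn_le E x)) hN rfl
    rw [Finset.card_union_of_disjoint hd, pow_add] at h1
    obtain ⟨s, hs⟩ := hE.orb_card x
    have hs1 : 1 ≤ s := by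
      rcases Nat.eq_zero_or_pos s with rfl | h
      · exact absurd (orb_card_eq_one.1 hs e he) hx
      · exact h
    have h2 := sq_le_two_pow_of_two_pow s hs1
    rw [← hs] at h2
    rw [card_eq_orb_mul_stab E x, mul_pow]
    calc (orb E x).card ^ 2 * Nat.card (stabIn E x) ^ 2 * 2 ^ Y.card
        ≤ 2 ^ (orb E x).card * Nat.card (stabIn E x) ^ 2 * 2 ^ Y.card := by gcongr
      _ = Nat.card (stabIn E x) ^ 2 * (2 ^ Y.card * 2 ^ (orb E x).card) := by ring
      _ ≤ _ := h1
  · push Not at h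
    have : E = ⊥ := by
      rw [Subgroup.eq_bot_iff_forall]
      intro e he
      ext x; exact h x e he
    subst this
    rw [Subgroup.card_bot, one_pow, one_mul]
    exact Nat.pow_le_pow_right (by norm_num) Y.card_le_univ

theorem two_mul_card_le_of_lt {E F : Subgroup (Perm α)} (h : E < F) :
    2 * Nat.card E ≤ Nat.card F := by
  have hd := Subgroup.card_dvd_of_le h.le
  obtain ⟨c, hc⟩ := hd
  have hpos : 0 < Nat.card F := Nat.card_pos
  have hc0 : c ≠ 0 := by rintro rfl; omega
  have hc1 : c ≠ 1 := by
    rintro rfl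
    exact h.ne (Subgroup.eq_of_le_of_card_ge h.le (by omega))
  rw [hc, mul_comm]
  exact Nat.mul_le_mul_left _ (by omega)

theorem sqOne_closure_insert {E : Subgroup (Perm α)} (hE : SqOne E) {x : Perm α} (hx : x * x = 1)
    (hc : ∀ e ∈ E, Commute x e) : SqOne (closure (insert x (E : Set (Perm α)))) := by
  apply sqOne_closure
  · rintro s (rfl | hs)
    · exact hx
    · exact hE s hs
  · rintro s (rfl | hs) t (rfl | ht)
    · exact Commute.refl _
    · exact hc t ht
    · exact (hc s hs).symm
    · exact hE.commute hs ht

theorem le_closure_insert (E : Subgroup (Perm α)) (x : Perm α) :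
    E ≤ closure (insert x (E : Set (Perm α))) :=
  fun _ he => subset_closure (Set.mem_insert_of_mem _ he)

theorem two_mul_card_le_closure_insert {E : Subgroup (Perm α)} {x : Perm α} (hx : x ∉ E) :
    2 * Nat.card E ≤ Nat.card (closure (insert x (E : Set (Perm α)))) := by
  apply two_mul_card_le_of_lt
  refine lt_of_le_of_ne (le_closure_insert E x) fun h => hx ?_
  rw [h]
  exact subset_closure (Set.mem_insert _ _)

theorem fixesOn_closure {S : Set (Perm α)} {Y : Finset α} (h : ∀ s ∈ S, ∀ y ∈ Y, s y = y) :
    FixesOn (closure S) Y := by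
  intro e he
  induction he using Subgroup.closure_induction with
  | mem y hy => exact h y hy
  | one => intro y _; rfl
  | mul a c _ _ h h' => intro y hy; rw [Perm.mul_apply, h' y hy, h y hy]
  | inv a _ h => intro y hy; rw [Perm.inv_eq_iff_eq, h y hy]

theorem SqOne.mem_of_commute {E : Subgroup (Perm α)} (hE : SqOne E) {Y : Finset α}
    (hY : FixesOn E Y) {x : Perm α} (hx : x * x = 1) (hc : ∀ e ∈ E, Commute x e)
    (hxY : ∀ y ∈ Y, x y = y)
    (hcard : 2 ^ Fintype.card α < 4 * (Nat.card E ^ 2 * 2 ^ Y.card)) : x ∈ E := by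
  by_contra h
  have h1 := two_mul_card_le_closure_insert h
  have h2 := (sqOne_closure_insert hE hx hc).card_bound (Y := Y) (fixesOn_closure (by
    rintro s (rfl | hs)
    · exact hxY
    · exact hY s hs))
  have h3 : (2 * Nat.card E) ^ 2 * 2 ^ Y.card ≤ 2 ^ Fintype.card α :=
    le_trans (by gcongr) h2
  rw [mul_pow] at h3
  linarith

end Basics

section OddCase

variable {α : Type*}

theorem swap_commute_of_mapsTo [DecidableEq α] {a c : α} (hac : a ≠ c) {O : Finset α}
    (hO : O = {a, c}) {g : Perm α} (hg : ∀ s ∈ O, g s ∈ O) : Commute (swap a c) g := by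
  have h1 : g a ∈ O := hg a (by rw [hO]; simp)
  have h2 : g c ∈ O := hg c (by rw [hO]; simp)
  have hne : g a ≠ g c := fun h => hac (g.injective h)
  have h3 : g * swap a c * g⁻¹ = swap a c := by
    rw [← Equiv.swap_apply_apply]
    rw [hO, Finset.mem_insert, Finset.mem_singleton] at h1 h2
    rcases h1 with h1 | h1 <;> rcases h2 with h2 | h2
    · exact absurd (h1.trans h2.symm) hne
    · rw [h1, h2]
    · rw [h1, h2, swap_comm]
    · exact absurd (h1.trans h2.symm) hne
  rw [mul_inv_eq_iff_eq_mul] at h3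
  exact h3.symm

theorem exists_orb_eq_pair [Fintype α] [DecidableEq α] {E : Subgroup (Perm α)} {x : α}
    (h : (orb E x).card = 2) :
    ∃ y, x ≠ y ∧ orb E x = {x, y} := by
  obtain ⟨a, c, hac, hO⟩ := Finset.card_eq_two.1 h
  have hx := self_mem_orb E x
  rw [hO, Finset.mem_insert, Finset.mem_singleton] at hx
  rcases hx with rfl | rfl
  · exact ⟨c, hac, hO⟩
  · exact ⟨a, hac.symm, by rw [hO, Finset.pair_comm]⟩

theorem swap_commute_of_orb_eq_pair [Fintype α] [DecidableEq α] {E : Subgroup (Perm α)} {x y : α}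
    (hxy : x ≠ y) (hO : orb E x = {x, y}) : ∀ e ∈ E, Commute (swap x y) e :=
  fun _ he => swap_commute_of_mapsTo hxy hO fun _ hs => apply_mem_orb he hs

theorem SqOne.res_mem [Fintype α] {E : Subgroup (Perm α)} (hE : SqOne E) {Y : Finset α}
    (hY : FixesOn E Y) {x : Perm α} (hx : x * x = 1) (hc : ∀ e ∈ E, Commute x e)
    {S : Finset α} (hS : ∀ s ∈ S, x s ∈ S) (hES : ∀ e ∈ E, ∀ s ∈ S, e s ∈ S)
    (hxY : ∀ y ∈ Y, y ∈ S → x y = y)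
    (hcard : 2 ^ Fintype.card α < 4 * (Nat.card E ^ 2 * 2 ^ Y.card)) :
    ∃ f ∈ E, (∀ s ∈ S, f s = x s) ∧ ∀ s ∉ S, f s = s := by
  obtain ⟨f, hf1, hf2, hf3⟩ := exists_res x hx S hS
  refine ⟨f, ?_, hf2, hf3⟩
  refine hE.mem_of_commute hY hf1
    (fun e he => res_commute hf2 hf3 (hE e he) (hES e he) (hc e he)) ?_ hcard
  intro y hy
  by_cases h : y ∈ S
  · rw [hf2 y h, hxY y hy h]
  · exact hf3 y h

theorem not_transitive_of_invariant {S : Set (Perm α)} (hS : ∀ s ∈ S, s * s = 1)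
    (htr : ∀ x y : α, ∃ g ∈ closure S, g x = y) {Y : Finset α}
    (hY : ∀ s ∈ S, ∀ y ∈ Y, s y ∈ Y) {x y : α} (hx : x ∈ Y) (hy : y ∉ Y) : False := by
  obtain ⟨g, hg, rfl⟩ := htr x y
  have : ∀ y, y ∈ Y ↔ g y ∈ Y := by
    clear hy hx
    induction hg using Subgroup.closure_induction with
    | mem s hs =>
      intro y
      exact ⟨hY s hs y, fun h => by simpa [perm_sq_apply (hS s hs)] using hY s hs _ h⟩
    | one => intro y; rfl
    | mul a c _ _ h h' => intro y; rw [Perm.mul_apply, ← h, ← h']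
    | inv a _ h => intro y; rw [h (a⁻¹ y)]; simp
  exact hy ((this x).1 hx)

variable [Fintype α]

theorem SqOne.exists_fixed_of_odd {E : Subgroup (Perm α)} (hE : SqOne E)
    (hodd : Odd (Fintype.card α)) : ∃ z, ∀ e ∈ E, e z = z := by
  classical
  have : Fact (Nat.Prime 2) := ⟨Nat.prime_two⟩
  have h := hE.isPGroup.card_modEq_card_fixedPoints α
  by_contra hne
  push Not at hne
  have h0 : Nat.card (MulAction.fixedPoints E α) = 0 := by
    rw [Nat.card_eq_zero]
    left
    constructor
    rintro ⟨z, hz⟩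
    obtain ⟨e, he, hez⟩ := hne z
    exact hez (hz ⟨e, he⟩)
  rw [h0, Nat.card_eq_fintype_card] at h
  have h1 : Fintype.card α % 2 = 0 := h
  rw [Nat.odd_iff] at hodd
  omega

/-- If an elementary abelian 2-group without transpositions is as large as possible among those
fixing `Y`, then its orbits outside `Y` have four elements. -/
theorem SqOne.orb_card_four {E : Subgroup (Perm α)} (hE : SqOne E) {Y : Finset α}
    (hY : FixesOn E Y) (hcard : 2 ^ Fintype.card α ≤ Nat.card E ^ 2 * 2 ^ Y.card) [DecidableEq α]
    (hns : ∀ a c : α, a ≠ c → swap a c ∉ E) {q : α}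
    (hq : q ∉ Y) : (orb E q).card = 4 := by
  have hpos : 0 < Nat.card E ^ 2 * 2 ^ Y.card := by
    have : 0 < Nat.card E := Nat.card_pos
    positivity
  have hdis : Disjoint (orb E q) Y := by
    rw [Finset.disjoint_left]
    intro y hy hyY
    obtain ⟨e, he, rfl⟩ := mem_orb.1 hy
    exact hq (by rw [← e.injective (hY e he _ hyY)]; exact hyY)
  obtain ⟨s, hs⟩ := hE.orb_card q
  match s, hs with
  | 0, hs =>
    exfalso
    rw [pow_zero, orb_card_eq_one] at hs
    have h1 := hE.card_bound (Y := insert q Y) (by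
      intro e he y hy
      rcases Finset.mem_insert.1 hy with rfl | hy
      · exact hs e he
      · exact hY e he y hy)
    rw [Finset.card_insert_of_notMem hq, pow_succ 2, ← mul_assoc] at h1
    linarith
  | 1, hs =>
    exfalso
    obtain ⟨y, hxy, hO⟩ := exists_orb_eq_pair hs
    refine hns q y hxy (hE.mem_of_commute hY (swap_mul_self q y)
      (swap_commute_of_orb_eq_pair hxy hO) ?_ (by linarith))
    intro c hcY
    have h1 : c ∉ orb E q := Finset.disjoint_right.1 hdis hcY
    rw [hO, Finset.mem_insert, Finset.mem_singleton, not_or] at h1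
    exact swap_apply_of_ne_of_ne h1.1 h1.2
  | 2, hs => exact hs
  | s + 3, hs =>
    exfalso
    have h1 := (hE.mono (stabIn_le E q)).card_bound
      ((hE.stab_fixes_orb q).union (hY.mono (stabIn_le E q)))
    rw [Finset.card_union_of_disjoint hdis, hs] at h1
    rw [card_eq_orb_mul_stab E q, hs] at hcard
    have hN : 0 < Nat.card (stabIn E q) ^ 2 * 2 ^ Y.card := by
      have : 0 < Nat.card (stabIn E q) := Nat.card_pos
      positivity
    have h2 : Nat.card (stabIn E q) ^ 2 * 2 ^ Y.card * 2 ^ (2 ^ (s + 3)) ≤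
        Nat.card (stabIn E q) ^ 2 * 2 ^ Y.card * 2 ^ (2 * (s + 3)) := by
      refine le_trans (le_of_eq ?_) ((h1.trans hcard).trans (le_of_eq ?_)) <;> ring
    have h3 := Nat.le_of_mul_le_mul_left h2 hN
    have h4 := (Nat.pow_le_pow_iff_right (by norm_num : 1 < 2)).1 h3
    have h5 : ∀ s : ℕ, 2 * (s + 3) < 2 ^ (s + 3) := by
      intro s
      induction s with
      | zero => norm_num
      | succ k ih => rw [show k + 1 + 3 = (k + 3) + 1 by ring, pow_succ]; omega
    have := h5 s
    omega

theorem odd_contradiction [DecidableEq α] {E : Subgroup (Perm α)} (hE : SqOne E)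
    (hcard : 2 ^ Fintype.card α ≤ 2 * Nat.card E ^ 2) (hodd : Odd (Fintype.card α))
    (h7 : 7 ≤ Fintype.card α)
    (hns : ∀ a c : α, a ≠ c → swap a c ∉ E) (V : Set (Perm α))
    (hV : ∀ v ∈ V, v * v = 1) (hVc : ∀ v ∈ V, ∀ w ∈ V, Commute v w)
    (hC : ∀ v ∈ V, ∃ C ≤ E, (∀ c ∈ C, Commute v c) ∧ Nat.card E ≤ 4 * Nat.card C)
    (htr : ∀ x y : α, ∃ g ∈ closure ((E : Set (Perm α)) ∪ V), g x = y) : False := by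
  have hEpos : 0 < Nat.card E := Nat.card_pos
  have hE2 : 0 < Nat.card E ^ 2 := by positivity
  have hgen : ∀ s ∈ (E : Set (Perm α)) ∪ V, s * s = 1 := by
    rintro s (hs | hs)
    · exact hE s hs
    · exact hV s hs
  obtain ⟨z, hz⟩ := hE.exists_fixed_of_odd hodd
  have h4 : ∀ q, q ≠ z → (orb E q).card = 4 := fun q hq =>
    hE.orb_card_four (Y := {z}) (by simpa [FixesOn] using hz)
      (by rw [Finset.card_singleton]; linarith) hns (by simpa using hq)
  have hzO : ∀ q, q ≠ z → z ∉ orb E q := by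
    intro q hq h
    obtain ⟨e, he, h⟩ := mem_orb.1 h
    exact hq (e.injective (h.trans (hz e he).symm))
  -- the centralizing subgroup of a generator that moves `z`
  have hstab : ∀ v ∈ V, v z ≠ z → (∀ c ∈ stabIn E (v z), Commute v c) ∧
      ∀ q, (∀ c ∈ stabIn E (v z), c q = q) → q ∈ insert z (orb E (v z)) := by
    intro v hv hvz
    obtain ⟨C, hCE, hCv, hCc⟩ := hC v hv
    have hle : C ≤ stabIn E (v z) := by
      intro c hc
      refine mem_stabIn.2 ⟨hCE hc, ?_⟩
      rw [← perm_comm_apply (hCv c hc), hz c (hCE hc)]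
    have h1 := card_eq_orb_mul_stab E (v z)
    rw [h4 _ hvz] at h1
    have heq : C = stabIn E (v z) := Subgroup.eq_of_le_of_card_ge hle (by omega)
    rw [← heq]
    refine ⟨hCv, fun q hq => ?_⟩
    by_contra hqn
    have h2 := (hE.mono hCE).card_bound (Y := insert q (insert z (orb E (v z)))) (by
      intro e he y hy
      rw [Finset.mem_insert, Finset.mem_insert] at hy
      rcases hy with rfl | rfl | hy
      · exact hq e he
      · exact hz e (hCE he)
      · exact hE.stab_fixes_orb _ e (hle he) y hy)
    rw [Finset.card_insert_of_notMem hqn, Finset.card_insert_of_notMem (hzO _ hvz), h4 _ hvz] at h2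
    have h3 : Nat.card E ^ 2 ≤ (4 * Nat.card C) ^ 2 := by gcongr
    have hpos : 0 < Nat.card C := Nat.card_pos
    have hpos2 : 0 < Nat.card C ^ 2 := by positivity
    rw [mul_pow] at h3
    norm_num at h2 h3
    linarith
  have hkey : ∀ v ∈ V, ∀ w ∈ V, v z ≠ z → w z ≠ z → w z ∉ orb E (v z) →
      v (w z) ∈ orb E (w z) := by
    intro v hv w hw hvz hwz hn
    have h1 : (orb E (w z)).card ≠ 1 := by rw [h4 _ hwz]; norm_num
    rw [Ne, orb_card_eq_one] at h1
    push Not at h1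
    obtain ⟨e, he, hew⟩ := h1
    obtain ⟨f, hf, hf1, hf2⟩ := hE.res_mem (Y := ∅) (by simp [FixesOn]) (hE e he)
      (fun x hx => hE.commute he hx) (S := orb E (w z)) (fun s hs => apply_mem_orb he hs)
      (fun e he s hs => apply_mem_orb he hs) (by simp)
      (by rw [Finset.card_empty, pow_zero]; linarith)
    have hvO : v z ∉ orb E (w z) := by
      intro h
      exact hn (by rw [orb_eq_of_mem h]; exact self_mem_orb _ _)
    have hfv := (hstab v hv hvz).1 f (mem_stabIn.2 ⟨hf, hf2 _ hvO⟩)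
    by_contra hc
    have h2 := hf2 _ hc
    rw [← perm_comm_apply hfv, hf1 _ (self_mem_orb _ _)] at h2
    exact hew (v.injective h2)
  have hmove : ∃ v ∈ V, v z ≠ z := by
    by_contra hcon
    push Not at hcon
    obtain ⟨y, hy⟩ : ∃ y, y ≠ z := by
      have : Nontrivial α := Fintype.one_lt_card_iff_nontrivial.1 (by omega)
      exact exists_ne z
    refine not_transitive_of_invariant (Y := {z}) (x := z) (y := y) hgen htr ?_ (by simp)
      (by simpa using hy)
    rintro s (hs | hs) y hy
    · rw [Finset.mem_singleton] at hy ⊢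
      rw [hy]; exact hz s hs
    · rw [Finset.mem_singleton] at hy ⊢
      rw [hy]; exact hcon s hs
  obtain ⟨v, hv, hvz⟩ := hmove
  set O := orb E (v z) with hO
  have hYcard : (insert z O).card = 5 := by
    rw [Finset.card_insert_of_notMem (hzO _ hvz), h4 _ hvz]
  obtain ⟨y, hy⟩ : ∃ y, y ∉ insert z O := by
    by_contra h
    push Not at h
    have := Finset.card_le_card (fun x _ => h x : (Finset.univ : Finset α) ⊆ insert z O)
    rw [Finset.card_univ] at this
    omega
  refine not_transitive_of_invariant (Y := insert z O) (x := z) (y := y) hgen htr ?_ (by simp) hy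
  rintro w (hw | hw) q hq
  · rw [Finset.mem_insert] at hq ⊢
    rcases hq with rfl | hq
    · left; exact hz w hw
    · right; exact apply_mem_orb hw hq
  · have hvw := perm_comm_apply (hVc v hv w hw)
    by_cases hwz : w z = z
    · by_contra hn
      have hqz : q ≠ z := by
        rintro rfl
        exact hn (by rw [hwz]; simp)
      have hqO : q ∈ O := (Finset.mem_insert.1 hq).resolve_left hqz
      have hpw : w (v z) = v z := by rw [← hvw, hwz]
      obtain ⟨C, hCE, hCw, hCc⟩ := hC w hw
      have hnp : ∀ c ∈ C, c q ≠ v z := by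
        intro c hc hcq
        have h1 : c (v z) = q := by rw [← hcq, perm_sq_apply (hE c (hCE hc))]
        have h2 : w q = q := by
          rw [← h1, perm_comm_apply (hCw c hc), hpw]
        exact hn (by rw [h2]; exact hq)
      have hsub : orb C q ⊆ O.erase (v z) := by
        intro x hx
        obtain ⟨c, hc, rfl⟩ := mem_orb.1 hx
        exact Finset.mem_erase.2 ⟨hnp c hc, apply_mem_orb (hCE hc) hqO⟩
      have hc3 : (orb C q).card ≤ 3 := by
        have := Finset.card_le_card hsub
        rw [Finset.card_erase_of_mem (self_mem_orb _ _), h4 _ hvz] at this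
        omega
      rw [Finset.mem_insert, not_or] at hn
      have hle : stabIn C q ≤ E := (stabIn_le C q).trans hCE
      have hbd := (hE.mono hle).card_bound (Y := insert z (O ∪ orb E (w q))) (by
        intro c hc y hy
        have hc' := mem_stabIn.1 hc
        rw [Finset.mem_insert, Finset.mem_union] at hy
        rcases hy with rfl | hy | hy
        · exact hz c (hle hc)
        · refine hE.stab_fixes_orb q c (mem_stabIn.2 ⟨hle hc, hc'.2⟩) y ?_
          rw [orb_eq_of_mem hqO]; exact hy
        · refine hE.stab_fixes_orb (w q) c (mem_stabIn.2 ⟨hle hc, ?_⟩) y hy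
          rw [← perm_comm_apply (hCw c hc'.1), hc'.2])
      have hd : Disjoint O (orb E (w q)) := orb_disjoint hn.2
      have hzn : z ∉ O ∪ orb E (w q) := by
        rw [Finset.mem_union, not_or]
        exact ⟨hzO _ hvz, hzO _ hn.1⟩
      rw [Finset.card_insert_of_notMem hzn, Finset.card_union_of_disjoint hd, h4 _ hvz,
        h4 _ hn.1] at hbd
      have h1 := card_eq_orb_mul_stab C q
      have hpos : 0 < Nat.card (stabIn C q) := Nat.card_pos
      have h2 : Nat.card C ≤ 3 * Nat.card (stabIn C q) := by
        rw [h1]; gcongr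
      have h3 : Nat.card E ≤ 12 * Nat.card (stabIn C q) := by omega
      have h5 : Nat.card E ^ 2 ≤ (12 * Nat.card (stabIn C q)) ^ 2 := by gcongr
      have h6 : 0 < Nat.card (stabIn C q) ^ 2 := by positivity
      rw [mul_pow] at h5
      norm_num at hbd h5
      linarith
    · by_cases hp : w z ∈ O
      · have hst : stabIn E (w z) = stabIn E (v z) := hE.stabIn_eq_of_mem hp
        have h1 := (hstab w hw hwz).1
        rw [hst] at h1
        refine (hstab v hv hvz).2 (w q) fun c hc => ?_
        rw [← perm_comm_apply (h1 c hc)]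
        congr 1
        rw [Finset.mem_insert] at hq
        rcases hq with rfl | hq
        · exact hz c (mem_stabIn.1 hc).1
        · exact hE.stab_fixes_orb _ c hc q hq
      · exfalso
        have hp' : v z ∉ orb E (w z) := by
          intro h
          exact hp (by rw [hO, orb_eq_of_mem h]; exact self_mem_orb _ _)
        have h1 := hkey v hv w hw hvz hwz hp
        have h2 := hkey w hw v hv hwz hvz hp'
        rw [← hvw] at h2
        exact Finset.disjoint_left.1 (orb_disjoint hp) h2 h1

end OddCase

theorem two_pow_le_card_closure {Y I : Type*} [Fintype Y] [DecidableEq I] {π : I → Perm Y}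
    {L : Set I} (hind : ∀ l ∈ L, π l ∉ closure (π '' (L \ {l}))) (T : Finset I)
    (hT : ∀ a ∈ T, a ∈ L) : 2 ^ T.card ≤ Nat.card (closure (π '' (T : Set I))) := by
  induction T using Finset.induction_on with
  | empty => simp
  | insert s T hs ih =>
    have h1 := ih fun a ha => hT a (Finset.mem_insert_of_mem ha)
    rw [Finset.card_insert_of_notMem hs, pow_succ, mul_comm]
    refine (Nat.mul_le_mul_left 2 h1).trans (two_mul_card_le_of_lt ?_)
    refine lt_of_le_of_ne (closure_mono (Set.image_mono (by simp))) fun heq => ?_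
    refine hind s (hT s (by simp)) ?_
    have h2 : π s ∈ closure (π '' ((insert s T : Finset I) : Set I)) :=
      subset_closure ⟨s, by simp, rfl⟩
    rw [← heq] at h2
    refine Subgroup.closure_mono (Set.image_mono ?_) h2
    refine fun a ha => ⟨hT a (Finset.mem_insert_of_mem ha), ?_⟩
    rintro rfl
    exact hs ha

/-- A family of involutions, eventually trivial, in which non-consecutive members commute and no
one of the first `k` members lies in the group generated by the others. -/
structure IsIndepString {α : Type*} (k : ℕ) (τ : ℕ → Perm α) : Prop where
  sq : ∀ a, τ a * τ a = 1
  comm : ∀ a c, a + 1 < c → Commute (τ a) (τ c)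
  ind : ∀ a < k, τ a ∉ closure (τ '' {a}ᶜ)
  triv : ∀ a, k ≤ a → τ a = 1

namespace IsIndepString

variable {α : Type*} {k : ℕ} {τ : ℕ → Perm α}

theorem commute (h : IsIndepString k τ) {a c : ℕ} (h1 : a + 1 ≠ c) (h2 : c + 1 ≠ a) :
    Commute (τ a) (τ c) := by
  rcases lt_trichotomy a c with hl | rfl | hl
  · exact h.comm a c (by omega)
  · exact Commute.refl _
  · exact (h.comm c a (by omega)).symm

theorem sqOne (h : IsIndepString k τ) {T : Set ℕ}
    (hT : ∀ a ∈ T, ∀ c ∈ T, Commute (τ a) (τ c)) : SqOne (closure (τ '' T)) := by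
  apply sqOne_closure
  · rintro _ ⟨a, _, rfl⟩; exact h.sq a
  · rintro _ ⟨a, ha, rfl⟩ _ ⟨c, hc, rfl⟩; exact hT a ha c hc

theorem exists_exchange (h : IsIndepString k τ) (T : Finset ℕ)
    (hT : ∀ a ∈ T, ∀ c ∈ T, Commute (τ a) (τ c)) {d : Perm α} (hd : d ∈ closure (τ '' T))
    (h1 : d ≠ 1) : ∃ s ∈ T, τ s ∈ closure (insert d (τ '' {s}ᶜ)) := by
  induction T using Finset.induction_on with
  | empty =>
    simp at hd
    exact absurd hd h1
  | insert s T hs ih =>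
    rw [Finset.coe_insert, Set.image_insert_eq] at hd
    rcases mem_closure_insert_cases (h.sq s) (by
      rintro _ ⟨a, ha, rfl⟩
      exact hT s (by simp) a (by simp only [Finset.mem_insert]; right; exact ha)) hd with hd | hd
    · obtain ⟨a, ha, h2⟩ := ih (fun a ha c hc => hT a (Finset.mem_insert_of_mem ha) c
        (Finset.mem_insert_of_mem hc)) hd
      exact ⟨a, Finset.mem_insert_of_mem ha, h2⟩
    · refine ⟨s, Finset.mem_insert_self _ _, ?_⟩
      have h2 : τ s * d ∈ closure (insert d (τ '' {s}ᶜ)) := by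
        refine closure_mono ?_ hd
        rintro _ ⟨a, ha, rfl⟩
        refine Set.mem_insert_of_mem _ ⟨a, ?_, rfl⟩
        rintro rfl
        exact hs ha
      have h3 : d ∈ closure (insert d (τ '' {s}ᶜ)) := subset_closure (Set.mem_insert _ _)
      simpa using mul_mem h2 (inv_mem h3)

theorem sq_mul_notMem (h : IsIndepString k τ) {T : Finset ℕ} (hTk : ∀ a ∈ T, a < k)
    (hT : ∀ a ∈ T, ∀ c ∈ T, Commute (τ a) (τ c)) {a c : ℕ} (ha : a ∉ T) (hc : c ∉ T)
    (h1 : (τ a * τ c) ^ 2 ≠ 1) : (τ a * τ c) ^ 2 ∉ closure (τ '' T) := by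
  intro hd
  obtain ⟨s, hs, h2⟩ := h.exists_exchange T hT hd h1
  refine h.ind s (hTk s hs) ?_
  have hmem : ∀ x, x ≠ s → τ x ∈ closure (τ '' {s}ᶜ) :=
    fun x hx => subset_closure ⟨x, hx, rfl⟩
  have h3 : (τ a * τ c) ^ 2 ∈ closure (τ '' {s}ᶜ) :=
    pow_mem (mul_mem (hmem a (by rintro rfl; exact ha hs)) (hmem c (by rintro rfl; exact hc hs))) 2
  refine (closure_le _).2 ?_ h2
  rintro x (rfl | hx)
  · exact h3
  · exact subset_closure hx

variable [Fintype α]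

theorem two_pow_le_card (h : IsIndepString k τ) (T : Finset ℕ) (hTk : ∀ a ∈ T, a < k) :
    2 ^ T.card ≤ Nat.card (closure (τ '' (T : Set ℕ))) :=
  two_pow_le_card_closure (L := {a | a < k}) (fun a ha hm => h.ind a ha
    (Subgroup.closure_mono (Set.image_mono fun _ hc => hc.2) hm)) T hTk

theorem exists_centralizing (h : IsIndepString k τ) (T : Finset ℕ) (hTk : ∀ a ∈ T, a < k)
    (v : ℕ) : ∃ C ≤ closure (τ '' (T : Set ℕ)), (∀ c ∈ C, Commute (τ v) c) ∧
      2 ^ T.card ≤ 4 * Nat.card C := by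
  refine ⟨closure (τ '' ((T \ {v - 1, v + 1} : Finset ℕ) : Set ℕ)), ?_, ?_, ?_⟩
  · exact closure_mono (Set.image_mono (by simp))
  · apply commute_closure
    rintro _ ⟨a, ha, rfl⟩
    simp only [Finset.coe_sdiff, Set.mem_sdiff, Finset.mem_coe, Finset.mem_insert,
      Finset.mem_singleton, not_or] at ha
    exact h.commute (by omega) (by omega)
  · have h1 := h.two_pow_le_card (T \ {v - 1, v + 1}) (by
      intro a ha
      exact hTk a (Finset.mem_sdiff.1 ha).1)
    have h2 : T.card ≤ (T \ {v - 1, v + 1}).card + 2 := by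
      have h3 := Finset.card_le_card_sdiff_add_card (t := {v - 1, v + 1}) (s := T)
      have h4 : ({v - 1, v + 1} : Finset ℕ).card ≤ 2 := Finset.card_le_two
      omega
    calc 2 ^ T.card ≤ 2 ^ ((T \ {v - 1, v + 1}).card + 2) :=
          Nat.pow_le_pow_right (by norm_num) h2
      _ = 4 * 2 ^ (T \ {v - 1, v + 1}).card := by ring
      _ ≤ _ := by gcongr

theorem card_le_two_pow (h : IsIndepString k τ) {T : Finset ℕ}
    (hT : ∀ a ∈ T, ∀ c ∈ T, Commute (τ a) (τ c)) (hm : Fintype.card α ≤ 2 * T.card + 1) :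
    Nat.card (closure (τ '' (T : Set ℕ))) ≤ 2 ^ T.card := by
  have hE : SqOne (closure (τ '' (T : Set ℕ))) := h.sqOne hT
  obtain ⟨s, hs⟩ := (IsPGroup.iff_card (p := 2)).1 hE.isPGroup
  have h1 := hE.card_bound (Y := ∅) (by simp [FixesOn])
  rw [hs, Finset.card_empty, pow_zero, mul_one, ← pow_mul] at h1
  have h2 := (Nat.pow_le_pow_iff_right (by norm_num : 1 < 2)).1 h1
  rw [hs]
  exact Nat.pow_le_pow_right (by norm_num) (by omega)

theorem exists_swap_of_odd [DecidableEq α] (h : IsIndepString k τ)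
    (hodd : Odd (Fintype.card α)) (h7 : 7 ≤ Fintype.card α) (hk : Fintype.card α ≤ k + 2)
    (htr : ∀ x y : α, ∃ g ∈ closure (Set.range τ), g x = y) :
    ∃ a c : α, a ≠ c ∧ swap a c ∈ closure (Set.range τ) := by
  by_contra hns
  push Not at hns
  set T := (Finset.range k).filter Even with hT
  have hmemT : ∀ a, a ∈ T ↔ a < k ∧ Even a := by intro a; simp [hT]
  have hcomm : ∀ a ∈ T, ∀ c ∈ T, Commute (τ a) (τ c) := by
    intro a ha c hc
    have h1 := ((hmemT a).1 ha).2
    have h2 := ((hmemT c).1 hc).2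
    rw [Nat.even_iff] at h1 h2
    exact h.commute (by omega) (by omega)
  have hcard : Fintype.card α ≤ 2 * T.card + 1 := by
    have h1 : (Finset.range ((k + 1) / 2)).image (fun i => 2 * i) ⊆ T := by
      intro a ha
      obtain ⟨i, hi, rfl⟩ := Finset.mem_image.1 ha
      rw [Finset.mem_range] at hi
      exact (hmemT _).2 ⟨by omega, by simp⟩
    have h2 := Finset.card_le_card h1
    rw [Finset.card_image_of_injective _ (fun a c h => by simpa using h), Finset.card_range] at h2
    rw [Nat.odd_iff] at hodd
    omega
  have hle : closure (τ '' (T : Set ℕ)) ≤ closure (Set.range τ) :=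
    closure_mono (Set.image_subset_range _ _)
  have hTk : ∀ a ∈ T, a < k := fun a ha => ((hmemT a).1 ha).1
  refine odd_contradiction (h.sqOne hcomm) ?_ hodd h7 (fun a c hac hm => hns a c hac (hle hm))
    (τ '' {a | Odd a}) ?_ ?_ ?_ ?_
  · have h1 := h.two_pow_le_card T hTk
    calc 2 ^ Fintype.card α ≤ 2 ^ (2 * T.card + 1) := Nat.pow_le_pow_right (by norm_num) hcard
      _ = 2 * (2 ^ T.card) ^ 2 := by ring
      _ ≤ _ := by gcongr
  · rintro _ ⟨a, _, rfl⟩; exact h.sq a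
  · rintro _ ⟨a, ha, rfl⟩ _ ⟨c, hc, rfl⟩
    have h1 := Nat.odd_iff.1 ha
    have h2 := Nat.odd_iff.1 hc
    exact h.commute (by omega) (by omega)
  · rintro _ ⟨a, _, rfl⟩
    obtain ⟨C, hC1, hC2, hC3⟩ := h.exists_centralizing T hTk a
    exact ⟨C, hC1, hC2, (h.card_le_two_pow hcomm hcard).trans hC3⟩
  · intro x y
    obtain ⟨g, hg, rfl⟩ := htr x y
    refine ⟨g, ?_, rfl⟩
    refine (closure_le _).2 ?_ hg
    rintro _ ⟨a, rfl⟩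
    rcases Nat.even_or_odd a with ha | ha
    · by_cases hak : a < k
      · exact subset_closure (Or.inl (subset_closure ⟨a, (hmemT a).2 ⟨hak, ha⟩, rfl⟩))
      · rw [h.triv a (by omega)]; exact one_mem _
    · exact subset_closure (Or.inr ⟨a, ha, rfl⟩)

end IsIndepString

section Full

variable {α : Type*} [Fintype α]

/-- The orbits of a maximum elementary abelian 2-group are blocks for any group generated by it
and involutions with large centralizers in it. -/
theorem full_contradiction [DecidableEq α] {E H : Subgroup (Perm α)} (hE : SqOne E)
    (hcard : 2 ^ Fintype.card α ≤ Nat.card E ^ 2) (h7 : 7 ≤ Fintype.card α)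
    (hns : ∀ a c : α, a ≠ c → swap a c ∉ E) (V : Set (Perm α))
    (hV : ∀ v ∈ V, v * v = 1)
    (hC : ∀ v ∈ V, ∃ C ≤ E, (∀ c ∈ C, Commute v c) ∧ Nat.card E ≤ 4 * Nat.card C)
    (hH : H = closure V)
    (hprim : MulAction.IsPreprimitive H α) : False := by
  have h4 : ∀ q, (orb E q).card = 4 := fun q =>
    hE.orb_card_four (Y := ∅) (by simp [FixesOn]) (by simpa using hcard) hns (by simp)
  have hout : ∀ v ∈ V, ∀ p y, y ∈ orb E p → v p ∉ orb E p → v y ∈ orb E (v p) := by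
    intro v hv p y hy hvp
    obtain ⟨C, hCE, hCv, hCc⟩ := hC v hv
    have hle : stabIn C p ≤ E := (stabIn_le C p).trans hCE
    have hbd := (hE.mono hle).card_bound (Y := orb E p ∪ orb E (v p)) (by
      refine FixesOn.union (fun c hc => ?_) (fun c hc => ?_)
      · exact hE.stab_fixes_orb p c (mem_stabIn.2 ⟨hle hc, (mem_stabIn.1 hc).2⟩)
      · refine hE.stab_fixes_orb (v p) c (mem_stabIn.2 ⟨hle hc, ?_⟩)
        have hc' := mem_stabIn.1 hc
        rw [← perm_comm_apply (hCv c hc'.1), hc'.2])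
    rw [Finset.card_union_of_disjoint (orb_disjoint hvp), h4, h4] at hbd
    have hsub : orb C p ⊆ orb E p := by
      intro x hx
      obtain ⟨c, hc, rfl⟩ := mem_orb.1 hx
      exact mem_orb.2 ⟨c, hCE hc, rfl⟩
    have hge : 4 ≤ (orb C p).card := by
      by_contra hlt
      have h1 := card_eq_orb_mul_stab C p
      have hpos : 0 < Nat.card (stabIn C p) := Nat.card_pos
      have h2 : Nat.card C ≤ 3 * Nat.card (stabIn C p) := by
        rw [h1]; exact Nat.mul_le_mul_right _ (by omega)
      have h3 : Nat.card E ≤ 12 * Nat.card (stabIn C p) := by omega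
      have h5 : Nat.card E ^ 2 ≤ (12 * Nat.card (stabIn C p)) ^ 2 := by gcongr
      have h6 : 0 < Nat.card (stabIn C p) ^ 2 := by positivity
      rw [mul_pow] at h5
      norm_num at hbd h5
      linarith
    have heq : orb C p = orb E p := Finset.eq_of_subset_of_card_le hsub (by rw [h4]; exact hge)
    rw [← heq] at hy
    obtain ⟨c, hc, rfl⟩ := mem_orb.1 hy
    rw [perm_comm_apply (hCv c hc)]
    exact mem_orb.2 ⟨c, hCE hc, rfl⟩
  have hgen : ∀ v ∈ V, ∀ x y, y ∈ orb E x → v y ∈ orb E (v x) := by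
    intro v hv x y hy
    by_cases hx : v x ∈ orb E x
    · by_cases hy' : v y ∈ orb E x
      · rwa [orb_eq_of_mem hx]
      · exfalso
        have hxy := orb_eq_of_mem hy
        have h1 := hout v hv y x (by rw [hxy]; exact self_mem_orb _ _) (by rwa [hxy])
        have h2 := orb_eq_of_mem h1
        rw [orb_eq_of_mem hx] at h2
        rw [h2] at hy'
        exact hy' (self_mem_orb _ _)
    · exact hout v hv x y hy hx
  have hall : ∀ g ∈ closure V, ∀ x y, y ∈ orb E x ↔ g y ∈ orb E (g x) := by
    intro g hg
    induction hg using Subgroup.closure_induction with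
    | mem v hv =>
      intro x y
      refine ⟨hgen v hv x y, fun h => ?_⟩
      simpa [perm_sq_apply (hV v hv)] using hgen v hv _ _ h
    | one => intro x y; rfl
    | mul a c _ _ h h' => intro x y; rw [Perm.mul_apply, Perm.mul_apply, ← h, ← h']
    | inv a _ h => intro x y; rw [h (a⁻¹ x) (a⁻¹ y)]; simp
  have : Nonempty α := Fintype.card_pos_iff.1 (by omega)
  obtain ⟨x⟩ := this
  have hblock : MulAction.IsBlock H (orb E x : Set α) := by
    rw [MulAction.isBlock_iff_smul_eq_of_mem]
    rintro ⟨g, hg⟩ a ha hga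
    rw [hH] at hg
    change g a ∈ orb E x at hga
    ext y
    rw [Set.mem_smul_set_iff_inv_smul_mem]
    change g⁻¹ y ∈ orb E x ↔ y ∈ orb E x
    rw [← orb_eq_of_mem ha, hall g hg a (g⁻¹ y), orb_eq_of_mem hga, orb_eq_of_mem ha]
    simp
  rcases MulAction.IsBlock.subsingleton_or_eq_univ hblock with hs | hs
  · have := Finset.card_le_one.2 (fun a ha c hc => hs ha hc)
    rw [h4] at this
    omega
  · have h1 : orb E x = Finset.univ := by
      rw [← Finset.coe_univ, Finset.coe_inj] at hs; exact hs
    have := h4 x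
    rw [h1, Finset.card_univ] at this
    omega

end Full

section Pair

variable {α : Type*} [Fintype α] {D : Subgroup (Perm α)} {x y : Perm α} {ω : α}

/-- `x` moves `ω` out of its `D`-orbit, while `y` acts on the orbits of `ω` and `x ω` through two
elements of `D` that differ at `x ω`. -/
def TwoType (D : Subgroup (Perm α)) (x y : Perm α) (ω : α) : Prop :=
  x ω ∉ orb D ω ∧ ∃ d ∈ D, ∃ d' ∈ D, y ω = d ω ∧ y (x ω) = d' (x ω) ∧ d (x ω) ≠ d' (x ω)

/-- There are two further `D`-orbits with the same point stabilizers as the orbit of `ω`. -/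
def ThreeType (D : Subgroup (Perm α)) (ω : α) : Prop :=
  ∃ a c, stabIn D a = stabIn D ω ∧ stabIn D c = stabIn D ω ∧ a ∉ orb D ω ∧ c ∉ orb D ω ∧
    c ∉ orb D a

theorem stabIn_apply_eq (hx : ∀ e ∈ D, Commute x e) (a : α) :
    stabIn D (x a) = stabIn D a := by
  ext e
  simp only [mem_stabIn]
  refine and_congr_right fun he => ?_
  rw [← perm_comm_apply (hx e he), x.apply_eq_iff_eq]

theorem orb_card_eq_of_stabIn_eq {a c : α} (h : stabIn D a = stabIn D c) :
    (orb D a).card = (orb D c).card := by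
  have h1 := card_eq_orb_mul_stab D a
  rw [card_eq_orb_mul_stab D c, h] at h1
  exact (Nat.eq_of_mul_eq_mul_right Nat.card_pos h1).symm

theorem apply_mem_orb_apply (hx : ∀ e ∈ D, Commute x e) {a c : α} (h : c ∈ orb D a) :
    x c ∈ orb D (x a) := by
  obtain ⟨e, he, rfl⟩ := mem_orb.1 h
  rw [perm_comm_apply (hx e he)]
  exact mem_orb.2 ⟨e, he, rfl⟩

theorem twoType_or_threeType_aux (hD : SqOne D) (hx2 : x * x = 1) (hy2 : y * y = 1)
    (hx : ∀ e ∈ D, Commute x e) (hy : ∀ e ∈ D, Commute y e) (hω : x (y ω) ≠ y (x ω))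
    (hxω : x ω ∉ orb D ω) : TwoType D x y ω ∨ ThreeType D ω := by
  by_cases h1 : y ω ∈ orb D (x ω)
  · exfalso
    obtain ⟨e, he, h⟩ := mem_orb.1 h1
    apply hω
    have h2 : x ω = e (y ω) := by rw [← h, perm_sq_apply (hD e he)]
    rw [← h, perm_comm_apply (hx e he), perm_sq_apply hx2, h2, perm_comm_apply (hy e he),
      perm_sq_apply hy2]
  by_cases h2 : y ω ∈ orb D ω
  · by_cases h3 : y (x ω) ∈ orb D (x ω)
    · left
      obtain ⟨d, hd, hdω⟩ := mem_orb.1 h2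
      obtain ⟨d', hd', hdω'⟩ := mem_orb.1 h3
      refine ⟨hxω, d, hd, d', hd', hdω.symm, hdω'.symm, ?_⟩
      rw [hdω', ← perm_comm_apply (hx d hd), hdω]
      exact hω
    · right
      refine ⟨x ω, y (x ω), stabIn_apply_eq hx ω, ?_, hxω, ?_, h3⟩
      · rw [stabIn_apply_eq hy, stabIn_apply_eq hx]
      · intro h4
        have h5 := apply_mem_orb_apply hy h4
        rw [perm_sq_apply hy2, orb_eq_of_mem h2] at h5
        exact hxω h5
  · right
    exact ⟨x ω, y ω, stabIn_apply_eq hx ω, stabIn_apply_eq hy ω, hxω, h2, h1⟩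

theorem twoType_or_threeType (hD : SqOne D) (hx2 : x * x = 1) (hy2 : y * y = 1)
    (hx : ∀ e ∈ D, Commute x e) (hy : ∀ e ∈ D, Commute y e) (hω : x (y ω) ≠ y (x ω)) :
    TwoType D x y ω ∨ TwoType D y x ω ∨ ThreeType D ω := by
  by_cases hxω : x ω ∈ orb D ω
  · by_cases hyω : y ω ∈ orb D ω
    · exfalso
      obtain ⟨d, hd, hdω⟩ := mem_orb.1 hxω
      obtain ⟨e, he, heω⟩ := mem_orb.1 hyω
      apply hω
      rw [← heω, ← hdω, perm_comm_apply (hx e he), perm_comm_apply (hy d hd), ← heω, ← hdω,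
        perm_comm_apply (hD.commute he hd)]
    · right
      exact twoType_or_threeType_aux hD hy2 hx2 hy hx (Ne.symm hω) hyω
  · rcases twoType_or_threeType_aux hD hx2 hy2 hx hy hω hxω with h | h
    · exact Or.inl h
    · exact Or.inr (Or.inr h)

/-- On the two orbits involved in a `TwoType` configuration, `(x * y) ^ 2` acts as an element
of `D`. -/
theorem TwoType.sq_apply (hD : SqOne D) (hx2 : x * x = 1)
    (hx : ∀ e ∈ D, Commute x e) (hy : ∀ e ∈ D, Commute y e) {d d' : Perm α} (hd : d ∈ D)
    (hd' : d' ∈ D) (h1 : y ω = d ω) (h2 : y (x ω) = d' (x ω)) :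
    ((x * y) ^ 2) ω = (d * d') ω ∧ ((x * y) ^ 2) (x ω) = (d * d') (x ω) := by
  rw [pow_two]
  simp only [Perm.mul_apply]
  constructor
  · rw [h1, perm_comm_apply (hx d hd), perm_comm_apply (hy d hd), perm_comm_apply (hx d hd), h2,
      perm_comm_apply (hx d' hd'), perm_sq_apply hx2]
  · rw [h2, perm_comm_apply (hx d' hd'), perm_sq_apply hx2, perm_comm_apply (hy d' hd'), h1,
      perm_comm_apply (hD.commute hd' hd), perm_comm_apply (hx d hd), perm_comm_apply (hx d' hd')]

theorem sq_mul_commute (hx : ∀ e ∈ D, Commute x e) (hy : ∀ e ∈ D, Commute y e) :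
    ∀ e ∈ D, Commute ((x * y) ^ 2) e :=
  fun e he => ((hx e he).mul_left (hy e he)).pow_left 2

theorem TwoType.sq_mem [DecidableEq α] (hD : SqOne D) (hx2 : x * x = 1) (hy2 : y * y = 1)
    (hx : ∀ e ∈ D, Commute x e) (hy : ∀ e ∈ D, Commute y e) (h : TwoType D x y ω)
    (hcard : 2 ^ Fintype.card α <
      4 * (Nat.card (stabIn D ω) ^ 2 * 2 ^ (2 * (orb D ω).card))) :
    (x * y) ^ 2 ∈ D := by
  obtain ⟨hxω, d, hd, d', hd', h1, h2, -⟩ := h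
  set Θ := orb D ω ∪ orb D (x ω) with hΘ
  have hΘcard : Θ.card = 2 * (orb D ω).card := by
    rw [hΘ, Finset.card_union_of_disjoint (orb_disjoint hxω),
      orb_card_eq_of_stabIn_eq (stabIn_apply_eq hx ω)]
    ring
  have hN : FixesOn (stabIn D ω) Θ := by
    refine (hD.stab_fixes_orb ω).union ?_
    rw [← stabIn_apply_eq hx ω]
    exact hD.stab_fixes_orb (x ω)
  have hND : SqOne (stabIn D ω) := hD.mono (stabIn_le D ω)
  have hDΘ : ∀ e ∈ D, ∀ s ∈ Θ, e s ∈ Θ := by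
    intro e he s hs
    rw [hΘ, Finset.mem_union] at hs ⊢
    exact hs.imp (apply_mem_orb he) (apply_mem_orb he)
  have hxΘ : ∀ s ∈ Θ, x s ∈ Θ := by
    intro s hs
    rw [hΘ, Finset.mem_union] at hs ⊢
    rcases hs with hs | hs
    · exact Or.inr (apply_mem_orb_apply hx hs)
    · left
      have := apply_mem_orb_apply hx hs
      rwa [perm_sq_apply hx2] at this
  have hyΘ : ∀ s ∈ Θ, y s ∈ Θ := by
    intro s hs
    rw [hΘ, Finset.mem_union] at hs ⊢
    refine hs.imp (fun hs => ?_) (fun hs => ?_)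
    · have := apply_mem_orb_apply hy hs
      rwa [h1, orb_eq_of_mem (apply_mem_orb hd (self_mem_orb D ω))] at this
    · have := apply_mem_orb_apply hy hs
      rwa [h2, orb_eq_of_mem (apply_mem_orb hd' (self_mem_orb D (x ω)))] at this
  have hres : ∀ g : Perm α, g * g = 1 → (∀ e ∈ D, Commute g e) → (∀ s ∈ Θ, g s ∈ Θ) →
      ∃ f ∈ stabIn D ω, ∀ s ∉ Θ, f s = g s := by
    intro g hg2 hg hgΘ
    obtain ⟨f, hf, hf1, -⟩ := hND.res_mem hN hg2 (fun e he => hg e (stabIn_le D ω he))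
      (compl_invariant hg2 hgΘ)
      (fun e he => compl_invariant (hND e he) (hDΘ e (stabIn_le D ω he)))
      (fun s hs hs' => absurd hs (Finset.mem_compl.1 hs')) (by rw [hΘcard]; exact hcard)
    exact ⟨f, hf, fun s hs => hf1 s (Finset.mem_compl.2 hs)⟩
  obtain ⟨f, hf, hfx⟩ := hres x hx2 hx hxΘ
  obtain ⟨g, hg, hgy⟩ := hres y hy2 hy hyΘ
  have hdd := mul_mem hd hd'
  obtain ⟨n, hn, hnd⟩ := hres (d * d') (hD _ hdd) (fun e he => hD.commute hdd he)
    (hDΘ _ hdd)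
  have hmem : d * d' * n ∈ D := mul_mem hdd (stabIn_le D ω hn)
  suffices (x * y) ^ 2 = d * d' * n by rw [this]; exact hmem
  obtain ⟨hq1, hq2⟩ := TwoType.sq_apply hD hx2 hx hy hd hd' h1 h2
  have hqc := sq_mul_commute hx hy
  have hDΘ' := fun e he => fun s hs => Finset.mem_compl.1
    (compl_invariant (hD e he) (hDΘ e he) s (Finset.mem_compl.2 hs))
  have hxΘ' := fun s hs => Finset.mem_compl.1
    (compl_invariant hx2 hxΘ s (Finset.mem_compl.2 hs))
  have hyΘ' := fun s hs => Finset.mem_compl.1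
    (compl_invariant hy2 hyΘ s (Finset.mem_compl.2 hs))
  ext s
  by_cases hs : s ∈ Θ
  · rw [Perm.mul_apply (d * d'), hN n hn s hs]
    rw [hΘ, Finset.mem_union] at hs
    rcases hs with hs | hs <;> obtain ⟨e, he, rfl⟩ := mem_orb.1 hs
    · rw [perm_comm_apply (hqc e he), hq1, perm_comm_apply (hD.commute he hdd)]
    · rw [perm_comm_apply (hqc e he), hq2, perm_comm_apply (hD.commute he hdd)]
  · rw [Perm.mul_apply (d * d'), hnd s hs, perm_sq_apply (hD _ hdd), pow_two]
    simp only [Perm.mul_apply]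
    have hfg := stabIn_le D ω hf
    have hgg := stabIn_le D ω hg
    rw [← hgy s hs, ← hfx _ (hDΘ' g hgg s hs), ← hgy _ (hDΘ' f hfg _ (hDΘ' g hgg s hs)),
      ← hfx _ (hDΘ' g hgg _ (hDΘ' f hfg _ (hDΘ' g hgg s hs))),
      perm_comm_apply (hD.commute hgg hfg), perm_sq_apply (hD g hgg),
      perm_sq_apply (hD f hfg)]

theorem ThreeType.exists_fixed [DecidableEq α] (hD : SqOne D) (h : ThreeType D ω) :
    ∃ Θ : Finset α, Θ.card = 3 * (orb D ω).card ∧ ω ∈ Θ ∧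
      ∀ θ ∈ Θ, stabIn D θ = stabIn D ω := by
  obtain ⟨a, c, ha, hc, h1, h2, h3⟩ := h
  refine ⟨(orb D ω ∪ orb D a) ∪ orb D c, ?_, by simp [self_mem_orb], ?_⟩
  · have hd : Disjoint (orb D ω ∪ orb D a) (orb D c) :=
      Finset.disjoint_union_left.2 ⟨orb_disjoint h2, orb_disjoint h3⟩
    rw [Finset.card_union_of_disjoint hd, Finset.card_union_of_disjoint (orb_disjoint h1),
      orb_card_eq_of_stabIn_eq ha, orb_card_eq_of_stabIn_eq hc]
    ring
  · intro θ hθ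
    rw [Finset.mem_union, Finset.mem_union] at hθ
    rcases hθ with (hθ | hθ) | hθ
    · exact hD.stabIn_eq_of_mem hθ
    · rw [hD.stabIn_eq_of_mem hθ, ha]
    · rw [hD.stabIn_eq_of_mem hθ, hc]

theorem fixesOn_of_stabIn_eq {Θ : Finset α} (h : ∀ θ ∈ Θ, stabIn D θ = stabIn D ω) :
    FixesOn (stabIn D ω) Θ := by
  intro e he θ hθ
  rw [← h θ hθ] at he
  exact (mem_stabIn.1 he).2

/-- The comparison of a lower bound for `D` with the upper bound for its point stabilizer. -/
theorem SqOne.two_pow_le_of_fixesOn (hD : SqOne D) {Y : Finset α} (hY : FixesOn (stabIn D ω) Y)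
    {c : ℕ} (hcard : 2 ^ Fintype.card α ≤ c * Nat.card D ^ 2) :
    2 ^ Y.card ≤ c * (orb D ω).card ^ 2 := by
  have h1 := (hD.mono (stabIn_le D ω)).card_bound hY
  rw [card_eq_orb_mul_stab D ω, mul_pow] at hcard
  have hpos : 0 < Nat.card (stabIn D ω) ^ 2 := by
    have : 0 < Nat.card (stabIn D ω) := Nat.card_pos
    positivity
  refine Nat.le_of_mul_le_mul_left ((h1.trans hcard).trans (le_of_eq ?_)) hpos
  ring

theorem orb_card_pos (D : Subgroup (Perm α)) (ω : α) : 0 < (orb D ω).card :=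
  Finset.card_pos.2 ⟨ω, self_mem_orb D ω⟩

theorem cube_eq_one_of_card_three {β : Type*} [Fintype β] (h3 : Fintype.card β = 3)
    (g t : Perm β) (hg : g * g = 1) (ht : t * t = 1) (hgt : g * t ≠ t * g) :
    (g * t) ^ 3 = 1 := by
  have key : ∀ g t : Perm (Fin 3), g * g = 1 → t * t = 1 → g * t ≠ t * g → (g * t) ^ 3 = 1 := by
    decide
  let φ : Perm β ≃* Perm (Fin 3) := (Fintype.equivFinOfCardEq h3).permCongrHom
  have h := key (φ g) (φ t) (by rw [← map_mul, hg, map_one]) (by rw [← map_mul, ht, map_one])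
    (by rw [← map_mul, ← map_mul]; exact fun h => hgt (φ.injective h))
  rw [← map_mul, ← map_pow] at h
  exact φ.injective (h.trans (map_one φ).symm)

/-- Two involutions centralizing a large elementary abelian 2-group. -/
theorem sq_or_cube_mem [DecidableEq α] (hD : SqOne D) (hx2 : x * x = 1) (hy2 : y * y = 1)
    (hx : ∀ e ∈ D, Commute x e) (hy : ∀ e ∈ D, Commute y e)
    (hcard : 2 ^ Fintype.card α ≤ 8 * Nat.card D ^ 2) (hxy : ¬ Commute x y) :
    (x * y) ^ 2 ∈ D ∨ (x * y) ^ 3 ∈ D := by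
  obtain ⟨ω, hω⟩ : ∃ ω, x (y ω) ≠ y (x ω) := by
    by_contra h
    push Not at h
    exact hxy (Equiv.ext h)
  have hN : 0 < Nat.card (stabIn D ω) ^ 2 := by
    have : 0 < Nat.card (stabIn D ω) := Nat.card_pos
    positivity
  have hbig : 2 ^ Fintype.card α <
      4 * (Nat.card (stabIn D ω) ^ 2 * 2 ^ (2 * (orb D ω).card)) := by
    have h1 : ∀ n : ℕ, 1 ≤ n → 2 * n ^ 2 < 2 ^ (2 * n) := by
      intro n hn
      induction n, hn using Nat.le_induction with
      | base => norm_num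
      | succ k hk ih =>
        have h3 : (k + 1) ^ 2 ≤ 4 * k ^ 2 := by nlinarith
        rw [mul_add, pow_add]
        norm_num at ih ⊢
        linarith
    have h2 := h1 _ (orb_card_pos D ω)
    rw [card_eq_orb_mul_stab D ω, mul_pow] at hcard
    calc 2 ^ Fintype.card α ≤ _ := hcard
      _ = 4 * (Nat.card (stabIn D ω) ^ 2 * (2 * (orb D ω).card ^ 2)) := by ring
      _ < _ := by gcongr
  rcases twoType_or_threeType hD hx2 hy2 hx hy hω with h | h | h
  · left; exact h.sq_mem hD hx2 hy2 hx hy hbig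
  · left
    have h1 := inv_mem (h.sq_mem hD hy2 hx2 hy hx hbig)
    rwa [← inv_pow, mul_inv_rev, perm_inv_of_sq hx2, perm_inv_of_sq hy2] at h1
  · right
    obtain ⟨Y, hYc, hωY, hY⟩ := h.exists_fixed hD
    have h1 := hD.two_pow_le_of_fixesOn (fixesOn_of_stabIn_eq hY) hcard
    rw [hYc] at h1
    have hone : (orb D ω).card = 1 := by
      have h2 : ∀ n : ℕ, 2 ≤ n → 8 * n ^ 2 < 2 ^ (3 * n) := by
        intro n hn
        induction n, hn using Nat.le_induction with
        | base => norm_num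
        | succ k hk ih =>
          have h3 : (k + 1) ^ 2 ≤ 4 * k ^ 2 := by nlinarith
          rw [mul_add, pow_add]
          norm_num at ih ⊢
          linarith
      have := orb_card_pos D ω
      by_contra hne
      have := h2 (orb D ω).card (by omega)
      omega
    have hst : stabIn D ω = D := by
      refine le_antisymm (stabIn_le D ω) fun e he => ?_
      exact mem_stabIn.2 ⟨he, orb_card_eq_one.1 hone e he⟩
    have hfix : FixesOn D Y := by
      have := fixesOn_of_stabIn_eq hY
      rwa [hst] at this
    rw [hone] at hYc
    have hmax : ∀ q, (∀ e ∈ D, e q = q) → q ∈ Y := by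
      intro q hq
      by_contra hqY
      have h2 := hD.card_bound (Y := insert q Y) (by
        intro e he z hz
        rcases Finset.mem_insert.1 hz with rfl | hz
        · exact hq e he
        · exact hfix e he z hz)
      rw [Finset.card_insert_of_notMem hqY, hYc] at h2
      have : 0 < Nat.card D ^ 2 := by
        have : 0 < Nat.card D := Nat.card_pos
        positivity
      norm_num at h2
      linarith
    have hpres : ∀ g : Perm α, (∀ e ∈ D, Commute g e) → ∀ s ∈ Y, g s ∈ Y := by
      intro g hg s hs
      refine hmax _ fun e he => ?_
      rw [← perm_comm_apply (hg e he), hfix e he s hs]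
    have hDYc : ∀ e ∈ D, ∀ s ∈ Yᶜ, e s ∈ Yᶜ := fun e he =>
      compl_invariant (hD e he) (hpres e fun f hf => hD.commute he hf)
    have hres : ∀ g : Perm α, g * g = 1 → (∀ e ∈ D, Commute g e) →
        ∃ f ∈ D, ∀ s ∉ Y, f s = g s := by
      intro g hg2 hg
      obtain ⟨f, hf, hf1, -⟩ := hD.res_mem hfix hg2 hg (compl_invariant hg2 (hpres g hg)) hDYc
        (fun s hs hs' => absurd hs (Finset.mem_compl.1 hs')) (by
          have : 0 < Nat.card D ^ 2 := by
            have : 0 < Nat.card D := Nat.card_pos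
            positivity
          rw [hYc]; norm_num; linarith)
      exact ⟨f, hf, fun s hs => hf1 s (Finset.mem_compl.2 hs)⟩
    obtain ⟨f, hf, hfx⟩ := hres x hx2 hx
    obtain ⟨g, hg, hgy⟩ := hres y hy2 hy
    suffices (x * y) ^ 3 = f * g by rw [this]; exact mul_mem hf hg
    have hxY := hpres x hx
    have hyY := hpres y hy
    ext s
    by_cases hs : s ∈ Y
    · rw [Perm.mul_apply f, hfix g hg s hs, hfix f hf s hs]
      have hxY' : ∀ s, x s ∈ Y ↔ s ∈ Y := fun s =>
        ⟨fun h => by simpa [perm_sq_apply hx2] using hxY _ h, hxY s⟩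
      have hyY' : ∀ s, y s ∈ Y ↔ s ∈ Y := fun s =>
        ⟨fun h => by simpa [perm_sq_apply hy2] using hyY _ h, hyY s⟩
      have h5 := cube_eq_one_of_card_three (β := Y) (by simpa using hYc)
        (x.subtypePerm hxY') (y.subtypePerm hyY')
        (by ext ⟨s, hs⟩; exact perm_sq_apply hx2 s) (by ext ⟨s, hs⟩; exact perm_sq_apply hy2 s)
        (fun h => hω (congrArg Subtype.val (Equiv.congr_fun h ⟨ω, hωY⟩)))
      exact congrArg Subtype.val (Equiv.congr_fun h5 ⟨s, hs⟩)
    · have hD' : ∀ e ∈ D, ∀ s ∉ Y, e s ∉ Y := fun e he s hs =>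
        Finset.mem_compl.1 (hDYc e he s (Finset.mem_compl.2 hs))
      have hstep : ∀ s ∉ Y, x (y s) = f (g s) := by
        intro s hs
        rw [← hgy s hs, ← hfx _ (hD' g hg s hs)]
      have hfg := mul_mem hf hg
      have h6 : ((x * y) ^ 3) s = x (y (x (y (x (y s))))) := rfl
      rw [h6, hstep s hs, hstep _ (hD' f hf _ (hD' g hg s hs)),
        hstep _ (hD' f hf _ (hD' g hg _ (hD' f hf _ (hD' g hg s hs))))]
      exact perm_sq_apply (hD _ hfg) (f (g s))

end Pair

section PairEven

variable {α : Type*} [Fintype α] [DecidableEq α] {D H : Subgroup (Perm α)} {x y : Perm α} {ω : α}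

theorem ThreeType.orb_card_ne_one (hD : SqOne D) (hDH : D ≤ H)
    (hns : ∀ a c : α, a ≠ c → swap a c ∉ H) (hxH : x ∈ H) (hyH : y ∈ H)
    (hx2 : x * x = 1) (hy2 : y * y = 1)
    (hx : ∀ e ∈ D, Commute x e) (hy : ∀ e ∈ D, Commute y e) (hω : x (y ω) ≠ y (x ω))
    (heven : Even (Fintype.card α)) (hcard : 2 ^ Fintype.card α ≤ 16 * Nat.card D ^ 2)
    (h : ThreeType D ω) : (orb D ω).card ≠ 1 := by
  intro hone
  have hst : stabIn D ω = D := by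
    refine le_antisymm (stabIn_le D ω) fun e he => ?_
    exact mem_stabIn.2 ⟨he, orb_card_eq_one.1 hone e he⟩
  have hDpos : 0 < Nat.card D ^ 2 := by
    have : 0 < Nat.card D := Nat.card_pos
    positivity
  classical
  set Y : Finset α := Finset.univ.filter fun q => ∀ e ∈ D, e q = q with hYdef
  have hYmem : ∀ q, q ∈ Y ↔ ∀ e ∈ D, e q = q := by intro q; simp [hYdef]
  have hfix : FixesOn D Y := fun e he q hq => (hYmem q).1 hq e he
  have hωY : ω ∈ Y := (hYmem ω).2 (orb_card_eq_one.1 hone)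
  have hYcard : Y.card = 4 := by
    obtain ⟨Θ, hΘc, -, hΘ⟩ := h.exists_fixed hD
    have h1 : 3 ≤ Y.card := by
      rw [hone, mul_one] at hΘc
      rw [← hΘc]
      apply Finset.card_le_card
      intro θ hθ
      refine (hYmem θ).2 fun e he => ?_
      have := fixesOn_of_stabIn_eq hΘ
      rw [hst] at this
      exact this e he θ hθ
    have h2 : Y.card ≤ 4 := by
      have h3 := (hD.card_bound hfix).trans hcard
      rw [mul_comm 16] at h3
      have h4 := Nat.le_of_mul_le_mul_left h3 hDpos
      rw [show 16 = 2 ^ 4 by norm_num] at h4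
      exact (Nat.pow_le_pow_iff_right (by norm_num : 1 < 2)).1 h4
    have h5 : Fintype.card α % 2 = Y.card % 2 := by
      have : Fact (Nat.Prime 2) := ⟨Nat.prime_two⟩
      have h6 := hD.isPGroup.card_modEq_card_fixedPoints α
      have h7 : Nat.card (MulAction.fixedPoints D α) = Y.card := by
        rw [← Fintype.card_coe Y, ← Nat.card_eq_fintype_card]
        refine Nat.card_congr (Equiv.subtypeEquivRight fun q => ?_)
        rw [hYmem]
        exact ⟨fun h e he => h ⟨e, he⟩, fun h e => h e.1 e.2⟩
      rw [h7, Nat.card_eq_fintype_card] at h6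
      exact h6
    rw [Nat.even_iff] at heven
    omega
  have hpres : ∀ g : Perm α, (∀ e ∈ D, Commute g e) → ∀ s ∈ Y, g s ∈ Y := by
    intro g hg s hs
    refine (hYmem _).2 fun e he => ?_
    rw [← perm_comm_apply (hg e he), hfix e he s hs]
  have hDYc : ∀ e ∈ D, ∀ s ∈ Yᶜ, e s ∈ Yᶜ := fun e he =>
    compl_invariant (hD e he) (hpres e fun f hf => hD.commute he hf)
  -- an involution centralizing `D` fixes all of `Y` or no point of `Y`
  have hfpf : ∀ g ∈ H, g * g = 1 → (∀ e ∈ D, Commute g e) → (∃ s ∈ Y, g s = s) →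
      ∀ s ∈ Y, g s = s := by
    rintro g hgH hg2 hg ⟨p, hp, hgp⟩ s hs
    by_contra hgs
    obtain ⟨f, hf, hf1, hf2⟩ := hD.res_mem hfix hg2 hg (compl_invariant hg2 (hpres g hg)) hDYc
      (fun s hs hs' => absurd hs (Finset.mem_compl.1 hs')) (by
        rw [hYcard]; linarith)
    have hgsY := hpres g hg s hs
    refine hns s (g s) (Ne.symm hgs) ?_
    have heq : swap s (g s) = g * f := by
      ext q
      rw [Perm.mul_apply]
      by_cases hq : q ∈ Y
      · rw [hf2 q (by simpa using hq)]
        by_cases h1 : q = s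
        · rw [h1, swap_apply_left]
        by_cases h2 : q = g s
        · rw [h2, swap_apply_right, perm_sq_apply hg2]
        rw [swap_apply_of_ne_of_ne h1 h2]
        by_contra h3
        have hps : p ≠ s := by rintro rfl; exact hgs hgp
        have hpgs : p ≠ g s := by
          intro h
          rw [h, perm_sq_apply hg2] at hgp
          exact hgs hgp.symm
        have hpq : p ≠ q := by rintro rfl; exact h3 hgp.symm
        have hpgq : p ≠ g q := by
          intro h
          apply hpq
          rw [h, perm_sq_apply hg2] at hgp
          rw [h, ← hgp]
        have hgqs : g q ≠ s := by
          intro h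
          apply h2
          rw [← h, perm_sq_apply hg2]
        have hgqgs : g q ≠ g s := fun h => h1 (g.injective h)
        have h5 : ({p, s, g s, q, g q} : Finset α) ⊆ Y := by
          intro z hz
          simp only [Finset.mem_insert, Finset.mem_singleton] at hz
          rcases hz with rfl | rfl | rfl | rfl | rfl
          · exact hp
          · exact hs
          · exact hgsY
          · exact hq
          · exact hpres g hg _ hq
        have h6 := Finset.card_le_card h5
        rw [Finset.card_insert_of_notMem (by simp [hps, hpgs, hpq, hpgq]),
          Finset.card_insert_of_notMem (by simp [Ne.symm hgs, Ne.symm h1, hgqs.symm]),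
          Finset.card_insert_of_notMem (by simp [Ne.symm h2, hgqgs.symm]),
          Finset.card_pair h3, hYcard] at h6
        omega
      · rw [hf1 q (Finset.mem_compl.2 hq), perm_sq_apply hg2]
        refine swap_apply_of_ne_of_ne ?_ ?_
        · rintro rfl; exact hq hs
        · rintro rfl; exact hq hgsY
    rw [heq]
    exact mul_mem hgH (hDH hf)
  have hxn : ∀ s ∈ Y, x s ≠ s := by
    intro s hs hxs
    have h1 := hfpf x hxH hx2 hx ⟨s, hs, hxs⟩
    exact hω (by rw [h1 _ (hpres y hy ω hωY), h1 ω hωY])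
  have hyn : ∀ s ∈ Y, y s ≠ s := by
    intro s hs hys
    have h1 := hfpf y hyH hy2 hy ⟨s, hs, hys⟩
    exact hω (by rw [h1 _ (hpres x hx ω hωY), h1 ω hωY])
  have hxY := hpres x hx ω hωY
  have hyY := hpres y hy ω hωY
  have hxy : x ω ≠ y ω := by
    intro h
    apply hω
    rw [← h, perm_sq_apply hx2, h, perm_sq_apply hy2]
  have h1 : ω ≠ x (y ω) := by
    intro h
    apply hxy
    conv_lhs => rw [h]
    rw [perm_sq_apply hx2]
  have h2 : ω ≠ y (x ω) := by
    intro h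
    apply hxy
    conv_rhs => rw [h]
    rw [perm_sq_apply hy2]
  have h3 : x ω ≠ x (y ω) := fun h => hyn ω hωY (x.injective h).symm
  have h4 : y ω ≠ y (x ω) := fun h => hxn ω hωY (y.injective h).symm
  have h5 : ({ω, x ω, y ω, x (y ω), y (x ω)} : Finset α) ⊆ Y := by
    intro z hz
    simp only [Finset.mem_insert, Finset.mem_singleton] at hz
    rcases hz with rfl | rfl | rfl | rfl | rfl
    · exact hωY
    · exact hxY
    · exact hyY
    · exact hpres x hx _ hyY
    · exact hpres y hy _ hxY
  have h6 := Finset.card_le_card h5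
  rw [Finset.card_insert_of_notMem
      (by simp [(hxn ω hωY).symm, (hyn ω hωY).symm, h1, h2]),
    Finset.card_insert_of_notMem (by simp [hxy, h3, (hyn _ hxY).symm]),
    Finset.card_insert_of_notMem (by simp [h4, (hxn _ hyY).symm]),
    Finset.card_pair hω, hYcard] at h6
  omega

/-- `Θ` has six points, which elements of `D` fix or move simultaneously, and each point outside
`Θ` is moved by a Klein four-group of elements of `D` with supports of size four. -/
structure IsCore (D : Subgroup (Perm α)) (Θ : Finset α) : Prop where
  card : Θ.card = 6
  moves : ∀ d ∈ D, ∀ θ ∈ Θ, d θ ≠ θ → ∀ θ' ∈ Θ, d θ' ≠ θ'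
  klein : ∀ ω ∉ Θ, ∃ w ∈ D, ∃ w' ∈ D, w ω ≠ ω ∧ w' ω ≠ ω ∧ (w * w') ω ≠ ω ∧
    w.support.card = 4 ∧ w'.support.card = 4 ∧ (w * w').support.card = 4

theorem ThreeType.exists_isCore (hD : SqOne D)
    (hns : ∀ a c : α, a ≠ c → swap a c ∉ D)
    (hcard : 2 ^ Fintype.card α ≤ 16 * Nat.card D ^ 2)
    (h : ThreeType D ω) (htwo : (orb D ω).card = 2) : ∃ Θ, IsCore D Θ := by
  obtain ⟨Θ, hΘc, -, hΘ⟩ := h.exists_fixed hD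
  have hfix := fixesOn_of_stabIn_eq hΘ
  have hND : SqOne (stabIn D ω) := hD.mono (stabIn_le D ω)
  rw [htwo] at hΘc
  have hNcard : 2 ^ Fintype.card α ≤ Nat.card (stabIn D ω) ^ 2 * 2 ^ Θ.card := by
    rw [card_eq_orb_mul_stab D ω, htwo, mul_pow] at hcard
    rw [hΘc]
    norm_num at hcard ⊢
    linarith
  have hNpos : 0 < Nat.card (stabIn D ω) ^ 2 * 2 ^ Θ.card := by
    have : 0 < Nat.card (stabIn D ω) := Nat.card_pos
    positivity
  refine ⟨Θ, hΘc, ?_, ?_⟩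
  · intro d hd θ hθ hdθ θ' hθ' hdθ'
    have h1 : d ∈ stabIn D θ' := mem_stabIn.2 ⟨hd, hdθ'⟩
    rw [hΘ θ' hθ', ← hΘ θ hθ] at h1
    exact hdθ (mem_stabIn.1 h1).2
  · intro q hq
    have h4 := hND.orb_card_four hfix hNcard
      (fun a c hac hm => hns a c hac (stabIn_le D ω hm)) hq
    set S := orb (stabIn D ω) q with hS
    have hres : ∀ e ∈ stabIn D ω, ∃ f ∈ D, (∀ s ∈ S, f s = e s) ∧ ∀ s ∉ S, f s = s := by
      intro e he
      obtain ⟨f, hf, hf1, hf2⟩ := hND.res_mem hfix (hND e he) (fun e' he' => hND.commute he he')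
        (S := S) (fun s hs => apply_mem_orb he hs) (fun e he s hs => apply_mem_orb he hs)
        (fun s hs _ => hfix e he s hs) (by linarith)
      exact ⟨f, stabIn_le D ω hf, hf1, hf2⟩
    have hmove : ∀ e ∈ stabIn D ω, e q ≠ q → ∀ s ∈ S, e s ≠ s := by
      intro e he heq s hs h
      obtain ⟨f, hf, rfl⟩ := mem_orb.1 hs
      rw [perm_comm_apply (hND.commute he hf)] at h
      exact heq (f.injective h)
    have hsupp : ∀ f : Perm α, ∀ e ∈ stabIn D ω, e q ≠ q → (∀ s ∈ S, f s = e s) →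
        (∀ s ∉ S, f s = s) → f.support.card = 4 := by
      intro f e he heq hf1 hf2
      rw [← h4]
      congr 1
      ext s
      rw [Perm.mem_support]
      refine ⟨fun h => ?_, fun h => ?_⟩
      · by_contra hs
        exact h (hf2 s hs)
      · rw [hf1 s h]
        exact hmove e he heq s h
    have hqS : q ∈ S := self_mem_orb _ q
    obtain ⟨p, hp, hpq⟩ := Finset.exists_mem_ne (by omega : 1 < S.card) q
    obtain ⟨p', hp', hp'q⟩ := Finset.exists_mem_ne (s := S.erase q)
      (by rw [Finset.card_erase_of_mem hqS]; omega) p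
    obtain ⟨hp'1, hp'2⟩ := Finset.mem_erase.1 hp'
    obtain ⟨e, he, heq⟩ := mem_orb.1 hp
    obtain ⟨e', he', heq'⟩ := mem_orb.1 hp'2
    obtain ⟨w, hw, hw1, hw2⟩ := hres e he
    obtain ⟨w', hw', hw1', hw2'⟩ := hres e' he'
    have hee : (e * e') q ≠ q := by
      intro h
      apply hp'q
      rw [← heq, ← heq']
      rw [Perm.mul_apply] at h
      conv_rhs => rw [← h]
      rw [perm_sq_apply (hND e he)]
    have hww1 : ∀ s ∈ S, (w * w') s = (e * e') s := by
      intro s hs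
      rw [Perm.mul_apply, hw1' s hs, hw1 _ (apply_mem_orb he' hs), Perm.mul_apply]
    refine ⟨w, hw, w', hw', ?_, ?_, ?_, ?_, ?_, ?_⟩
    · rw [hw1 q hqS, heq]; exact hpq
    · rw [hw1' q hqS, heq']; exact hp'1
    · rw [hww1 q hqS]; exact hee
    · exact hsupp w e he (by rw [heq]; exact hpq) hw1 hw2
    · exact hsupp w' e' he' (by rw [heq']; exact hp'1) hw1' hw2'
    · refine hsupp _ _ (mul_mem he he') hee hww1 fun s hs => ?_
      rw [Perm.mul_apply, hw2' s hs, hw2 s hs]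

theorem TwoType.orb_card (hD : SqOne D) (hx2 : x * x = 1) (hy2 : y * y = 1)
    (hx : ∀ e ∈ D, Commute x e) (hy : ∀ e ∈ D, Commute y e)
    (hcard : 2 ^ Fintype.card α ≤ 16 * Nat.card D ^ 2)
    (h : TwoType D x y ω) (hq : (x * y) ^ 2 ∉ D) : (orb D ω).card = 2 := by
  have hN : FixesOn (stabIn D ω) (orb D ω ∪ orb D (x ω)) := by
    refine (hD.stab_fixes_orb ω).union ?_
    rw [← stabIn_apply_eq hx ω]
    exact hD.stab_fixes_orb (x ω)
  have h1 := hD.two_pow_le_of_fixesOn hN hcard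
  rw [Finset.card_union_of_disjoint (orb_disjoint h.1),
    orb_card_eq_of_stabIn_eq (stabIn_apply_eq hx ω)] at h1
  obtain ⟨s, hs⟩ := hD.orb_card ω
  have hNpos : 0 < Nat.card (stabIn D ω) ^ 2 := by
    have : 0 < Nat.card (stabIn D ω) := Nat.card_pos
    positivity
  match s, hs with
  | 0, hs =>
    exfalso
    obtain ⟨-, d, hd, d', hd', -, -, hne⟩ := h
    rw [pow_zero, orb_card_eq_one] at hs
    apply hne
    rw [← perm_comm_apply (hx d hd), ← perm_comm_apply (hx d' hd'), hs d hd, hs d' hd']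
  | 1, hs => exact hs
  | 2, hs =>
    exfalso
    refine hq (h.sq_mem hD hx2 hy2 hx hy ?_)
    rw [card_eq_orb_mul_stab D ω, hs, mul_pow] at hcard
    rw [hs]
    norm_num at hcard ⊢
    linarith
  | s + 3, hs =>
    exfalso
    have h2 : ∀ n : ℕ, 5 ≤ n → 16 * n ^ 2 < 2 ^ (n + n) := by
      intro n hn
      induction n, hn using Nat.le_induction with
      | base => norm_num
      | succ k hk ih =>
        have h3 : (k + 1) ^ 2 ≤ 4 * k ^ 2 := by nlinarith
        rw [show k + 1 + (k + 1) = k + k + 2 by ring, pow_add]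
        norm_num
        linarith
    have h3 : 8 ≤ (orb D ω).card := by
      rw [hs, pow_add]
      have : 0 < 2 ^ s := by positivity
      omega
    have := h2 (orb D ω).card (by omega)
    omega

end PairEven

section PairEven

variable {α : Type*} [Fintype α] {D H : Subgroup (Perm α)} {x y : Perm α} {ω : α}

/-- Two `D`-orbits of size two with the same stabilizers, on which `(x * y) ^ 2` acts as the
element `δ` of `D` and some involution `v` acts as two different elements of `D`. -/
structure PairData (D H : Subgroup (Perm α)) (x y : Perm α) (ω p : α) (δ v : Perm α) : Prop where
  card : (orb D ω).card = 2
  notMem : p ∉ orb D ω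
  stab : stabIn D p = stabIn D ω
  mem : δ ∈ D
  left : ((x * y) ^ 2) ω = δ ω
  right : ((x * y) ^ 2) p = δ p
  ne : δ ω ≠ ω
  memH : v ∈ H
  sq : v * v = 1
  comm : ∀ e ∈ D, Commute v e
  split : ∃ d ∈ D, ∃ d' ∈ D, v ω = d ω ∧ v p = d' p ∧ d p ≠ d' p

theorem sq_mul_apply_eq_iff (hx2 : x * x = 1) (hy2 : y * y = 1) (s : α) :
    ((x * y) ^ 2) s = s ↔ x (y s) = y (x s) := by
  rw [pow_two]
  simp only [Perm.mul_apply]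
  constructor
  · intro h
    have h1 := congrArg y (congrArg x h)
    rwa [perm_sq_apply hx2, perm_sq_apply hy2] at h1
  · intro h
    rw [h, perm_sq_apply hy2, perm_sq_apply hx2]

theorem TwoType.pairData [DecidableEq α] (hD : SqOne D) (hyH : y ∈ H)
    (hx2 : x * x = 1) (hy2 : y * y = 1)
    (hx : ∀ e ∈ D, Commute x e) (hy : ∀ e ∈ D, Commute y e)
    (hcard : 2 ^ Fintype.card α ≤ 16 * Nat.card D ^ 2) (hω : x (y ω) ≠ y (x ω))
    (h : TwoType D x y ω) (hq : (x * y) ^ 2 ∉ D) : ∃ p δ v, PairData D H x y ω p δ v := by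
  have hc := h.orb_card hD hx2 hy2 hx hy hcard hq
  obtain ⟨hxω, d, hd, d', hd', h1, h2, h3⟩ := h
  obtain ⟨hq1, hq2⟩ := TwoType.sq_apply hD hx2 hx hy hd hd' h1 h2
  refine ⟨x ω, d * d', y, hc, hxω, stabIn_apply_eq hx ω, mul_mem hd hd', hq1, hq2, ?_, hyH, hy2, hy,
    d, hd, d', hd', h1, h2, h3⟩
  rw [← hq1]
  exact fun h => hω ((sq_mul_apply_eq_iff hx2 hy2 ω).1 h)

theorem PairData.symm (hD : SqOne D) (hx2 : x * x = 1) (hy2 : y * y = 1)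
    (hx : ∀ e ∈ D, Commute x e) (hy : ∀ e ∈ D, Commute y e) {p : α} {δ v : Perm α}
    (h : PairData D H y x ω p δ v) : PairData D H x y ω p δ v := by
  have hinv : (y * x) ^ 2 = ((x * y) ^ 2)⁻¹ := by
    rw [← inv_pow, mul_inv_rev, perm_inv_of_sq hx2, perm_inv_of_sq hy2]
  have key : ∀ s, ((y * x) ^ 2) s = δ s → ((x * y) ^ 2) s = δ s := by
    intro s hs
    rw [hinv, Perm.inv_eq_iff_eq, perm_comm_apply (sq_mul_commute hx hy δ h.mem)] at hs
    conv_rhs => rw [hs]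
    rw [perm_sq_apply (hD δ h.mem)]
  exact ⟨h.card, h.notMem, h.stab, h.mem, key _ h.left, key _ h.right, h.ne, h.memH, h.sq, h.comm,
    h.split⟩

theorem mem_or_of_mem_closure_insert (hx2 : x * x = 1) (hx : ∀ e ∈ D, Commute x e) {g : Perm α}
    (hg : g ∈ closure (insert x (D : Set (Perm α)))) : g ∈ D ∨ x * g ∈ D := by
  have := mem_closure_insert_cases hx2 hx hg
  rwa [closure_eq] at this

theorem commute_closure_insert {g : Perm α} (hgx : Commute g x) (hg : ∀ e ∈ D, Commute g e) :
    ∀ e ∈ closure (insert x (D : Set (Perm α))), Commute g e := by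
  apply commute_closure
  rintro s (rfl | hs)
  · exact hgx
  · exact hg s hs

theorem mapsTo_orb {g : Perm α} (hg : ∀ e ∈ D, Commute g e) (h : g ω ∈ orb D ω) :
    ∀ s ∈ orb D ω, g s ∈ orb D ω := by
  intro s hs
  have := apply_mem_orb_apply hg hs
  rwa [orb_eq_of_mem h] at this

theorem exists_isCore_of_pair [DecidableEq α] (hD : SqOne D) (hDH : D ≤ H)
    (hns : ∀ a c : α, a ≠ c → swap a c ∉ H) (hxH : x ∈ H) (hyH : y ∈ H)
    (hx2 : x * x = 1) (hy2 : y * y = 1)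
    (hx : ∀ e ∈ D, Commute x e) (hy : ∀ e ∈ D, Commute y e) (hxy : ¬ Commute x y)
    (heven : Even (Fintype.card α)) (hcard : 2 ^ Fintype.card α ≤ 16 * Nat.card D ^ 2)
    (hq : (x * y) ^ 2 ∉ D) : ∃ Θ, IsCore D Θ := by
  by_cases h3 : ∃ ω, x (y ω) ≠ y (x ω) ∧ ThreeType D ω
  · obtain ⟨ω, hω, h⟩ := h3
    have hne := h.orb_card_ne_one hD hDH hns hxH hyH hx2 hy2 hx hy hω heven hcard
    refine h.exists_isCore hD (fun a c hac hm => hns a c hac (hDH hm)) hcard ?_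
    obtain ⟨Y, hYc, -, hY⟩ := h.exists_fixed hD
    have h1 := hD.two_pow_le_of_fixesOn (fixesOn_of_stabIn_eq hY) hcard
    rw [hYc] at h1
    have h2 : ∀ n : ℕ, 3 ≤ n → 16 * n ^ 2 < 2 ^ (3 * n) := by
      intro n hn
      induction n, hn using Nat.le_induction with
      | base => norm_num
      | succ k hk ih =>
        have h3 : (k + 1) ^ 2 ≤ 4 * k ^ 2 := by nlinarith
        rw [mul_add, pow_add]
        norm_num at ih ⊢
        linarith
    have hpos := orb_card_pos D ω
    by_contra hn2
    have := h2 (orb D ω).card (by omega)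
    omega
  exfalso
  push Not at h3
  have hdata : ∀ ω, x (y ω) ≠ y (x ω) → ∃ p δ v, PairData D H x y ω p δ v := by
    intro ω hω
    rcases twoType_or_threeType hD hx2 hy2 hx hy hω with h | h | h
    · exact h.pairData hD hyH hx2 hy2 hx hy hcard hω hq
    · obtain ⟨p, δ, v, h⟩ := h.pairData hD hxH hy2 hx2 hy hx hcard (Ne.symm hω) (fun h => hq (by
        have h1 := inv_mem h
        rwa [← inv_pow, mul_inv_rev, perm_inv_of_sq hx2, perm_inv_of_sq hy2] at h1))
      exact ⟨p, δ, v, h.symm hD hx2 hy2 hx hy⟩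
    · exact absurd h (h3 ω hω)
  set q := (x * y) ^ 2 with hqdef
  have hqc : ∀ e ∈ D, Commute q e := sq_mul_commute hx hy
  have hq2 : q * q = 1 := by
    ext s
    rw [Perm.mul_apply, Perm.one_apply]
    by_cases hs : x (y s) = y (x s)
    · rw [(sq_mul_apply_eq_iff hx2 hy2 s).2 hs, (sq_mul_apply_eq_iff hx2 hy2 s).2 hs]
    · obtain ⟨p, δ, v, h⟩ := hdata s hs
      rw [h.left, perm_comm_apply (hqc δ h.mem), h.left, perm_sq_apply (hD δ h.mem)]
  obtain ⟨ω, hω⟩ : ∃ ω, x (y ω) ≠ y (x ω) := by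
    by_contra h
    push Not at h
    exact hxy (Equiv.ext h)
  obtain ⟨p, δ, v, h⟩ := hdata ω hω
  have hfixiff : ∀ e ∈ D, e ω = ω ↔ e p = p := by
    intro e he
    have h1 : e ∈ stabIn D ω ↔ e ∈ stabIn D p := by rw [h.stab]
    simpa [mem_stabIn, he] using h1
  obtain ⟨ω₁, hω₁, hO⟩ := exists_orb_eq_pair h.card
  obtain ⟨p₁, hp₁, hO'⟩ := exists_orb_eq_pair (E := D) (x := p) (by
    rw [orb_card_eq_of_stabIn_eq h.stab, h.card])
  have hδ2 := perm_sq_apply (hD δ h.mem)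
  have hδω : δ ω = ω₁ := by
    have h1 := apply_mem_orb h.mem (self_mem_orb D ω)
    rw [hO, Finset.mem_insert, Finset.mem_singleton] at h1
    exact h1.resolve_left h.ne
  have hδω₁ : δ ω₁ = ω := by rw [← hδω, hδ2]
  have hδp' : δ p ≠ p := fun h1 => h.ne ((hfixiff δ h.mem).2 h1)
  have hδp : δ p = p₁ := by
    have h1 := apply_mem_orb h.mem (self_mem_orb D p)
    rw [hO', Finset.mem_insert, Finset.mem_singleton] at h1
    exact h1.resolve_left hδp'
  have hδp₁ : δ p₁ = p := by rw [← hδp, hδ2]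
  have hdis := orb_disjoint h.notMem
  have hpω : p ≠ ω := by
    rintro rfl
    exact h.notMem (self_mem_orb _ _)
  have hpω₁ : p ≠ ω₁ := by
    rintro rfl
    exact h.notMem (by rw [hO]; simp)
  have hp₁O : p₁ ∉ orb D ω := Finset.disjoint_right.1 hdis (by rw [hO']; simp)
  have hp₁ω : p₁ ≠ ω := by
    rintro rfl
    exact hp₁O (self_mem_orb _ _)
  have hp₁ω₁ : p₁ ≠ ω₁ := by
    rintro rfl
    exact hp₁O (by rw [hO]; simp)
  set t := swap ω ω₁ with ht
  set t' := swap p p₁ with ht'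
  have htc : ∀ e ∈ D, Commute t e := swap_commute_of_orb_eq_pair hω₁ hO
  have htc' : ∀ e ∈ D, Commute t' e := swap_commute_of_orb_eq_pair hp₁ hO'
  have ht2 : t * t = 1 := swap_mul_self _ _
  have ht2' : t' * t' = 1 := swap_mul_self _ _
  have htp : t p = p := swap_apply_of_ne_of_ne hpω hpω₁
  have htp₁ : t p₁ = p₁ := swap_apply_of_ne_of_ne hp₁ω hp₁ω₁
  have htω' : t' ω = ω := swap_apply_of_ne_of_ne hpω.symm hp₁ω.symm
  have htω₁' : t' ω₁ = ω₁ := swap_apply_of_ne_of_ne hpω₁.symm hp₁ω₁.symm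
  have htω : t ω = ω₁ := swap_apply_left _ _
  have htω₁ : t ω₁ = ω := swap_apply_right _ _
  have htpp : t' p = p₁ := swap_apply_left _ _
  have htpp₁ : t' p₁ = p := swap_apply_right _ _
  have htt : Commute t t' := by
    refine swap_commute_of_mapsTo hω₁ hO fun s hs => ?_
    rw [hO, Finset.mem_insert, Finset.mem_singleton] at hs ⊢
    rcases hs with rfl | rfl
    · left; exact htω'
    · right; exact htω₁'
  have htD : t ∉ D := fun hm => hns ω ω₁ hω₁ (hDH hm)
  have htD' : t' ∉ D := fun hm => hns p p₁ hp₁ (hDH hm)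
  have hz2 : (t * t') * (t * t') = 1 := by
    calc t * t' * (t * t') = t * (t' * t) * t' := by group
      _ = t * (t * t') * t' := by rw [htt.eq]
      _ = (t * t) * (t' * t') := by group
      _ = 1 := by rw [ht2, ht2', one_mul]
  have hzt : (t * t') * t = t' := by
    rw [htt.eq, mul_assoc, ht2, mul_one]
  have hlarge : ∀ {E : Subgroup (Perm α)}, 4 * Nat.card D ≤ Nat.card E →
      2 ^ Fintype.card α < 4 * (Nat.card E ^ 2 * 2 ^ (∅ : Finset α).card) := by
    intro E hE
    have h1 : (4 * Nat.card D) ^ 2 ≤ Nat.card E ^ 2 := by gcongr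
    have h2 : 0 < Nat.card E ^ 2 := by
      have : 0 < Nat.card E := Nat.card_pos
      positivity
    rw [Finset.card_empty]
    nlinarith
  have hzD : t * t' ∈ D := by
    by_contra hz
    have hzc : ∀ e ∈ D, Commute (t * t') e := fun e he => (htc e he).mul_left (htc' e he)
    set D₁ := closure (insert (t * t') (D : Set (Perm α))) with hD₁
    have hD₁sq : SqOne D₁ := sqOne_closure_insert hD hz2 hzc
    have htD₁ : t ∉ D₁ := by
      intro hm
      rcases mem_or_of_mem_closure_insert hz2 hzc hm with h1 | h1
      · exact htD h1
      · rw [hzt] at h1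
        exact htD' h1
    have htcD₁ : ∀ e ∈ D₁, Commute t e :=
      commute_closure_insert ((Commute.refl t).mul_right htt) htc
    obtain ⟨d, hd, d', hd', hvω, hvp, hne⟩ := h.split
    have hvO : ∀ s ∈ orb D ω, v s ∈ orb D ω :=
      mapsTo_orb h.comm (by rw [hvω]; exact apply_mem_orb hd (self_mem_orb _ _))
    have hvO' : ∀ s ∈ orb D p, v s ∈ orb D p :=
      mapsTo_orb h.comm (by rw [hvp]; exact apply_mem_orb hd' (self_mem_orb _ _))
    have hvt : Commute v t := (swap_commute_of_mapsTo hω₁ hO hvO).symm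
    have hvt' : Commute v t' := (swap_commute_of_mapsTo hp₁ hO' hvO').symm
    have hvD₁ : ∀ e ∈ D₁, Commute v e := commute_closure_insert (hvt.mul_right hvt') h.comm
    have hvmem : v ∈ closure (insert t (D₁ : Set (Perm α))) := by
      refine (sqOne_closure_insert hD₁sq ht2 htcD₁).mem_of_commute (Y := ∅) (by simp [FixesOn])
        h.sq (commute_closure_insert hvt hvD₁) (by simp) (hlarge ?_)
      have h1 : 2 * Nat.card D ≤ Nat.card D₁ := two_mul_card_le_closure_insert hz
      have h2 := two_mul_card_le_closure_insert htD₁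
      omega
    have hdiag : ∀ e ∈ D, e ω = v ω → e p ≠ v p := by
      intro e he h1 h2
      apply hne
      have h3 : (d * e) ω = ω := by
        rw [Perm.mul_apply, h1, hvω, perm_sq_apply (hD d hd)]
      have h4 := (hfixiff _ (mul_mem hd he)).1 h3
      rw [Perm.mul_apply, h2, hvp] at h4
      conv_lhs => rw [← h4]
      rw [perm_sq_apply (hD d hd)]
    have hδz : ∀ s, s ∈ orb D ω ∨ s ∈ orb D p → δ ((t * t') s) = s := by
      intro s hs
      rw [hO, hO', Finset.mem_insert, Finset.mem_singleton, Finset.mem_insert,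
        Finset.mem_singleton] at hs
      rw [Perm.mul_apply]
      rcases hs with (rfl | rfl) | (rfl | rfl)
      · rw [htω', htω, hδω₁]
      · rw [htω₁', htω₁, hδω]
      · rw [htpp, htp₁, hδp₁]
      · rw [htpp₁, htp, hδp]
    rcases mem_or_of_mem_closure_insert ht2 htcD₁ hvmem with h1 | h1
    · rcases mem_or_of_mem_closure_insert hz2 hzc h1 with h2 | h2
      · exact hdiag v h2 rfl rfl
      · refine hdiag (δ * (t * t' * v)) (mul_mem h.mem h2) ?_ ?_
        · exact hδz _ (Or.inl (hvO ω (self_mem_orb _ _)))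
        · exact hδz _ (Or.inr (hvO' p (self_mem_orb _ _)))
    · rcases mem_or_of_mem_closure_insert hz2 hzc h1 with h2 | h2
      · have h4 := mul_mem (hDH h2) h.memH
        rw [mul_assoc, h.sq, mul_one] at h4
        exact hns ω ω₁ hω₁ h4
      · have h4 := mul_mem (hDH h2) h.memH
        rw [← mul_assoc, hzt, mul_assoc, h.sq, mul_one] at h4
        exact hns p p₁ hp₁ h4
  have hqω : q ω = ω₁ := by rw [h.left, hδω]
  have hqω₁ : q ω₁ = ω := by rw [← hqω, perm_sq_apply hq2]
  have hqp : q p = p₁ := by rw [h.right, hδp]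
  have hqp₁ : q p₁ = p := by rw [← hqp, perm_sq_apply hq2]
  obtain ⟨ω', hω'⟩ : ∃ ω', q ω' ≠ (t * t') ω' := by
    by_contra hcon
    push Not at hcon
    exact hq (by rw [Equiv.ext hcon]; exact hzD)
  have hω'ω : ω' ≠ ω := by
    rintro rfl
    exact hω' (by rw [hqω, Perm.mul_apply, htω', htω])
  have hω'ω₁ : ω' ≠ ω₁ := by
    rintro rfl
    exact hω' (by rw [hqω₁, Perm.mul_apply, htω₁', htω₁])
  have hω'p : ω' ≠ p := by
    rintro rfl
    exact hω' (by rw [hqp, Perm.mul_apply, htpp, htp₁])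
  have hω'p₁ : ω' ≠ p₁ := by
    rintro rfl
    exact hω' (by rw [hqp₁, Perm.mul_apply, htpp₁, htp])
  have hqω' : q ω' ≠ ω' := by
    rwa [Perm.mul_apply, ht', swap_apply_of_ne_of_ne hω'p hω'p₁, ht,
      swap_apply_of_ne_of_ne hω'ω hω'ω₁] at hω'
  obtain ⟨p', δ', v', h'⟩ := hdata ω'
    (fun hc => hqω' ((sq_mul_apply_eq_iff hx2 hy2 ω').2 hc))
  obtain ⟨ω₂, hω₂, hO₂⟩ := exists_orb_eq_pair h'.card
  have hω'O : ω' ∉ orb D ω := by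
    rw [hO, Finset.mem_insert, Finset.mem_singleton, not_or]
    exact ⟨hω'ω, hω'ω₁⟩
  have hωO₂ : ω' ∉ orb D p := by
    rw [hO', Finset.mem_insert, Finset.mem_singleton, not_or]
    exact ⟨hω'p, hω'p₁⟩
  have hqω₂ : q ω' = ω₂ := by
    have h1 := apply_mem_orb h'.mem (self_mem_orb D ω')
    rw [← h'.left, hO₂, Finset.mem_insert, Finset.mem_singleton] at h1
    exact h1.resolve_left hqω'
  set t₂ := swap ω' ω₂ with ht₂
  have ht₂2 : t₂ * t₂ = 1 := swap_mul_self _ _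
  have ht₂c : ∀ e ∈ D, Commute t₂ e := swap_commute_of_orb_eq_pair hω₂ hO₂
  have ht₂D : t₂ ∉ D := fun hm => hns ω' ω₂ hω₂ (hDH hm)
  have ht₂fix : ∀ s, s ∉ orb D ω' → t₂ s = s := by
    intro s hs
    rw [hO₂, Finset.mem_insert, Finset.mem_singleton, not_or] at hs
    exact swap_apply_of_ne_of_ne hs.1 hs.2
  have hdO := orb_disjoint hω'O
  have hdO' := orb_disjoint hωO₂
  have ht₂ω : t₂ ω = ω := ht₂fix _ (Finset.disjoint_left.1 hdO (by rw [hO]; simp))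
  have ht₂ω₁ : t₂ ω₁ = ω₁ := ht₂fix _ (Finset.disjoint_left.1 hdO (by rw [hO]; simp))
  have ht₂p : t₂ p = p := ht₂fix _ (Finset.disjoint_left.1 hdO' (by rw [hO']; simp))
  have ht₂p₁ : t₂ p₁ = p₁ := ht₂fix _ (Finset.disjoint_left.1 hdO' (by rw [hO']; simp))
  have htt₂ : Commute t t₂ := by
    refine swap_commute_of_mapsTo hω₁ hO fun s hs => ?_
    rw [ht₂fix s (Finset.disjoint_left.1 hdO hs)]
    exact hs
  -- an element of `D` cannot fix `ω` and move `p`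
  have hno : ∀ e ∈ D, e ω = ω → e p = p₁ → False := by
    intro e he h1 h2
    exact hp₁ (((hfixiff e he).1 h1).symm.trans h2)
  set D₁ := closure (insert t (D : Set (Perm α))) with hD₁
  have hD₁sq : SqOne D₁ := sqOne_closure_insert hD ht2 htc
  have ht₂D₁ : t₂ ∉ D₁ := by
    intro hm
    rcases mem_or_of_mem_closure_insert ht2 htc hm with h1 | h1
    · exact ht₂D h1
    · have h2 := (hfixiff _ h1).2 (by rw [Perm.mul_apply, ht₂p, htp])
      rw [Perm.mul_apply, ht₂ω, htω] at h2
      exact hω₁ h2.symm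
  have ht₂cD₁ : ∀ e ∈ D₁, Commute t₂ e := commute_closure_insert htt₂.symm ht₂c
  have hqt : Commute q t := (swap_commute_of_mapsTo hω₁ hO (mapsTo_orb hqc (by
    rw [hqω, hO]; simp))).symm
  have hqt₂ : Commute q t₂ := (swap_commute_of_mapsTo hω₂ hO₂ (mapsTo_orb hqc (by
    rw [hqω₂, hO₂]; simp))).symm
  have hqmem : q ∈ closure (insert t₂ (D₁ : Set (Perm α))) := by
    refine (sqOne_closure_insert hD₁sq ht₂2 ht₂cD₁).mem_of_commute (Y := ∅) (by simp [FixesOn])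
      hq2 (commute_closure_insert hqt₂ (commute_closure_insert hqt hqc)) (by simp) (hlarge ?_)
    have h1 : 2 * Nat.card D ≤ Nat.card D₁ := two_mul_card_le_closure_insert htD
    have h2 := two_mul_card_le_closure_insert ht₂D₁
    omega
  rcases mem_or_of_mem_closure_insert ht₂2 ht₂cD₁ hqmem with h1 | h1
  · rcases mem_or_of_mem_closure_insert ht2 htc h1 with h2 | h2
    · exact hq h2
    · exact hno _ h2 (by rw [Perm.mul_apply, hqω, htω₁]) (by rw [Perm.mul_apply, hqp, htp₁])
  · rcases mem_or_of_mem_closure_insert ht2 htc h1 with h2 | h2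
    · have hfix : (t₂ * q) ω' = ω' := by rw [Perm.mul_apply, hqω₂, ht₂, swap_apply_right]
      have hmem : t₂ * q ∈ stabIn D p' := by
        rw [h'.stab]; exact mem_stabIn.2 ⟨h2, hfix⟩
      have h3 := (mem_stabIn.1 hmem).2
      have hp'O : δ' p' ∉ orb D ω' := by
        intro hm
        have h4 := apply_mem_orb h'.mem hm
        rw [perm_sq_apply (hD δ' h'.mem)] at h4
        exact h'.notMem h4
      rw [Perm.mul_apply, h'.right, ht₂fix _ hp'O] at h3
      have h5 : δ' ∈ stabIn D ω' := by
        rw [← h'.stab]; exact mem_stabIn.2 ⟨h'.mem, h3⟩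
      exact h'.ne (mem_stabIn.1 h5).2
    · refine hno _ h2 ?_ ?_
      · rw [Perm.mul_apply, Perm.mul_apply, hqω, ht₂ω₁, htω₁]
      · rw [Perm.mul_apply, Perm.mul_apply, hqp, ht₂p₁, htp₁]

end PairEven

section Core

variable {α : Type*} [Fintype α] [DecidableEq α] {Θ : Finset α}

theorem IsCore.mem_iff {S : Set (Perm α)} {s : Perm α} (hs : s * s = 1)
    (hc : ∀ t ∈ S, Commute s t) (h : IsCore (closure (insert s S)) Θ) {ω : α} :
    ω ∈ Θ ↔ ∀ d ∈ closure S, d.support.card = 4 → d ω = ω := by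
  constructor
  · intro hω d hd hd4
    by_contra hne
    have h1 := h.moves d (closure_mono (Set.subset_insert _ _) hd) ω hω hne
    have h2 : Θ ⊆ d.support := fun θ hθ => Perm.mem_support.2 (h1 θ hθ)
    have h3 := Finset.card_le_card h2
    rw [h.card, hd4] at h3
    omega
  · intro hω
    by_contra hn
    obtain ⟨w, hw, w', hw', h1, h2, h3, h4, h5, h6⟩ := h.klein ω hn
    rcases mem_closure_insert_cases hs hc hw with hm | hm
    · exact h1 (hω w hm h4)
    · rcases mem_closure_insert_cases hs hc hw' with hm' | hm'
      · exact h2 (hω w' hm' h5)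
      · refine h3 (hω _ ?_ h6)
        have hsw : Commute s w := by
          refine commute_closure (S := insert s S) ?_ w hw
          rintro t (rfl | ht)
          · exact Commute.refl _
          · exact hc t ht
        have : w * w' = (s * w) * (s * w') := by
          rw [hsw.eq, mul_assoc w s, ← mul_assoc s s, hs, one_mul]
        rw [this]
        exact mul_mem hm hm'

theorem IsCore.apply_mem {D : Subgroup (Perm α)} (h : IsCore D Θ) {v : Perm α}
    (hv : ∀ d ∈ D, Commute v d) {ω : α} (hω : ω ∈ Θ) : v ω ∈ Θ := by
  by_contra hn
  obtain ⟨w, hw, -, -, h1, -, -, h4, -⟩ := h.klein _ hn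
  rw [← perm_comm_apply (hv w hw)] at h1
  have h2 : w ω ≠ ω := fun h => h1 (by rw [h])
  have h3 : Θ ⊆ w.support := fun θ hθ => Perm.mem_support.2 (h.moves w hw ω hω h2 θ hθ)
  have h5 := Finset.card_le_card h3
  rw [h.card, h4] at h5
  omega

end Core

/-- The even labels below `2 * i` together with the odd labels from `2 * i + 3` up to `2 * h`. -/
def staggeredLabels (h i : ℕ) : Finset ℕ :=
  (Finset.range (2 * h)).filter fun a => a % 2 = 0 ∧ a < 2 * i ∨ a % 2 = 1 ∧ 2 * i + 1 < a

theorem mem_staggeredLabels {h i a : ℕ} : a ∈ staggeredLabels h i ↔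
    a < 2 * h ∧ (a % 2 = 0 ∧ a < 2 * i ∨ a % 2 = 1 ∧ 2 * i + 1 < a) := by
  simp [staggeredLabels]

theorem le_card_staggeredLabels (h i : ℕ) : h ≤ (staggeredLabels h i).card + 1 := by
  have h1 : Finset.range h ⊆ insert i ((staggeredLabels h i).image (· / 2)) := by
    intro t ht
    rw [Finset.mem_range] at ht
    rw [Finset.mem_insert, Finset.mem_image]
    rcases lt_trichotomy t i with hl | hl | hl
    · exact Or.inr ⟨2 * t, mem_staggeredLabels.2 (by omega), by omega⟩
    · exact Or.inl hl
    · exact Or.inr ⟨2 * t + 1, mem_staggeredLabels.2 (by omega), by omega⟩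
  have h2 := Finset.card_le_card h1
  rw [Finset.card_range] at h2
  exact h2.trans ((Finset.card_insert_le _ _).trans (Nat.add_le_add_right Finset.card_image_le 1))

namespace IsIndepString

variable {α : Type*} [Fintype α] [DecidableEq α] {k : ℕ} {τ : ℕ → Perm α}

theorem two_mul_card_lt (h : IsIndepString k τ) (h7 : 7 ≤ Fintype.card α)
    (hprim : MulAction.IsPreprimitive (closure (Set.range τ)) α)
    (hns : ∀ a c : α, a ≠ c → swap a c ∉ closure (Set.range τ)) {T : Finset ℕ}
    (hTk : ∀ a ∈ T, a < k) (hT : ∀ a ∈ T, ∀ c ∈ T, Commute (τ a) (τ c)) :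
    2 * T.card < Fintype.card α := by
  by_contra hlt
  push Not at hlt
  refine full_contradiction (E := closure (τ '' (T : Set ℕ))) (h.sqOne hT) ?_ h7
    (fun a c hac hm => hns a c hac (closure_mono (Set.image_subset_range _ _) hm))
    (Set.range τ) ?_ ?_ rfl hprim
  · calc 2 ^ Fintype.card α ≤ 2 ^ (2 * T.card) := Nat.pow_le_pow_right (by norm_num) hlt
      _ = (2 ^ T.card) ^ 2 := by ring
      _ ≤ _ := by gcongr; exact h.two_pow_le_card T hTk
  · rintro _ ⟨a, rfl⟩; exact h.sq a
  · rintro _ ⟨a, rfl⟩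
    obtain ⟨C, hC1, hC2, hC3⟩ := h.exists_centralizing T hTk a
    exact ⟨C, hC1, hC2, (h.card_le_two_pow hT (by omega)).trans hC3⟩

theorem staggered_commute (h : IsIndepString k τ) {l i : ℕ} :
    ∀ a ∈ staggeredLabels l i, ∀ c ∈ staggeredLabels l i, Commute (τ a) (τ c) := by
  intro a ha c hc
  rw [mem_staggeredLabels] at ha hc
  exact h.commute (by omega) (by omega)

theorem exists_isCore_staggered (h : IsIndepString k τ) (heven : Even (Fintype.card α))
    (h7 : 7 ≤ Fintype.card α) (hprim : MulAction.IsPreprimitive (closure (Set.range τ)) α)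
    (hns : ∀ a c : α, a ≠ c → swap a c ∉ closure (Set.range τ)) {l i : ℕ} (hk : k = 2 * l)
    (hl : Fintype.card α = 2 * l + 2) (hi : i < l) :
    ∃ Θ, IsCore (closure (τ '' (staggeredLabels l i : Set ℕ))) Θ := by
  have hTk : ∀ a ∈ staggeredLabels l i, a < k := fun a ha => by
    rw [mem_staggeredLabels] at ha; omega
  have hc : ∀ v, v = 2 * i ∨ v = 2 * i + 1 →
      ∀ a ∈ staggeredLabels l i, Commute (τ v) (τ a) := by
    intro v hv a ha
    rw [mem_staggeredLabels] at ha
    exact h.commute (by omega) (by omega)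
  have hc' : ∀ v, v = 2 * i ∨ v = 2 * i + 1 →
      ∀ e ∈ closure (τ '' (staggeredLabels l i : Set ℕ)), Commute (τ v) e := by
    intro v hv
    apply commute_closure
    rintro _ ⟨a, ha, rfl⟩
    exact hc v hv a ha
  have hcard := le_card_staggeredLabels l i
  have hn1 : 2 * i + 1 ∉ staggeredLabels l i := by rw [mem_staggeredLabels]; omega
  have hn0 : 2 * i ∉ staggeredLabels l i := by rw [mem_staggeredLabels]; omega
  have hxy : ¬ Commute (τ (2 * i)) (τ (2 * i + 1)) := by
    intro hcom
    have h1 := h.two_mul_card_lt h7 hprim hns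
      (T := insert (2 * i) (insert (2 * i + 1) (staggeredLabels l i))) (by
        intro a ha
        simp only [Finset.mem_insert] at ha
        rcases ha with rfl | rfl | ha
        · omega
        · omega
        · exact hTk a ha) (by
        have := h.staggered_commute (l := l) (i := i)
        intro a ha c hc'
        simp only [Finset.mem_insert] at ha hc'
        rcases ha with rfl | rfl | ha <;> rcases hc' with rfl | rfl | hc'
        · exact Commute.refl _
        · exact hcom
        · exact hc _ (by simp) _ hc'
        · exact hcom.symm
        · exact Commute.refl _
        · exact hc _ (by simp) _ hc'
        · exact (hc _ (by simp) _ ha).symm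
        · exact (hc _ (by simp) _ ha).symm
        · exact this a ha c hc')
    rw [Finset.card_insert_of_notMem (by simp [hn0]), Finset.card_insert_of_notMem hn1] at h1
    omega
  refine exists_isCore_of_pair (h.sqOne h.staggered_commute)
    (closure_mono (Set.image_subset_range _ _)) hns (subset_closure ⟨2 * i, rfl⟩)
    (subset_closure ⟨2 * i + 1, rfl⟩) (h.sq _) (h.sq _) (hc' _ (by simp)) (hc' _ (by simp)) hxy
    heven ?_ (h.sq_mul_notMem hTk h.staggered_commute hn0 hn1 fun h1 => hxy ?_)
  · calc 2 ^ Fintype.card α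
        ≤ 2 ^ (4 + 2 * (staggeredLabels l i).card) := Nat.pow_le_pow_right (by norm_num) (by omega)
      _ = 16 * (2 ^ (staggeredLabels l i).card) ^ 2 := by ring
      _ ≤ _ := by gcongr; exact h.two_pow_le_card _ hTk
  · rw [pow_two, mul_eq_one_iff_eq_inv, mul_inv_rev] at h1
    rw [perm_inv_of_sq (h.sq _), perm_inv_of_sq (h.sq _)] at h1
    exact h1

theorem exists_swap_of_even (h : IsIndepString k τ)
    (heven : Even (Fintype.card α)) (h7 : 7 ≤ Fintype.card α) (hk : Fintype.card α ≤ k + 2)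
    (hprim : MulAction.IsPreprimitive (closure (Set.range τ)) α) :
    ∃ a c : α, a ≠ c ∧ swap a c ∈ closure (Set.range τ) := by
  by_contra hns
  push Not at hns
  obtain ⟨l, hkl, hl⟩ : ∃ l, k = 2 * l ∧ Fintype.card α = 2 * l + 2 := by
    have h1 := h.two_mul_card_lt h7 hprim hns
      (T := (Finset.range ((k + 1) / 2)).image (fun i => 2 * i)) (by
        intro a ha
        obtain ⟨i, hi, rfl⟩ := Finset.mem_image.1 ha
        rw [Finset.mem_range] at hi
        omega) (by
        intro a ha c hc
        obtain ⟨i, hi, rfl⟩ := Finset.mem_image.1 ha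
        obtain ⟨j, hj, rfl⟩ := Finset.mem_image.1 hc
        exact h.commute (by omega) (by omega))
    rw [Finset.card_image_of_injective _ (fun a c h => by simpa using h), Finset.card_range] at h1
    rw [Nat.even_iff] at heven
    exact ⟨k / 2, by omega, by omega⟩
  obtain ⟨Θ, hΘ⟩ := h.exists_isCore_staggered heven h7 hprim hns hkl hl (i := 0) (by omega)
  have hall : ∀ i < l, IsCore (closure (τ '' (staggeredLabels l i : Set ℕ))) Θ := by
    intro i
    induction i with
    | zero => exact fun _ => hΘ
    | succ i ih =>
      intro hi
      have hI := ih (by omega)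
      obtain ⟨Θ', hΘ'⟩ := h.exists_isCore_staggered heven h7 hprim hns hkl hl hi
      suffices Θ = Θ' by rwa [this]
      set P : Set ℕ := {a | a < 2 * l ∧ (a % 2 = 0 ∧ a < 2 * i ∨ a % 2 = 1 ∧ 2 * i + 3 < a)}
        with hP
      have e1 : (staggeredLabels l i : Set ℕ) = insert (2 * i + 3) P := by
        ext a
        simp only [Finset.mem_coe, mem_staggeredLabels, hP, Set.mem_insert_iff, Set.mem_ofPred_eq]
        omega
      have e2 : (staggeredLabels l (i + 1) : Set ℕ) = insert (2 * i) P := by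
        ext a
        simp only [Finset.mem_coe, mem_staggeredLabels, hP, Set.mem_insert_iff, Set.mem_ofPred_eq]
        omega
      rw [e1, Set.image_insert_eq] at hI
      have hΘ'' := hΘ'
      rw [e2, Set.image_insert_eq] at hΘ''
      ext ω
      rw [hI.mem_iff (h.sq _), hΘ''.mem_iff (h.sq _)]
      · rintro _ ⟨a, ⟨h1, h2⟩, rfl⟩
        exact h.commute (by omega) (by omega)
      · rintro _ ⟨a, ⟨h1, h2⟩, rfl⟩
        exact h.commute (by omega) (by omega)
  obtain ⟨x, hx⟩ : Θ.Nonempty := Finset.card_pos.1 (by rw [hΘ.card]; omega)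
  obtain ⟨y, hy⟩ : ∃ y, y ∉ Θ := by
    by_contra hcon
    push Not at hcon
    have := hΘ.card
    rw [Finset.eq_univ_iff_forall.2 hcon, Finset.card_univ] at this
    omega
  refine not_transitive_of_invariant (S := Set.range τ) (Y := Θ) ?_ ?_ ?_ hx hy
  · rintro _ ⟨a, rfl⟩; exact h.sq a
  · intro x y
    obtain ⟨g, hg⟩ := MulAction.exists_smul_eq (closure (Set.range τ)) x y
    exact ⟨g, g.2, hg⟩
  · rintro _ ⟨a, rfl⟩ ω hω
    by_cases hak : a < k
    · refine (hall (a / 2) (by omega)).apply_mem (commute_closure ?_) hω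
      rintro _ ⟨c, hc, rfl⟩
      rw [Finset.mem_coe, mem_staggeredLabels] at hc
      exact h.commute (by omega) (by omega)
    · rw [h.triv a (by omega)]; exact hω

theorem closure_range_eq_top (h : IsIndepString k τ) (h7 : 7 ≤ Fintype.card α)
    (hk : Fintype.card α ≤ k + 2)
    (hprim : MulAction.IsPreprimitive (closure (Set.range τ)) α) : closure (Set.range τ) = ⊤ := by
  obtain ⟨a, c, hac, hs⟩ : ∃ a c : α, a ≠ c ∧ swap a c ∈ closure (Set.range τ) := by
    rcases Nat.even_or_odd (Fintype.card α) with he | ho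
    · exact h.exists_swap_of_even he h7 hk hprim
    · refine h.exists_swap_of_odd ho h7 hk fun x y => ?_
      obtain ⟨g, hg⟩ := MulAction.exists_smul_eq (closure (Set.range τ)) x y
      exact ⟨g, g.2, hg⟩
  exact Perm.subgroup_eq_top_of_isPreprimitive_of_isSwap_mem hprim _ ⟨a, c, hac, rfl⟩ hs

end IsIndepString

section Family

variable {Y : Type*} [DecidableEq Y]

/-- A family of subsets closed under symmetric differences and permutations of the points. -/
structure IsFlipFamily (𝒦 : Set (Finset Y)) : Prop where
  symmDiff : ∀ A ∈ 𝒦, ∀ B ∈ 𝒦, A ∆ B ∈ 𝒦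
  map : ∀ A ∈ 𝒦, ∀ p : Perm Y, A.map p.toEmbedding ∈ 𝒦

theorem symmDiff_map_swap {A : Finset Y} {x y : Y} (hx : x ∈ A) (hy : y ∉ A) :
    A ∆ A.map (swap x y).toEmbedding = {x, y} := by
  ext z
  rw [Finset.mem_symmDiff, Finset.mem_map_equiv, symm_swap, Finset.mem_insert,
    Finset.mem_singleton]
  by_cases hzx : z = x
  · subst hzx; simp [hx, hy]
  · by_cases hzy : z = y
    · subst hzy; simp [hx, hy]
    · rw [swap_apply_of_ne_of_ne hzx hzy]
      simp [hzx, hzy]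

theorem Finset.card_symmDiff_mod_two (A B : Finset Y) :
    (A ∆ B).card % 2 = (A.card + B.card) % 2 := by
  have h1 : A ∆ B = A \ B ∪ B \ A := rfl
  have h2 := Finset.card_sdiff_add_card_inter A B
  have h3 := Finset.card_sdiff_add_card_inter B A
  rw [h1, Finset.card_union_of_disjoint disjoint_sdiff_sdiff]
  rw [Finset.inter_comm B A] at h3
  omega

namespace IsFlipFamily

variable {𝒦 : Set (Finset Y)}

theorem pair_mem (h : IsFlipFamily 𝒦) {A : Finset Y} (hA : A ∈ 𝒦) {x y : Y} (hx : x ∈ A)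
    (hy : y ∉ A) {u v : Y} (huv : u ≠ v) : ({u, v} : Finset Y) ∈ 𝒦 := by
  have hxy : x ≠ y := fun e => hy (e ▸ hx)
  have h1 := h.symmDiff _ hA _ (h.map _ hA (swap x y))
  rw [symmDiff_map_swap hx hy] at h1
  have h2 := h.map _ (h.map _ h1 (swap x u)) (swap (swap x u y) v)
  convert h2 using 1
  have h3 : u ≠ swap x u y := by
    intro e
    rw [eq_comm, ← Equiv.eq_symm_apply, symm_swap, swap_apply_right] at e
    exact hxy e.symm
  simp [swap_apply_of_ne_of_ne h3 huv]

theorem even_mem (h : IsFlipFamily 𝒦) {A : Finset Y} (hA : A ∈ 𝒦) {x y : Y} (hx : x ∈ A)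
    (hy : y ∉ A) {B : Finset Y} (hB : Even B.card) : B ∈ 𝒦 := by
  induction hn : B.card using Nat.strong_induction_on generalizing B with
  | _ n ih =>
    rcases Finset.eq_empty_or_nonempty B with rfl | hne
    · simpa using h.symmDiff _ hA _ hA
    · have h1 : 1 < B.card := by
        have := Finset.card_pos.2 hne
        rw [Nat.even_iff] at hB
        omega
      obtain ⟨u, hu, v, hv, huv⟩ := Finset.one_lt_card.1 h1
      have hsub : ({u, v} : Finset Y) ⊆ B := by
        intro z hz
        rw [Finset.mem_insert, Finset.mem_singleton] at hz
        rcases hz with rfl | rfl <;> assumption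
      have h2 : (B \ {u, v}).card = n - 2 := by
        rw [Finset.card_sdiff_of_subset hsub, Finset.card_pair huv, hn]
      have h3 := ih (n - 2) (by omega) (B := B \ {u, v}) (by
        rw [h2]; rw [hn] at hB; rw [Nat.even_iff] at hB ⊢; omega) h2
      have h4 := h.symmDiff _ h3 _ (h.pair_mem hA hx hy huv)
      rwa [disjoint_sdiff_self_left.symmDiff_eq_sup, Finset.sup_eq_union,
        Finset.sdiff_union_of_subset hsub] at h4

theorem mem_of_odd_mem (h : IsFlipFamily 𝒦) {A : Finset Y} (hA : A ∈ 𝒦) {x y : Y} (hx : x ∈ A)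
    (hy : y ∉ A) {O : Finset Y} (hO : O ∈ 𝒦) (hodd : Odd O.card) (B : Finset Y) : B ∈ 𝒦 := by
  rcases Nat.even_or_odd B.card with hB | hB
  · exact h.even_mem hA hx hy hB
  · have h1 : B ∆ O ∈ 𝒦 := by
      refine h.even_mem hA hx hy ?_
      rw [Nat.even_iff, Finset.card_symmDiff_mod_two]
      rw [Nat.odd_iff] at hB hodd
      omega
    simpa using h.symmDiff _ h1 _ hO

end IsFlipFamily

end Family

section Flip

variable {X Y : Type*}

/-- `ι` exchanges the two points of each fiber of `b`. -/
structure IsFlip (b : X → Y) (ι : Perm X) : Prop where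
  ne : ∀ x, ι x ≠ x
  map : ∀ x, b (ι x) = b x
  eq_or : ∀ x y, b x = b y → y = x ∨ y = ι x

variable {b : X → Y} {ι : Perm X}

theorem IsFlip.apply_apply (h : IsFlip b ι) (x : X) : ι (ι x) = x := by
  rcases h.eq_or x (ι (ι x)) (by rw [h.map, h.map]) with h1 | h1
  · exact h1
  · exact absurd h1 (h.ne _)

theorem IsFlip.sq (h : IsFlip b ι) : ι * ι = 1 := Equiv.ext h.apply_apply

theorem IsFlip.comm_apply (h : IsFlip b ι) {σ : Perm X} {p : Perm Y}
    (hσ : ∀ x, b (σ x) = p (b x)) (x : X) : σ (ι x) = ι (σ x) := by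
  rcases h.eq_or (σ x) (σ (ι x)) (by rw [hσ, hσ, h.map]) with h1 | h1
  · exact absurd (σ.injective h1) (h.ne _)
  · exact h1

theorem exists_isFlip [Fintype X] (hfib : ∀ c : Y, Set.ncard {x | b x = c} = 2) :
    ∃ ι : Perm X, IsFlip b ι := by
  have hex : ∀ x, ∃ y, y ≠ x ∧ b y = b x ∧ ∀ z, b x = b z → z = x ∨ z = y := by
    intro x
    obtain ⟨u, v, huv, he⟩ := Set.ncard_eq_two.1 (hfib (b x))
    have hm : ∀ z, b z = b x ↔ z = u ∨ z = v := by
      intro z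
      have : z ∈ {z | b z = b x} ↔ z ∈ ({u, v} : Set X) := by rw [he]
      simpa using this
    rcases (hm x).1 rfl with rfl | rfl
    · exact ⟨v, huv.symm, (hm v).2 (Or.inr rfl), fun z hz => (hm z).1 hz.symm⟩
    · exact ⟨u, huv, (hm u).2 (Or.inl rfl), fun z hz => ((hm z).1 hz.symm).symm⟩
  choose f hf1 hf2 hf3 using hex
  have hinv : Function.Involutive f := by
    intro x
    rcases hf3 x (f (f x)) (by rw [hf2, hf2]) with h | h
    · exact h
    · exact absurd h (hf1 _)
  exact ⟨hinv.toPerm, hf1, hf2, hf3⟩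

variable [DecidableEq Y]

/-- The permutation exchanging the two points of each fiber over a point of `A`. -/
def IsFlip.flipOn (h : IsFlip b ι) (A : Finset Y) : Perm X :=
  Function.Involutive.toPerm (fun x => if b x ∈ A then ι x else x) (by
    intro x
    by_cases hx : b x ∈ A <;> simp [hx, h.map, h.apply_apply])

namespace IsFlip

theorem flipOn_apply (h : IsFlip b ι) (A : Finset Y) (x : X) :
    h.flipOn A x = if b x ∈ A then ι x else x := rfl

theorem flipOn_empty (h : IsFlip b ι) : h.flipOn ∅ = 1 := by
  ext x
  simp [flipOn_apply]

theorem flipOn_univ [Fintype Y] (h : IsFlip b ι) : h.flipOn Finset.univ = ι := by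
  ext x
  simp [flipOn_apply]

theorem flipOn_mul (h : IsFlip b ι) (A B : Finset Y) :
    h.flipOn A * h.flipOn B = h.flipOn (A ∆ B) := by
  ext x
  simp only [Perm.mul_apply, flipOn_apply, Finset.mem_symmDiff]
  by_cases hA : b x ∈ A <;> by_cases hB : b x ∈ B <;> simp [hA, hB, h.apply_apply, h.map]

theorem conj_flipOn (h : IsFlip b ι) {σ : Perm X} {p : Perm Y} (hσ : ∀ x, b (σ x) = p (b x))
    (A : Finset Y) : σ * h.flipOn A * σ⁻¹ = h.flipOn (A.map p.toEmbedding) := by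
  rw [mul_inv_eq_iff_eq_mul]
  ext x
  have hmem : b (σ x) ∈ A.map p.toEmbedding ↔ b x ∈ A := by
    rw [hσ, Finset.mem_map_equiv, Equiv.symm_apply_apply]
  simp only [Perm.mul_apply, flipOn_apply, hmem]
  split_ifs
  · exact h.comm_apply hσ x
  · rfl

theorem flipOn_injective (h : IsFlip b ι) (hb : Function.Surjective b) :
    Function.Injective h.flipOn := by
  intro A B hAB
  ext y
  obtain ⟨x, rfl⟩ := hb y
  have h1 : h.flipOn A x = h.flipOn B x := by rw [hAB]
  rw [flipOn_apply, flipOn_apply] at h1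
  have h2 := h.ne x
  split_ifs at h1 with hA hB hB
  · simp [hA, hB]
  · exact absurd h1 h2
  · exact absurd h1.symm h2
  · simp [hA, hB]

theorem exists_flipOn [Fintype Y] (h : IsFlip b ι) {σ : Perm X} (hσ : ∀ x, b (σ x) = b x) :
    ∃ A, σ = h.flipOn A := by
  classical
  refine ⟨Finset.univ.filter fun y => ∃ x, b x = y ∧ σ x ≠ x, ?_⟩
  ext x
  rw [flipOn_apply]
  simp only [Finset.mem_filter, Finset.mem_univ, true_and]
  split_ifs with h1
  · obtain ⟨z, hz, hne⟩ := h1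
    have h2 : σ z = ι z := (h.eq_or z (σ z) (hσ z).symm).resolve_left hne
    rcases h.eq_or z x hz with rfl | rfl
    · exact h2
    · rw [h.comm_apply (p := 1) (by simpa using hσ), h2]
  · by_contra hne
    exact h1 ⟨x, rfl, hne⟩

end IsFlip

end Flip

section Perm

variable {Y : Type*} [DecidableEq Y]

theorem perm_eq_one_of_forall_commute [Fintype Y] (h3 : 3 ≤ Fintype.card Y) {p : Perm Y}
    (hp : ∀ q : Perm Y, Commute p q) : p = 1 := by
  ext x
  by_contra hne
  rw [Perm.one_apply] at hne
  obtain ⟨w, hw⟩ : ∃ w, w ∉ ({x, p x} : Finset Y) := by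
    by_contra hcon
    push Not at hcon
    have h1 : (Finset.univ : Finset Y).card ≤ ({x, p x} : Finset Y).card :=
      Finset.card_le_card fun z _ => hcon z
    rw [Finset.card_univ] at h1
    have h2 : ({x, p x} : Finset Y).card ≤ 2 := Finset.card_le_two
    omega
  simp only [Finset.mem_insert, Finset.mem_singleton, not_or] at hw
  have h1 := perm_comm_apply (hp (swap (p x) w)) x
  rw [swap_apply_of_ne_of_ne (Ne.symm hne) (Ne.symm hw.1), swap_apply_left] at h1
  exact hw.2 h1.symm

/-- The symmetric group is not a product of two nontrivial commuting subgroups. -/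
theorem eq_bot_or_eq_bot_of_commute [Fintype Y] (h3 : 3 ≤ Fintype.card Y) {A B : Subgroup (Perm Y)}
    (hc : ∀ a ∈ A, ∀ c ∈ B, Commute a c) (htop : A ⊔ B = ⊤) : A = ⊥ ∨ B = ⊥ := by
  have hprod : ∀ q : Perm Y, ∃ a ∈ A, ∃ c ∈ B, a * c = q := by
    intro q
    have hq : q ∈ A ⊔ B := by rw [htop]; trivial
    rw [sup_eq_closure] at hq
    induction hq using Subgroup.closure_induction with
    | mem q hq =>
      rcases hq with hq | hq
      · exact ⟨q, hq, 1, one_mem _, mul_one _⟩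
      · exact ⟨1, one_mem _, q, hq, one_mul _⟩
    | one => exact ⟨1, one_mem _, 1, one_mem _, one_mul _⟩
    | mul q q' _ _ h h' =>
      obtain ⟨a, ha, c, hc1, rfl⟩ := h
      obtain ⟨a', ha', c', hc', rfl⟩ := h'
      refine ⟨a * a', mul_mem ha ha', c * c', mul_mem hc1 hc', ?_⟩
      rw [mul_assoc a c, ← mul_assoc c a', ← (hc a' ha' c hc1).eq]
      simp only [mul_assoc]
    | inv q _ h =>
      obtain ⟨a, ha, c, hc1, rfl⟩ := h
      exact ⟨a⁻¹, inv_mem ha, c⁻¹, inv_mem hc1, by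
        rw [mul_inv_rev]; exact (hc _ (inv_mem ha) _ (inv_mem hc1)).eq⟩
  have key : ∀ A B : Subgroup (Perm Y), (∀ a ∈ A, ∀ c ∈ B, Commute a c) →
      (∀ q : Perm Y, ∃ a ∈ A, ∃ c ∈ B, a * c = q) → ∀ x y : Y, x ≠ y → ∀ a ∈ A, ∀ c ∈ B,
      a * c = swap x y → c x = x → B = ⊥ := by
    intro A B hc hprod x y hxy a ha c hc1 hac hcx
    have hnorm : ∀ q : Perm Y, ∀ a ∈ A, q * a * q⁻¹ ∈ A := by
      intro q a ha
      obtain ⟨a', ha', c', hc', rfl⟩ := hprod q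
      have : a' * c' * a * (a' * c')⁻¹ = a' * a * a'⁻¹ := by
        rw [mul_assoc a' c', ← (hc a ha c' hc').eq]; group
      rw [this]
      exact mul_mem (mul_mem ha' ha) (inv_mem ha')
    have hax : a x = y := by
      have : (a * c) x = y := by rw [hac, swap_apply_left]
      rwa [Perm.mul_apply, hcx] at this
    have hcy : c y = y := by rw [← hax, ← perm_comm_apply (hc a ha c hc1), hcx]
    have hc1' : c = 1 := by
      ext w
      rw [Perm.one_apply]
      by_cases hwx : w = x
      · rw [hwx, hcx]
      by_cases hwy : w = y
      · rw [hwy, hcy]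
      have h1 := hnorm (swap y w) a ha
      have h2 : (swap y w * a * (swap y w)⁻¹) x = w := by
        rw [swap_inv, Perm.mul_apply, Perm.mul_apply, swap_apply_of_ne_of_ne hxy (Ne.symm hwx),
          hax, swap_apply_left]
      have h3 := perm_comm_apply (hc _ h1 c hc1) x
      rw [hcx, h2] at h3
      exact h3.symm
    rw [hc1', mul_one] at hac
    have hAtop : A = ⊤ := by
      rw [eq_top_iff, ← Perm.closure_isSwap, closure_le]
      rintro _ ⟨u, v, huv, rfl⟩
      have h1 := hnorm (swap (swap x u y) v * swap x u) _ (hac ▸ ha)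
      have h2 : u ≠ swap x u y := by
        intro e
        rw [eq_comm, ← Equiv.eq_symm_apply, symm_swap, swap_apply_right] at e
        exact hxy e.symm
      rw [← swap_apply_apply, Perm.mul_apply, Perm.mul_apply, swap_apply_left,
        swap_apply_left, swap_apply_of_ne_of_ne h2 huv] at h1
      exact h1
    rw [eq_bot_iff]
    intro c hc'
    rw [mem_bot]
    exact perm_eq_one_of_forall_commute h3 fun q => (hc q (by rw [hAtop]; trivial) c hc').symm
  obtain ⟨x, y, hxy⟩ : ∃ x y : Y, x ≠ y := Fintype.exists_pair_of_one_lt_card (by omega)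
  obtain ⟨a, ha, c, hc1, hac⟩ := hprod (swap x y)
  have hct : Commute c (swap x y) := by
    rw [← hac]
    exact (hc a ha c hc1).symm.mul_right (Commute.refl _)
  by_cases hcx : c x = x
  · exact Or.inr (key A B hc hprod x y hxy a ha c hc1 hac hcx)
  · left
    have hcx' : c x = y := by
      by_contra hcy
      have h1 := perm_comm_apply hct x
      rw [swap_apply_left, swap_apply_of_ne_of_ne hcx hcy] at h1
      exact hxy (c.injective h1).symm
    have hcy : c y = x := by
      have h1 := perm_comm_apply hct x
      rwa [swap_apply_left, hcx', swap_apply_right] at h1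
    refine key B A (fun c hc' a ha => (hc a ha c hc').symm) (fun q => ?_) x y hxy c hc1 a ha
      (by rw [← (hc a ha c hc1).eq, hac]) ?_
    · obtain ⟨a, ha, c, hc', rfl⟩ := hprod q
      exact ⟨c, hc', a, ha, (hc a ha c hc').eq.symm⟩
    · have : (a * c) y = x := by rw [hac, swap_apply_right]
      rwa [Perm.mul_apply, hcy] at this

end Perm

section Cover

variable {X Y I : Type*} {ρ : I → Perm X} {b : X → Y} {π : I → Perm Y}

theorem cover_inv {σ : Perm X} {p : Perm Y} (h : ∀ x, b (σ x) = p (b x)) (x : X) :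
    b (σ⁻¹ x) = p⁻¹ (b x) := by
  rw [Perm.eq_inv_iff_eq, ← h]
  simp

theorem cover_mul {σ σ' : Perm X} {p p' : Perm Y} (h : ∀ x, b (σ x) = p (b x))
    (h' : ∀ x, b (σ' x) = p' (b x)) (x : X) : b ((σ * σ') x) = (p * p') (b x) := by
  rw [Perm.mul_apply, h, h', Perm.mul_apply]

theorem exists_cover (hπ : ∀ l x, b (ρ l x) = π l (b x)) {J : Set I} {g : Perm X}
    (hg : g ∈ closure (ρ '' J)) : ∃ p ∈ closure (π '' J), ∀ x, b (g x) = p (b x) := by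
  induction hg using Subgroup.closure_induction with
  | mem g hg =>
    obtain ⟨l, hl, rfl⟩ := hg
    exact ⟨π l, subset_closure ⟨l, hl, rfl⟩, hπ l⟩
  | one => exact ⟨1, one_mem _, fun x => rfl⟩
  | mul g g' _ _ h h' =>
    obtain ⟨p, hp, h⟩ := h
    obtain ⟨p', hp', h'⟩ := h'
    exact ⟨p * p', mul_mem hp hp', cover_mul h h'⟩
  | inv g _ h =>
    obtain ⟨p, hp, h⟩ := h
    exact ⟨p⁻¹, inv_mem hp, cover_inv h⟩

theorem exists_lift (hπ : ∀ l x, b (ρ l x) = π l (b x)) {J : Set I} {p : Perm Y}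
    (hp : p ∈ closure (π '' J)) : ∃ g ∈ closure (ρ '' J), ∀ x, b (g x) = p (b x) := by
  induction hp using Subgroup.closure_induction with
  | mem p hp =>
    obtain ⟨l, hl, rfl⟩ := hp
    exact ⟨ρ l, subset_closure ⟨l, hl, rfl⟩, hπ l⟩
  | one => exact ⟨1, one_mem _, fun x => rfl⟩
  | mul p p' _ _ h h' =>
    obtain ⟨g, hg, h⟩ := h
    obtain ⟨g', hg', h'⟩ := h'
    exact ⟨g * g', mul_mem hg hg', cover_mul h h'⟩
  | inv p _ h =>
    obtain ⟨g, hg, h⟩ := h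
    exact ⟨g⁻¹, inv_mem hg, cover_inv h⟩

end Cover

/-- Generators `ρ` with the intersection property that permute the fibers of `b` as `π`, where
`ι` exchanges the two points of each fiber and `π '' L` generates the symmetric group. -/
structure FlipSystem {X Y I : Type*} (ρ : I → Perm X) (b : X → Y) (ι : Perm X) (π : I → Perm Y)
    (L : Set I) : Prop where
  flip : IsFlip b ι
  surj : Function.Surjective b
  cover : ∀ l x, b (ρ l x) = π l (b x)
  ne_one : ∀ l, ρ l ≠ 1
  inter : ∀ J K : Set I, closure (ρ '' J) ⊓ closure (ρ '' K) = closure (ρ '' (J ∩ K))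
  top : closure (π '' L) = ⊤

namespace FlipSystem

variable {X Y I : Type*} {ρ : I → Perm X} {b : X → Y} {ι : Perm X} {π : I → Perm Y} {L : Set I}
  {s t : I}

theorem exists_lift_mem (h : FlipSystem ρ b ι π L) (p : Perm Y) :
    ∃ g ∈ closure (ρ '' L), ∀ x, b (g x) = p (b x) :=
  exists_lift h.cover (by rw [h.top]; trivial)

theorem notMem (h : FlipSystem ρ b ι π L) {J : Set I} {i : I} (hi : i ∉ J) :
    ρ i ∉ closure (ρ '' J) := by
  intro hm
  have h1 : ρ i ∈ closure (ρ '' {i}) ⊓ closure (ρ '' J) :=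
    ⟨subset_closure ⟨i, rfl, rfl⟩, hm⟩
  rw [h.inter, Set.singleton_inter_eq_empty.2 hi, Set.image_empty, Subgroup.closure_empty,
    mem_bot] at h1
  exact h.ne_one i h1

theorem commute_flip (h : FlipSystem ρ b ι π L) (i : I) : Commute ι (ρ i) :=
  Equiv.ext fun x => (h.flip.comm_apply (h.cover i) x).symm

theorem commute_flip_of_mem (h : FlipSystem ρ b ι π L) {J : Set I} {g : Perm X}
    (hg : g ∈ closure (ρ '' J)) : Commute ι g := by
  refine commute_closure ?_ g hg
  rintro _ ⟨i, _, rfl⟩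
  exact h.commute_flip i

theorem mem_of_mem_insert (h : FlipSystem ρ b ι π L) {i j : I} (hij : i ≠ j) {g : Perm X}
    (hi : g ∈ closure (ρ '' insert i L)) (hj : g ∈ closure (ρ '' insert j L)) (hjL : j ∉ L) :
    g ∈ closure (ρ '' L) := by
  have h1 : insert i L ∩ insert j L = L := by
    ext x
    simp only [Set.mem_inter_iff, Set.mem_insert_iff]
    constructor
    · rintro ⟨rfl | hx, rfl | hx'⟩
      · exact absurd rfl hij
      · exact hx'
      · exact hx
      · exact hx
    · exact fun hx => ⟨Or.inr hx, Or.inr hx⟩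
  have h2 : g ∈ closure (ρ '' insert i L) ⊓ closure (ρ '' insert j L) := ⟨hi, hj⟩
  rwa [h.inter, h1] at h2

theorem flip_notMem (h : FlipSystem ρ b ι π L) (hst : s ≠ t) (ht : t ∉ L)
    (hs : ∃ g ∈ closure (ρ '' L), ρ s = ι * g) (hι : ι ∉ closure (ρ '' L)) :
    ι ∉ closure (ρ '' insert t L) := by
  intro hm
  obtain ⟨g, hg, he⟩ := hs
  refine hι (h.mem_of_mem_insert hst ?_ hm ht)
  rw [eq_mul_inv_of_mul_eq he.symm]
  exact mul_mem (subset_closure ⟨s, Set.mem_insert _ _, rfl⟩)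
    (inv_mem (closure_mono (Set.image_mono (Set.subset_insert _ _)) hg))

variable [DecidableEq Y]

theorem isFlipFamily (h : FlipSystem ρ b ι π L) {J : Set I} (hJ : L ⊆ J) :
    IsFlipFamily {A | h.flip.flipOn A ∈ closure (ρ '' J)} where
  symmDiff A hA B hB := by
    rw [Set.mem_ofPred_eq] at *
    rw [← h.flip.flipOn_mul]
    exact mul_mem hA hB
  map A hA p := by
    rw [Set.mem_ofPred_eq] at *
    obtain ⟨g, hg, hgp⟩ := h.exists_lift_mem p
    have hg' : g ∈ closure (ρ '' J) := closure_mono (Set.image_mono hJ) hg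
    rw [← h.flip.conj_flipOn hgp]
    exact mul_mem (mul_mem hg' hA) (inv_mem hg')

variable [Fintype Y]

theorem exists_eq_flipOn_mul (h : FlipSystem ρ b ι π L) {σ : Perm X} {p : Perm Y}
    (hσ : ∀ x, b (σ x) = p (b x)) : ∃ A, ∃ g ∈ closure (ρ '' L), σ = h.flip.flipOn A * g := by
  obtain ⟨g, hg, hgp⟩ := h.exists_lift_mem p
  obtain ⟨A, hA⟩ := h.flip.exists_flipOn (σ := σ * g⁻¹) (fun x => by
    rw [cover_mul hσ (cover_inv hgp), mul_inv_cancel, Perm.one_apply])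
  exact ⟨A, g, hg, by rw [← hA, inv_mul_cancel_right]⟩

/-- For one of the two labels outside `L`, the generator is `ι` times an element of the group of
`L`; for the other one, the groups of `L` differ by a nontrivial partial flip. -/
theorem exists_flip_label (h : FlipSystem ρ b ι π L) {i j : I} (hij : i ≠ j) (hi : i ∉ L)
    (hj : j ∉ L) : ∃ s t, (s = i ∧ t = j ∨ s = j ∧ t = i) ∧
      (∃ g ∈ closure (ρ '' L), ρ s = ι * g) ∧ ι ∉ closure (ρ '' L) ∧
      ∃ A, A ≠ Finset.univ ∧ A ≠ ∅ ∧ h.flip.flipOn A ∈ closure (ρ '' insert t L) ∧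
        h.flip.flipOn A ∉ closure (ρ '' L) := by
  have hex : ∀ s ∉ L, ∃ A, ∃ g ∈ closure (ρ '' L), ρ s = h.flip.flipOn A * g ∧ A ≠ ∅ ∧
      h.flip.flipOn A ∈ closure (ρ '' insert s L) ∧ h.flip.flipOn A ∉ closure (ρ '' L) := by
    intro s hs
    obtain ⟨A, g, hg, he⟩ := h.exists_eq_flipOn_mul (h.cover s)
    have hn : h.flip.flipOn A ∉ closure (ρ '' L) := by
      intro hm
      refine h.notMem hs ?_
      rw [he]
      exact mul_mem hm hg
    refine ⟨A, g, hg, he, ?_, ?_, hn⟩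
    · rintro rfl
      rw [h.flip.flipOn_empty] at hn
      exact hn (one_mem _)
    · rw [eq_mul_inv_of_mul_eq he.symm]
      exact mul_mem (subset_closure ⟨s, Set.mem_insert _ _, rfl⟩)
        (inv_mem (closure_mono (Set.image_mono (Set.subset_insert _ _)) hg))
  obtain ⟨A, g, hg, he, hA0, hA, hAL⟩ := hex i hi
  obtain ⟨B, g', hg', he', hB0, hB, hBL⟩ := hex j hj
  by_cases hAu : A = Finset.univ
  · subst hAu
    by_cases hBu : B = Finset.univ
    · subst hBu
      exact absurd (h.mem_of_mem_insert hij hA hB hj) hAL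
    · rw [h.flip.flipOn_univ] at he hAL
      exact ⟨i, j, Or.inl ⟨rfl, rfl⟩, ⟨g, hg, he⟩, hAL, B, hBu, hB0, hB, hBL⟩
  · by_cases hBu : B = Finset.univ
    · subst hBu
      rw [h.flip.flipOn_univ] at he' hBL
      exact ⟨j, i, Or.inr ⟨rfl, rfl⟩, ⟨g', hg', he'⟩, hBL, A, hAu, hA0, hA, hAL⟩
    · exfalso
      obtain ⟨a, ha⟩ := Finset.nonempty_iff_ne_empty.2 hA0
      obtain ⟨c, hc⟩ := Finset.nonempty_iff_ne_empty.2 hB0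
      obtain ⟨a', ha'⟩ : ∃ y, y ∉ A := by simpa [Finset.eq_univ_iff_forall] using hAu
      obtain ⟨c', hc'⟩ : ∃ y, y ∉ B := by simpa [Finset.eq_univ_iff_forall] using hBu
      have hFi := h.isFlipFamily (Set.subset_insert i L)
      have hFj := h.isFlipFamily (Set.subset_insert j L)
      have hodd : Odd A.card := by
        by_contra hev
        rw [Nat.not_odd_iff_even] at hev
        exact hAL (h.mem_of_mem_insert hij hA (hFj.even_mem hB hc hc' hev) hj)
      exact hBL (h.mem_of_mem_insert hij (hFi.mem_of_odd_mem hA ha ha' hA hodd B) hB hj)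

variable {A : Finset Y}

theorem structure_of_flip (h : FlipSystem ρ b ι π L) (hst : s ≠ t) (ht : t ∉ L)
    (hs : ∃ g ∈ closure (ρ '' L), ρ s = ι * g) (hι : ι ∉ closure (ρ '' L))
    (hAu : A ≠ Finset.univ) (hA0 : A ≠ ∅) (hA : h.flip.flipOn A ∈ closure (ρ '' insert t L))
    (hAL : h.flip.flipOn A ∉ closure (ρ '' L)) :
    Odd (Fintype.card Y) ∧ (∀ B, h.flip.flipOn B ∈ closure (ρ '' L) → B = ∅) ∧
      ∀ B, h.flip.flipOn B ∈ closure (Set.range ρ) := by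
  obtain ⟨a, ha⟩ := Finset.nonempty_iff_ne_empty.2 hA0
  obtain ⟨a', ha'⟩ : ∃ y, y ∉ A := by simpa [Finset.eq_univ_iff_forall] using hAu
  have hιt := h.flip_notMem hst ht hs hι
  have hF := h.isFlipFamily (Set.subset_insert t L)
  have heven : Even A.card := by
    by_contra hodd
    rw [Nat.not_even_iff_odd] at hodd
    have h1 : h.flip.flipOn Finset.univ ∈ closure (ρ '' insert t L) :=
      hF.mem_of_odd_mem hA ha ha' hA hodd Finset.univ
    rw [h.flip.flipOn_univ] at h1
    exact hιt h1
  have hodd : Odd (Fintype.card Y) := by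
    by_contra hev
    rw [Nat.not_odd_iff_even, ← Finset.card_univ] at hev
    have h1 : h.flip.flipOn Finset.univ ∈ closure (ρ '' insert t L) :=
      hF.even_mem hA ha ha' hev
    rw [h.flip.flipOn_univ] at h1
    exact hιt h1
  have hle : ∀ J, closure (ρ '' J) ≤ closure (Set.range ρ) := fun J =>
    closure_mono (Set.image_subset_range _ _)
  refine ⟨hodd, fun B hB => ?_, fun B => ?_⟩
  · by_contra hB0
    by_cases hBu : B = Finset.univ
    · rw [hBu, h.flip.flipOn_univ] at hB
      exact hι hB
    · obtain ⟨c, hc⟩ := Finset.nonempty_iff_ne_empty.2 hB0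
      obtain ⟨c', hc'⟩ : ∃ y, y ∉ B := by simpa [Finset.eq_univ_iff_forall] using hBu
      exact hAL ((h.isFlipFamily subset_rfl).even_mem hB hc hc' heven)
  · obtain ⟨g, hg, he⟩ := hs
    have hu : h.flip.flipOn Finset.univ ∈ closure (ρ '' Set.univ) := by
      rw [h.flip.flipOn_univ, eq_mul_inv_of_mul_eq he.symm, Set.image_univ]
      exact mul_mem (subset_closure ⟨s, rfl⟩) (inv_mem (hle _ hg))
    rw [← Set.image_univ]
    refine (h.isFlipFamily (Set.subset_univ L)).mem_of_odd_mem (A := A) ?_ ha ha' hu hodd B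
    rw [Set.mem_ofPred_eq, Set.image_univ]
    exact hle _ hA

theorem not_forall_commute (h : FlipSystem ρ b ι π L) (h3 : 3 ≤ Fintype.card Y)
    (hι : ι ∉ closure (ρ '' insert t L)) : ¬ ∀ l ∈ L, Commute (ρ t) (ρ l) := by
  intro hcom
  have hcom' : ∀ g ∈ closure (ρ '' L), Commute (ρ t) g := by
    apply commute_closure
    rintro _ ⟨l, hl, rfl⟩
    exact hcom l hl
  have h1 : π t = 1 := by
    refine perm_eq_one_of_forall_commute h3 fun q => Equiv.ext fun y => ?_
    obtain ⟨g, hg, hgq⟩ := h.exists_lift_mem q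
    obtain ⟨x, rfl⟩ := h.surj y
    rw [Perm.mul_apply, Perm.mul_apply, ← hgq, ← h.cover, ← h.cover, ← hgq,
      perm_comm_apply (hcom' g hg)]
  obtain ⟨B, hB⟩ := h.flip.exists_flipOn (σ := ρ t) (fun x => by rw [h.cover, h1]; rfl)
  have hinv : ∀ p : Perm Y, B.map p.toEmbedding = B := by
    intro p
    obtain ⟨g, hg, hgp⟩ := h.exists_lift_mem p
    apply h.flip.flipOn_injective h.surj
    rw [← h.flip.conj_flipOn hgp, ← hB, ← (hcom' g hg).eq, mul_inv_cancel_right]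
  by_cases hBu : B = Finset.univ
  · rw [hBu, h.flip.flipOn_univ] at hB
    exact hι (hB ▸ subset_closure ⟨t, Set.mem_insert _ _, rfl⟩)
  · obtain ⟨c', hc'⟩ : ∃ y, y ∉ B := by simpa [Finset.eq_univ_iff_forall] using hBu
    have hB0 : B ≠ ∅ := by
      rintro rfl
      rw [h.flip.flipOn_empty] at hB
      exact h.ne_one t hB
    obtain ⟨c, hc⟩ := Finset.nonempty_iff_ne_empty.2 hB0
    have h2 := symmDiff_map_swap hc hc'
    rw [hinv, symmDiff_self] at h2
    exact absurd h2.symm (Finset.insert_ne_empty _ _)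

theorem eq_of_cover (h : FlipSystem ρ b ι π L)
    (hL : ∀ B, h.flip.flipOn B ∈ closure (ρ '' L) → B = ∅) {g g' : Perm X} {p : Perm Y}
    (hg : g ∈ closure (ρ '' L)) (hg' : g' ∈ closure (ρ '' L)) (hp : ∀ x, b (g x) = p (b x))
    (hp' : ∀ x, b (g' x) = p (b x)) : g = g' := by
  obtain ⟨B, hB⟩ := h.flip.exists_flipOn (σ := g * g'⁻¹) (fun x => by
    rw [cover_mul hp (cover_inv hp'), mul_inv_cancel, Perm.one_apply])
  have hm : g * g'⁻¹ ∈ closure (ρ '' L) := mul_mem hg (inv_mem hg')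
  rw [hL B (hB ▸ hm), h.flip.flipOn_empty] at hB
  exact mul_inv_eq_one.1 hB

theorem nonempty_mulEquiv (h : FlipSystem ρ b ι π L)
    (hL : ∀ B, h.flip.flipOn B ∈ closure (ρ '' L) → B = ∅) :
    Nonempty (closure (ρ '' L) ≃* Perm Y) := by
  choose f hfL hf using h.exists_lift_mem
  have hmul : ∀ p q, f (p * q) = f p * f q := fun p q =>
    h.eq_of_cover hL (hfL _) (mul_mem (hfL _) (hfL _)) (hf _) (cover_mul (hf p) (hf q))
  let F : Perm Y →* closure (ρ '' L) := MonoidHom.mk' (fun p => ⟨f p, hfL p⟩)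
    fun p q => Subtype.ext (hmul p q)
  refine ⟨(MulEquiv.ofBijective F ⟨fun p q hpq => ?_, fun g => ?_⟩).symm⟩
  · have h1 : f p = f q := congrArg Subtype.val hpq
    ext y
    obtain ⟨x, rfl⟩ := h.surj y
    rw [← hf p, ← hf q, h1]
  · obtain ⟨p, -, hp⟩ := exists_cover h.cover g.2
    exact ⟨p, Subtype.ext (h.eq_of_cover hL (hfL p) g.2 (hf p) hp)⟩

theorem mem_closure_range_iff (h : FlipSystem ρ b ι π L)
    (hall : ∀ B, h.flip.flipOn B ∈ closure (Set.range ρ)) (σ : Perm X) :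
    σ ∈ closure (Set.range ρ) ↔ ∀ x y, b x = b y → b (σ x) = b (σ y) := by
  constructor
  · intro hσ x y hxy
    rw [← Set.image_univ] at hσ
    obtain ⟨p, -, hp⟩ := exists_cover h.cover hσ
    rw [hp, hp, hxy]
  · intro hσ
    choose f hf using h.surj
    have hfb : ∀ x, b (σ x) = b (σ (f (b x))) := fun x => hσ _ _ (hf _).symm
    have hsurj : Function.Surjective fun y => b (σ (f y)) := by
      intro y
      obtain ⟨x, rfl⟩ := h.surj y
      exact ⟨b (σ⁻¹ x), (hfb _).symm.trans (by simp)⟩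
    obtain ⟨B, g, hg, rfl⟩ := h.exists_eq_flipOn_mul
      (p := Equiv.ofBijective _ (Finite.injective_iff_bijective.1
        (Finite.injective_iff_surjective.2 hsurj))) hfb
    exact mul_mem (hall B) (closure_mono (Set.image_subset_range _ _) hg)

end FlipSystem

theorem eq_of_cover_of_surjective {X Y : Type*} {b : X → Y} (hb : Function.Surjective b)
    {σ : Perm X} {p q : Perm Y} (hp : ∀ x, b (σ x) = p (b x)) (hq : ∀ x, b (σ x) = q (b x)) :
    p = q := by
  ext y
  obtain ⟨x, rfl⟩ := hb y
  rw [← hp, hq]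

theorem commute_of_cover {X Y : Type*} {b : X → Y} (hb : Function.Surjective b)
    {σ σ' : Perm X} {p p' : Perm Y} (h : ∀ x, b (σ x) = p (b x)) (h' : ∀ x, b (σ' x) = p' (b x))
    (hc : Commute σ σ') : Commute p p' := by
  refine eq_of_cover_of_surjective hb (cover_mul h h') ?_
  rw [hc.eq]
  exact cover_mul h' h

theorem commute_of_sq_mul {G : Type*} [Group G] {x y : G} (hx : x * x = 1) (hy : y * y = 1)
    (h : (x * y) ^ 2 = 1) : Commute x y := by
  rw [pow_two, mul_eq_one_iff_eq_inv, mul_inv_rev, inv_eq_of_mul_eq_one_left hx,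
    inv_eq_of_mul_eq_one_left hy] at h
  exact h

theorem exists_isIndepString {Y : Type*} {r : ℕ} {π : Fin r → Perm Y} {L : Set (Fin r)}
    (hsq : ∀ i, π i * π i = 1) (hcomm : ∀ i j : Fin r, (i : ℕ) + 1 < j → Commute (π i) (π j))
    (hind : ∀ l ∈ L, π l ∉ closure (π '' (L \ {l}))) :
    ∃ τ : ℕ → Perm Y, IsIndepString L.ncard τ ∧ closure (Set.range τ) = closure (π '' L) := by
  classical
  have hcard : L.toFinset.card = L.ncard := (Set.ncard_eq_toFinset_card' L).symm
  set e := L.toFinset.orderEmbOfFin hcard with he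
  have hmem : ∀ a, e a ∈ L := fun a => by
    exact Set.mem_toFinset.1 (L.toFinset.orderEmbOfFin_mem hcard a)
  have hsurj : ∀ l ∈ L, ∃ a, e a = l := fun l hl => by
    have h1 : l ∈ Set.range e := by
      rw [he, Finset.range_orderEmbOfFin]; simpa using hl
    exact h1
  have hτ : ∀ a (ha : a < L.ncard), (if h : a < L.ncard then π (e ⟨a, h⟩) else 1) = π (e ⟨a, ha⟩) :=
    fun a ha => dif_pos ha
  refine ⟨fun a => if h : a < L.ncard then π (e ⟨a, h⟩) else 1, ⟨?_, ?_, ?_, ?_⟩, ?_⟩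
  · intro a
    by_cases ha : a < L.ncard
    · simp only [hτ a ha, hsq]
    · simp [ha]
  · intro a c hac
    by_cases hc : c < L.ncard
    · simp only [hτ a (by omega), hτ c hc]
      apply hcomm
      have h1 : e ⟨a, by omega⟩ < e ⟨a + 1, by omega⟩ := e.strictMono (by simp)
      have h2 : e ⟨a + 1, by omega⟩ < e ⟨c, hc⟩ := e.strictMono (by simpa using hac)
      rw [Fin.lt_def] at h1 h2
      omega
    · simp [hc]
  · intro a ha
    simp only [hτ a ha]
    intro hm
    refine hind _ (hmem _) ((closure_le _).2 ?_ hm)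
    rintro _ ⟨c, hc, rfl⟩
    by_cases hck : c < L.ncard
    · simp only [hτ c hck]
      refine subset_closure ⟨_, ⟨hmem _, fun h => hc ?_⟩, rfl⟩
      have h1 := e.injective h
      simpa using h1
    · simp only [hck, dite_false]
      exact one_mem _
  · intro a ha
    simp [not_lt.2 ha]
  · apply le_antisymm
    · rw [closure_le]
      rintro _ ⟨a, rfl⟩
      by_cases ha : a < L.ncard
      · simp only [hτ a ha]
        exact subset_closure ⟨_, hmem _, rfl⟩
      · simp only [ha, dite_false]
        exact one_mem _
    · apply Subgroup.closure_mono
      rintro _ ⟨l, hl, rfl⟩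
      obtain ⟨a, rfl⟩ := hsurj l hl
      exact ⟨a, hτ a a.2⟩

theorem isPreprimitive_of_maximal_fibers {X Y I : Type*} {ρ : I → Perm X} {b : X → Y}
    {π : I → Perm Y} (hπ : ∀ l x, b (ρ l x) = π l (b x)) (hb : Function.Surjective b)
    (htrans : MulAction.IsPretransitive (closure (Set.range ρ)) X)
    (hmax : ∀ (c : Y) (Z : Set X), MulAction.IsBlock (closure (Set.range ρ)) Z →
      {x | b x = c} ⊆ Z → Z = {x | b x = c} ∨ Z = Set.univ) :
    MulAction.IsPreprimitive (closure (Set.range π)) Y := by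
  have hcover : ∀ g ∈ closure (Set.range ρ), ∃ p ∈ closure (Set.range π),
      ∀ x, b (g x) = p (b x) := by
    intro g hg
    rw [← Set.image_univ] at hg
    obtain ⟨p, hp, h⟩ := exists_cover hπ hg
    rw [Set.image_univ] at hp
    exact ⟨p, hp, h⟩
  have htr : MulAction.IsPretransitive (closure (Set.range π)) Y := by
    refine ⟨fun y y' => ?_⟩
    obtain ⟨x, rfl⟩ := hb y
    obtain ⟨x', rfl⟩ := hb y'
    obtain ⟨g, rfl⟩ := MulAction.exists_smul_eq (closure (Set.range ρ)) x x'
    obtain ⟨p, hp, h⟩ := hcover g g.2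
    exact ⟨⟨p, hp⟩, (h x).symm⟩
  refine { htr with isTrivialBlock_of_isBlock := fun {B} hB => ?_ }
  by_cases hs : B.Subsingleton
  · exact Or.inl hs
  right
  obtain ⟨c, hc, c', hc', hcc'⟩ := Set.not_subsingleton_iff.1 hs
  have hblock : MulAction.IsBlock (closure (Set.range ρ)) (b ⁻¹' B) := by
    rw [MulAction.isBlock_iff_smul_eq_of_mem] at hB ⊢
    rintro ⟨g, hg⟩ a ha hga
    obtain ⟨p, hp, h⟩ := hcover g hg
    change b (g a) ∈ B at hga
    rw [h] at hga
    have h1 := hB (g := ⟨p, hp⟩) (a := b a) ha hga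
    ext x
    rw [Set.mem_smul_set_iff_inv_smul_mem]
    change b (g⁻¹ x) ∈ B ↔ b x ∈ B
    rw [cover_inv h]
    conv_rhs => rw [← h1]
    rw [Set.mem_smul_set_iff_inv_smul_mem]
    rfl
  rcases hmax c _ hblock (fun x hx => by
    change b x ∈ B
    rw [show b x = c from hx]
    exact hc) with h | h
  · obtain ⟨x, rfl⟩ := hb c'
    have h1 : x ∈ b ⁻¹' B := hc'
    rw [h] at h1
    exact absurd (Eq.symm h1) hcc'
  · rw [Set.eq_univ_iff_forall] at h ⊢
    intro y
    obtain ⟨x, rfl⟩ := hb y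
    exact h x

namespace FlipSystem

variable {X Y : Type*} [Fintype Y] [DecidableEq Y] {r : ℕ} {ρ : Fin r → Perm X} {b : X → Y}
  {ι : Perm X} {π : Fin r → Perm Y} {L : Set (Fin r)} {s : Fin r}

theorem one_sided (h : FlipSystem ρ b ι π L) (h3 : 3 ≤ Fintype.card Y)
    (hcomm : ∀ i j : Fin r, (i : ℕ) + 1 < j → Commute (π i) (π j))
    (hind : ∀ l ∈ L, π l ∉ closure (π '' (L \ {l}))) (hs : s ∉ L) :
    (∀ l ∈ L, s < l) ∨ ∀ l ∈ L, l < s := by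
  have hne : ∀ l ∈ L, l ≠ s := fun l hl e => hs (e ▸ hl)
  have hnot : ∀ l ∈ L, π l ≠ 1 := fun l hl e => hind l hl (e ▸ one_mem _)
  have h1 : ∀ J ⊆ L, closure (π '' J) = ⊥ → J = ∅ := by
    intro J hJ hbot
    rw [Set.eq_empty_iff_forall_notMem]
    intro l hl
    have h2 : π l ∈ closure (π '' J) := subset_closure ⟨l, hl, rfl⟩
    rw [hbot, mem_bot] at h2
    exact hnot l (hJ hl) h2
  have hside : ∀ l ∈ L, l < s ∨ s < l := fun l hl => lt_or_gt_of_ne (hne l hl)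
  have htop : closure (π '' {l ∈ L | l < s}) ⊔ closure (π '' {l ∈ L | s < l}) = ⊤ := by
    rw [← Subgroup.closure_union, ← Set.image_union, ← h.top]
    congr 2
    ext l
    constructor
    · rintro (hl | hl)
      · exact hl.1
      · exact hl.1
    · intro hl
      rcases hside l hl with hl' | hl'
      · exact Or.inl ⟨hl, hl'⟩
      · exact Or.inr ⟨hl, hl'⟩
  rcases eq_bot_or_eq_bot_of_commute h3 (fun a ha c hc => by
    refine commute_closure (fun c hc => ?_) c hc
    obtain ⟨j, hj, rfl⟩ := hc
    refine (commute_closure (fun a ha => ?_) a ha).symm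
    obtain ⟨i, hi, rfl⟩ := ha
    have h5 : i < s := hi.2
    have h6 : s < j := hj.2
    rw [Fin.lt_def] at h5 h6
    exact (hcomm i j (by omega)).symm) htop with hbot | hbot
  · left
    intro l hl
    refine (hside l hl).resolve_left fun hls => ?_
    have h2 : l ∈ {l ∈ L | l < s} := ⟨hl, hls⟩
    rw [h1 _ (fun x hx => hx.1) hbot] at h2
    exact h2
  · right
    intro l hl
    refine (hside l hl).resolve_right fun hls => ?_
    have h2 : l ∈ {l ∈ L | s < l} := ⟨hl, hls⟩
    rw [h1 _ (fun x hx => hx.1) hbot] at h2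
    exact h2

theorem commute_of_large_commuting (h : FlipSystem ρ b ι π L)
    (hsq : ∀ i, ρ i * ρ i = 1) (hind : ∀ l ∈ L, π l ∉ closure (π '' (L \ {l})))
    (hL : ∀ B, h.flip.flipOn B ∈ closure (ρ '' L) → B = ∅) {g : Perm X}
    (hg : g ∈ closure (ρ '' L)) (hsg : ρ s = ι * g) (hs : s ∉ L) {l : Fin r} (hl : l ∈ L)
    {U : Finset (Fin r)} (hUL : ∀ u ∈ U, u ∈ L) (hlU : l ∉ U)
    (hUU : ∀ u ∈ U, ∀ v ∈ U, Commute (ρ u) (ρ v)) (hsU : ∀ u ∈ U, Commute (ρ s) (ρ u))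
    (hlc : ∀ u ∈ U, Commute (ρ l) (ρ u)) (hcard : Fintype.card Y ≤ 2 * U.card + 3) :
    Commute (ρ s) (ρ l) := by
  have hιg : Commute ι g := h.commute_flip_of_mem hg
  have hιl : Commute ι (ρ l) := h.commute_flip l
  have hgι : g = ι * ρ s := by rw [hsg, ← mul_assoc, h.flip.sq, one_mul]
  have hg2 : g * g = 1 := by
    have h1 := hsq s
    rwa [hsg, hιg.symm.mul_mul_mul_comm, h.flip.sq, one_mul] at h1
  suffices hgl : Commute g (ρ l) by
    rw [hsg]; exact hιl.mul_left hgl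
  by_contra hgl
  have hlL : ρ l ∈ closure (ρ '' L) := subset_closure ⟨l, hl, rfl⟩
  have hUle : closure (ρ '' (U : Set (Fin r))) ≤ closure (ρ '' L) :=
    closure_mono (Set.image_mono hUL)
  have hgl2 : (ρ s * ρ l) ^ 2 = (g * ρ l) ^ 2 := by
    rw [hsg, mul_assoc, (hιg.mul_right hιl).mul_pow, pow_two ι, h.flip.sq, one_mul]
  have hgl3 : (ρ s * ρ l) ^ 3 = ι * (g * ρ l) ^ 3 := by
    rw [hsg, mul_assoc, (hιg.mul_right hιl).mul_pow, pow_succ ι, pow_two, h.flip.sq, one_mul]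
  have hgc : ∀ u ∈ U, Commute g (ρ u) := fun u hu => by
    rw [hgι]; exact (h.commute_flip u).mul_left (hsU u hu)
  obtain ⟨p, -, hp⟩ := exists_cover h.cover hg
  have hpow : ∀ N, ∀ x, b (((g * ρ l) ^ N) x) = ((p * π l) ^ N) (b x) := by
    intro N
    induction N with
    | zero => intro x; rfl
    | succ N ih => rw [pow_succ, pow_succ]; exact cover_mul ih (cover_mul hp (h.cover l))
  have hlift : ∀ N, (p * π l) ^ N ∈ closure (π '' (U : Set (Fin r))) →
      (g * ρ l) ^ N ∈ closure (ρ '' (U : Set (Fin r))) := by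
    intro N hN
    obtain ⟨u, hu, hup⟩ := exists_lift h.cover hN
    rwa [h.eq_of_cover hL (pow_mem (mul_mem hg hlL) N) (hUle hu) (hpow N) hup]
  have hππ : ∀ i, π i * π i = 1 := fun i =>
    eq_of_cover_of_surjective h.surj (σ := 1)
      (by rw [← hsq i]; exact cover_mul (h.cover i) (h.cover i)) (fun x => rfl)
  have hppl : ¬ Commute p (π l) := fun hc => hgl (h.eq_of_cover hL (mul_mem hg hlL)
    (mul_mem hlL hg) (cover_mul hp (h.cover l))
    (by rw [hc.eq]; exact cover_mul (h.cover l) hp))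
  rcases sq_or_cube_mem (D := closure (π '' (U : Set (Fin r)))) (x := p) (y := π l)
    (sqOne_closure (by rintro _ ⟨u, -, rfl⟩; exact hππ u) (by
      rintro _ ⟨u, hu, rfl⟩ _ ⟨v, hv, rfl⟩
      exact commute_of_cover h.surj (h.cover u) (h.cover v) (hUU u hu v hv)))
    (eq_of_cover_of_surjective h.surj (σ := 1)
      (by rw [← hg2]; exact cover_mul hp hp) (fun x => rfl)) (hππ l)
    (commute_closure (by
      rintro _ ⟨u, hu, rfl⟩
      exact commute_of_cover h.surj hp (h.cover u) (hgc u hu)))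
    (commute_closure (by
      rintro _ ⟨u, hu, rfl⟩
      exact commute_of_cover h.surj (h.cover l) (h.cover u) (hlc u hu)))
    (by
      calc 2 ^ Fintype.card Y ≤ 2 ^ (2 * U.card + 3) := Nat.pow_le_pow_right (by norm_num) hcard
        _ = 8 * (2 ^ U.card) ^ 2 := by ring
        _ ≤ _ := by gcongr; exact two_pow_le_card_closure hind U hUL) hppl with hm | hm
  · have h1 := hlift 2 hm
    have h2 : (g * ρ l) ^ 2 ∈ closure (ρ '' {s, l}) := by
      rw [← hgl2]
      exact pow_mem (mul_mem (Subgroup.subset_closure (Set.mem_image_of_mem ρ (by simp)))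
        (Subgroup.subset_closure (Set.mem_image_of_mem ρ (by simp)))) 2
    have h3 : (g * ρ l) ^ 2 ∈ closure (ρ '' {s, l}) ⊓ closure (ρ '' (U : Set (Fin r))) := ⟨h2, h1⟩
    have h4 : ({s, l} : Set (Fin r)) ∩ (U : Set (Fin r)) = ∅ := by
      rw [Set.eq_empty_iff_forall_notMem]
      rintro x ⟨rfl | rfl, hx⟩
      · exact hs (hUL _ hx)
      · exact hlU hx
    rw [h.inter, h4, Set.image_empty, Subgroup.closure_empty, mem_bot] at h3
    exact hgl (commute_of_sq_mul hg2 (hsq l) h3)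
  · have h1 := hlift 3 hm
    set W : Set (Fin r) := insert s (insert l (U : Set (Fin r))) with hW
    have hsW : ρ s ∈ closure (ρ '' W) := subset_closure ⟨s, by simp [hW], rfl⟩
    have hlW : ρ l ∈ closure (ρ '' W) := subset_closure ⟨l, by simp [hW], rfl⟩
    have hUW : (g * ρ l) ^ 3 ∈ closure (ρ '' W) :=
      closure_mono (Set.image_mono (by
        intro x hx; exact Set.mem_insert_of_mem _ (Set.mem_insert_of_mem _ hx))) h1
    have hιW : ι ∈ closure (ρ '' W) := by
      rw [eq_mul_inv_of_mul_eq hgl3.symm]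
      exact mul_mem (pow_mem (mul_mem hsW hlW) 3) (inv_mem hUW)
    have hgW : g ∈ closure (ρ '' W) ⊓ closure (ρ '' L) := by
      refine ⟨?_, hg⟩
      rw [hgι]
      exact mul_mem hιW hsW
    rw [h.inter] at hgW
    refine hgl (commute_closure ?_ g hgW).symm
    rintro _ ⟨x, ⟨hx, hxL⟩, rfl⟩
    rcases hx with rfl | rfl | hx
    · exact absurd hxL hs
    · exact Commute.refl _
    · exact hlc x hx

theorem forall_commute (h : FlipSystem ρ b ι π L) (h3 : 3 ≤ Fintype.card Y)
    (hodd : Odd (Fintype.card Y)) (hsq : ∀ i, ρ i * ρ i = 1)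
    (hcomm : ∀ i j : Fin r, (i : ℕ) + 1 < j → Commute (ρ i) (ρ j))
    (hind : ∀ l ∈ L, π l ∉ closure (π '' (L \ {l}))) (hLcard : Fintype.card Y ≤ L.ncard + 2)
    (hL : ∀ B, h.flip.flipOn B ∈ closure (ρ '' L) → B = ∅)
    (hsg : ∃ g ∈ closure (ρ '' L), ρ s = ι * g) (hs : s ∉ L) :
    ∀ l ∈ L, Commute (ρ s) (ρ l) := by
  classical
  obtain ⟨d, hd1, hinj, hdc, hds⟩ : ∃ d : Fin r → ℕ, (∀ x ∈ L, 1 ≤ d x) ∧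
      (∀ x ∈ L, ∀ y ∈ L, d x = d y → x = y) ∧
      (∀ x ∈ L, ∀ y ∈ L, d x + 1 < d y → Commute (ρ x) (ρ y)) ∧
      ∀ x ∈ L, 1 < d x → Commute (ρ s) (ρ x) := by
    rcases h.one_sided h3 (fun i j hij => commute_of_cover h.surj (h.cover i) (h.cover j)
      (hcomm i j hij)) hind hs with hside | hside
    · refine ⟨fun x => (x : ℕ) - s, fun x hx => ?_, fun x hx y hy hxy => ?_, fun x hx y hy hxy => ?_,
        fun x hx hdx => ?_⟩
      · have := Fin.lt_def.1 (hside x hx)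
        dsimp only
        omega
      · have h1 := Fin.lt_def.1 (hside x hx)
        have h2 := Fin.lt_def.1 (hside y hy)
        exact Fin.ext (by dsimp only at hxy; omega)
      · exact hcomm x y (by dsimp only at hxy; omega)
      · exact hcomm s x (by dsimp only at hdx; omega)
    · refine ⟨fun x => (s : ℕ) - x, fun x hx => ?_, fun x hx y hy hxy => ?_, fun x hx y hy hxy => ?_,
        fun x hx hdx => ?_⟩
      · have := Fin.lt_def.1 (hside x hx)
        dsimp only
        omega
      · have h1 := Fin.lt_def.1 (hside x hx)
        have h2 := Fin.lt_def.1 (hside y hy)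
        exact Fin.ext (by dsimp only at hxy; omega)
      · exact (hcomm y x (by dsimp only at hxy; omega)).symm
      · exact (hcomm x s (by dsimp only at hdx; omega)).symm
  intro l hl
  by_cases hdl : 1 < d l
  · exact hds l hl hdl
  have hdl1 : d l = 1 := by have := hd1 l hl; omega
  obtain ⟨g, hg, hsg⟩ := hsg
  set U : ℕ → Finset (Fin r) := fun e => L.toFinset.filter fun x => 3 ≤ d x ∧ d x % 2 = e with hU
  have hmemU : ∀ e x, x ∈ U e ↔ x ∈ L ∧ 3 ≤ d x ∧ d x % 2 = e := by intro e x; simp [hU]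
  have hone : ∀ c, (L.toFinset.filter fun x => d x = c).card ≤ 1 := by
    intro c
    rw [Finset.card_le_one]
    intro x hx y hy
    rw [Finset.mem_filter, Set.mem_toFinset] at hx hy
    exact hinj x hx.1 y hy.1 (by omega)
  have hcover : L.toFinset ⊆ (L.toFinset.filter fun x => d x = 1) ∪
      (L.toFinset.filter fun x => d x = 2) ∪ (U 0 ∪ U 1) := by
    intro x hx
    rw [Set.mem_toFinset] at hx
    have := hd1 x hx
    simp only [Finset.mem_union, hmemU, Finset.mem_filter, Set.mem_toFinset, hx, true_and]
    omega
  obtain ⟨e, he⟩ : ∃ e, Fintype.card Y ≤ 2 * (U e).card + 3 := by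
    by_contra hcon
    push Not at hcon
    have h0 := hcon 0
    have h1 := hcon 1
    have h2 := Finset.card_le_card hcover
    have h4 := (h2.trans (Finset.card_union_le _ _)).trans
      (Nat.add_le_add (Finset.card_union_le _ _) (Finset.card_union_le _ _))
    have h5 := hone 1
    have h6 := hone 2
    rw [← Set.ncard_eq_toFinset_card' L] at h4
    rw [Nat.odd_iff] at hodd
    omega
  refine h.commute_of_large_commuting hsq hind hL hg hsg hs hl (U := U e)
    (fun u hu => ((hmemU e u).1 hu).1) (fun hm => ?_) (fun u hu v hv => ?_)
    (fun u hu => ?_) (fun u hu => ?_) he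
  · have := (hmemU e l).1 hm; omega
  · obtain ⟨hu, hu1, hu2⟩ := (hmemU e u).1 hu
    obtain ⟨hv, hv1, hv2⟩ := (hmemU e v).1 hv
    rcases lt_trichotomy (d u) (d v) with huv | huv | huv
    · exact hdc u hu v hv (by omega)
    · rw [hinj u hu v hv huv]
    · exact (hdc v hv u hu (by omega)).symm
  · obtain ⟨hu, hu1, hu2⟩ := (hmemU e u).1 hu
    exact hds u hu (by omega)
  · obtain ⟨hu, hu1, hu2⟩ := (hmemU e u).1 hu
    exact hdc l hl u hu (by omega)

end FlipSystem

end

theorem stmt14 {n r m : ℕ} (hm7 : 7 ≤ m) (hn : n = 2 * m) (hr : n / 2 ≤ r)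
    (ρ : Fin r → Equiv.Perm (Fin n)) (hstring : IsStringC ρ)
    (htrans : MulAction.IsPretransitive ↥(Subgroup.closure (Set.range ρ)) (Fin n))
    (b : Fin n → Fin m) (hbsurj : Function.Surjective b)
    (hfib : ∀ c : Fin m, Set.ncard {x | b x = c} = 2)
    (hcompat : ∀ g ∈ Subgroup.closure (Set.range ρ), ∀ x y : Fin n,
      b x = b y → b (g x) = b (g y))
    -- every fiber of b is a maximal block
    (hmax : ∀ (c : Fin m) (X : Set (Fin n)),
      MulAction.IsBlock ↥(Subgroup.closure (Set.range ρ)) X →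
      {x | b x = c} ⊆ X → X = {x | b x = c} ∨ X = Set.univ)
    -- π l is the induced block permutation φ (ρ l)
    (π : Fin r → Equiv.Perm (Fin m))
    (hπ : ∀ (l : Fin r) (x : Fin n), b (ρ l x) = π l (b x))
    -- L generates the image of φ independently
    (L : Set (Fin r))
    (hLgen : Subgroup.closure (π '' L) = Subgroup.closure (Set.range π))
    (hLind : ∀ l ∈ L, π l ∉ Subgroup.closure (π '' (L \ {l})))
    -- |R ∪ C| = 2
    (hRC : ({i : Fin r | i ∉ L ∧ ¬ ∀ l ∈ L, Commute (ρ i) (ρ l)} ∪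
            {i : Fin r | i ∉ L ∧ ∀ l ∈ L, Commute (ρ i) (ρ l)}).ncard = 2) :
    Nonempty (↥(Subgroup.closure (ρ '' L)) ≃* Equiv.Perm (Fin m)) ∧
    {i : Fin r | i ∉ L ∧ ¬ ∀ l ∈ L, Commute (ρ i) (ρ l)}.ncard = 1 ∧
    {i : Fin r | i ∉ L ∧ ∀ l ∈ L, Commute (ρ i) (ρ l)}.ncard = 1 ∧
    Odd m ∧
    (↑(Subgroup.closure (Set.range ρ)) : Set (Equiv.Perm (Fin n))) =
      {σ : Equiv.Perm (Fin n) | ∀ x y : Fin n, b x = b y → b (σ x) = b (σ y)} := by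
  obtain ⟨⟨hord, hstr⟩, hinter⟩ := hstring
  have hsq : ∀ i, ρ i * ρ i = 1 := fun i => by
    rw [← pow_two, ← hord i, pow_orderOf_eq_one]
  have hcomm : ∀ i j : Fin r, (i : ℕ) + 1 < j → Commute (ρ i) (ρ j) := fun i j hij =>
    commute_of_sq_mul (hsq i) (hsq j) (hstr i j (by
      rw [abs_sub_comm, lt_abs]
      left
      omega))
  have hππ : ∀ i, π i * π i = 1 := fun i =>
    eq_of_cover_of_surjective hbsurj (σ := 1)
      (by rw [← hsq i]; exact cover_mul (hπ i) (hπ i)) (fun x => rfl)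
  have hcompl : ({i : Fin r | i ∉ L ∧ ¬ ∀ l ∈ L, Commute (ρ i) (ρ l)} ∪
      {i : Fin r | i ∉ L ∧ ∀ l ∈ L, Commute (ρ i) (ρ l)}) = Lᶜ := by
    ext i
    constructor
    · rintro (hi | hi) <;> exact hi.1
    · intro hi
      by_cases hc : ∀ l ∈ L, Commute (ρ i) (ρ l)
      · exact Or.inr ⟨hi, hc⟩
      · exact Or.inl ⟨hi, hc⟩
  rw [hcompl] at hRC
  have hLcard : Fintype.card (Fin m) ≤ L.ncard + 2 := by
    have h1 := Set.ncard_add_ncard_compl L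
    rw [hRC, Nat.card_fin] at h1
    rw [Fintype.card_fin]
    omega
  have h7 : 7 ≤ Fintype.card (Fin m) := by rwa [Fintype.card_fin]
  have htop : Subgroup.closure (π '' L) = ⊤ := by
    obtain ⟨τ, hτ, hcl⟩ := exists_isIndepString hππ (fun i j hij =>
      commute_of_cover hbsurj (hπ i) (hπ j) (hcomm i j hij)) hLind
    rw [← hcl]
    refine hτ.closure_range_eq_top h7 hLcard ?_
    rw [hcl, hLgen]
    exact isPreprimitive_of_maximal_fibers hπ hbsurj htrans hmax
  obtain ⟨ι, hι⟩ := exists_isFlip hfib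
  have h : FlipSystem ρ b ι π L := ⟨hι, hbsurj, hπ, fun i e => by
    have := hord i
    rw [e, orderOf_one] at this
    omega, hinter, htop⟩
  obtain ⟨i, j, hij, hLc⟩ := Set.ncard_eq_two.1 hRC
  have hmem : ∀ x, x ∉ L ↔ x = i ∨ x = j := by
    intro x
    have h1 : x ∈ Lᶜ ↔ x ∈ ({i, j} : Set (Fin r)) := by rw [hLc]
    simpa using h1
  obtain ⟨s, t, hst, hs, hιL, A, hAu, hA0, hA, hAL⟩ :=
    h.exists_flip_label hij ((hmem i).2 (Or.inl rfl)) ((hmem j).2 (Or.inr rfl))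
  have hmem' : ∀ x, x ∉ L ↔ x = s ∨ x = t := by
    intro x
    rw [hmem]
    rcases hst with ⟨rfl, rfl⟩ | ⟨rfl, rfl⟩
    · rfl
    · exact or_comm
  have hne : s ≠ t := by
    rcases hst with ⟨rfl, rfl⟩ | ⟨rfl, rfl⟩
    · exact hij
    · exact hij.symm
  have hsL : s ∉ L := (hmem' s).2 (Or.inl rfl)
  have htL : t ∉ L := (hmem' t).2 (Or.inr rfl)
  obtain ⟨hodd, hL, hall⟩ := h.structure_of_flip hne htL hs hιL hAu hA0 hA hAL
  have hsc := h.forall_commute (by omega) hodd hsq hcomm hLind hLcard hL hs hsL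
  have htc := h.not_forall_commute (by omega) (h.flip_notMem hne htL hs hιL)
  refine ⟨h.nonempty_mulEquiv hL, Set.ncard_eq_one.2 ⟨t, ?_⟩, Set.ncard_eq_one.2 ⟨s, ?_⟩, ?_, ?_⟩
  · ext x
    constructor
    · rintro ⟨hx, hxc⟩
      rcases (hmem' x).1 hx with rfl | rfl
      · exact absurd hsc hxc
      · rfl
    · rintro rfl
      exact ⟨htL, htc⟩
  · ext x
    constructor
    · rintro ⟨hx, hxc⟩
      rcases (hmem' x).1 hx with rfl | rfl
      · rfl
      · exact absurd hxc htc
    · rintro rfl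
      exact ⟨hsL, hsc⟩
  · rwa [Fintype.card_fin] at hodd
  · ext σ
    exact h.mem_closure_range_iff hall σ
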